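/- Assume the stated hypotheses on Ω and u, and let a ∈ ∂Ω be a GBU point. Then the normal derivative blows up in the strong sense: for every K > 0 there exists η > 0 such that u_ν(x,t) = ∇u(x,t)·ν(x) ≥ K for every x ∈ Ω_{δ₀} with |x − a| < η and every t ∈ (T − η, T). -/

import Mathlib

open Set Metric Filter RealInnerProductSpace

noncomputable section

set_option linter.unusedVariables false

/-- A set `Ω ⊆ ℝⁿ` has boundary of class `C²`: near each boundary point, `Ω` is the strict
sublevel set of a `C²` function with nonvanishing gradient (equivalently, after a rigid motion,
the boundary is locally the graph of a `C²` function with `Ω` strictly on one side). -/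
def IsC2Boundary {n : ℕ} (Ω : Set (EuclideanSpace ℝ (Fin n))) : Prop :=
  ∀ x ∈ frontier Ω, ∃ f : EuclideanSpace ℝ (Fin n) → ℝ, ∃ U ∈ nhds x,
    ContDiffOn ℝ 2 f U ∧ (∀ y ∈ U, fderiv ℝ f y ≠ 0) ∧
    U ∩ Ω = U ∩ {y | f y < 0} ∧ U ∩ frontier Ω = U ∩ {y | f y = 0}

/-- One-dimensional second derivative test at a local maximum. -/
lemma sdt {φ φ' : ℝ → ℝ} {c : ℝ} (h1 : ∀ᶠ τ in nhds (0:ℝ), HasDerivAt φ (φ' τ) τ)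
    (h2 : HasDerivAt φ' c 0) (hm : IsLocalMax φ 0) : φ' 0 = 0 ∧ c ≤ 0 := by
  have h0 : φ' 0 = 0 := hm.hasDerivAt_eq_zero h1.self_of_nhds
  refine ⟨h0, ?_⟩
  by_contra hc
  push Not at hc
  have hd : deriv φ =ᶠ[nhds 0] φ' := h1.mono fun τ h => h.deriv
  have hdd : deriv (deriv φ) 0 = c := by rw [hd.deriv_eq]; exact h2.deriv
  have hmin : IsLocalMin φ 0 := isLocalMin_of_deriv_deriv_pos (by rw [hdd]; exact hc)
    (by rw [hd.self_of_nhds, h0]) h1.self_of_nhds.continuousAt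
  have hconst : φ =ᶠ[nhds 0] fun _ => φ 0 := by
    filter_upwards [hm, hmin] with z a b using le_antisymm a b
  have : deriv φ =ᶠ[nhds 0] fun _ => (0:ℝ) := by
    have := hconst.deriv
    simpa using this
  have h3 := this.deriv_eq
  rw [hdd] at h3
  simp at h3
  linarith

section
variable {n : ℕ}

lemma line1 {w : EuclideanSpace ℝ (Fin n) → ℝ} {g : EuclideanSpace ℝ (Fin n) → EuclideanSpace ℝ (Fin n)}
    {x : EuclideanSpace ℝ (Fin n)} (hg : ∀ᶠ z in nhds x, HasGradientAt w (g z) z)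
    (v : EuclideanSpace ℝ (Fin n)) :
    ∀ᶠ τ in nhds (0:ℝ), HasDerivAt (fun τ : ℝ => w (x + τ • v)) ⟪g (x + τ • v), v⟫ τ := by
  have hc : Tendsto (fun τ : ℝ => x + τ • v) (nhds 0) (nhds x) := by
    have : Continuous (fun τ : ℝ => x + τ • v) := by fun_prop
    simpa using this.tendsto 0
  filter_upwards [hc.eventually hg] with τ hτ
  have h1 := hτ.hasFDerivAt
  have h2 : HasDerivAt (fun τ : ℝ => x + τ • v) v τ := by
    simpa using ((hasDerivAt_id τ).smul_const v).const_add x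
  have := h1.comp_hasDerivAt τ h2
  simpa [Function.comp_def] using this

lemma line2 {g : EuclideanSpace ℝ (Fin n) → EuclideanSpace ℝ (Fin n)}
    {x : EuclideanSpace ℝ (Fin n)} {H : EuclideanSpace ℝ (Fin n) →L[ℝ] EuclideanSpace ℝ (Fin n)}
    (hg : HasFDerivAt g H x)
    (v : EuclideanSpace ℝ (Fin n)) :
    HasDerivAt (fun τ : ℝ => ⟪g (x + τ • v), v⟫) ⟪H v, v⟫ 0 := by
  have h2 : HasDerivAt (fun τ : ℝ => x + τ • v) v 0 := by
    simpa using ((hasDerivAt_id (0:ℝ)).smul_const v).const_add x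
  have h1 : HasFDerivAt g H (x + (0:ℝ) • v) := by simpa using hg
  have := (h1.comp_hasDerivAt (0:ℝ) h2).inner ℝ (hasDerivAt_const (0:ℝ) v)
  simpa [Function.comp_def] using this

/-- trace in the standard basis -/
def tr (A : EuclideanSpace ℝ (Fin n) →L[ℝ] EuclideanSpace ℝ (Fin n)) : ℝ :=
  ∑ i : Fin n, ⟪A (EuclideanSpace.single i (1 : ℝ)), EuclideanSpace.single i (1 : ℝ)⟫

lemma sum_sq_inner (e : EuclideanSpace ℝ (Fin n)) :
    ∑ i : Fin n, ⟪e, EuclideanSpace.single i (1:ℝ)⟫ ^ 2 = ‖e‖ ^ 2 := by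
  rw [EuclideanSpace.norm_sq_eq]
  refine Finset.sum_congr rfl fun i _ => ?_
  simp [EuclideanSpace.inner_single_right]

/-- Local-maximum test against `α(⟪e,x⟫) + A‖x‖²`. -/
lemma critical {w : EuclideanSpace ℝ (Fin n) → ℝ} {g : EuclideanSpace ℝ (Fin n) → EuclideanSpace ℝ (Fin n)}
    {x e : EuclideanSpace ℝ (Fin n)} {H : EuclideanSpace ℝ (Fin n) →L[ℝ] EuclideanSpace ℝ (Fin n)}
    (he : ‖e‖ = 1)
    (hg : ∀ᶠ z in nhds x, HasGradientAt w (g z) z) (hH : HasFDerivAt g H x)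
    {α α' α'' : ℝ → ℝ} (hα : ∀ s, HasDerivAt α (α' s) s) (hα' : ∀ s, HasDerivAt α' (α'' s) s) (A : ℝ)
    (hm : IsLocalMax (fun z => w z - α ⟪e, z⟫ - A * ‖z‖ ^ 2) x) :
    g x = α' ⟪e, x⟫ • e + (2 * A) • x ∧ tr H ≤ α'' ⟪e, x⟫ + 2 * n * A := by
  have key : ∀ v : EuclideanSpace ℝ (Fin n),
      ⟪g x, v⟫ - α' ⟪e, x⟫ * ⟪e, v⟫ - A * (2 * ⟪x, v⟫) = 0 ∧
      ⟪H v, v⟫ - α'' ⟪e, x⟫ * ⟪e, v⟫ * ⟪e, v⟫ - A * (2 * ‖v‖ ^ 2) ≤ 0 := by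
    intro v
    have hlin : ∀ τ : ℝ, HasDerivAt (fun τ : ℝ => ⟪e, x + τ • v⟫) ⟪e, v⟫ τ := by
      intro τ
      have : (fun τ : ℝ => ⟪e, x + τ • v⟫) = fun τ => ⟪e, x⟫ + τ * ⟪e, v⟫ := by
        ext τ; rw [inner_add_right, inner_smul_right]
      rw [this]
      simpa using ((hasDerivAt_id τ).mul_const ⟪e, v⟫).const_add ⟪e, x⟫
    have hns : ∀ τ : ℝ, HasDerivAt (fun τ : ℝ => ‖x + τ • v‖ ^ 2) (2 * ⟪x, v⟫ + 2 * τ * ‖v‖ ^ 2) τ := by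
      intro τ
      have : (fun τ : ℝ => ‖x + τ • v‖ ^ 2) = fun τ => ‖x‖ ^ 2 + τ * (2 * ⟪x, v⟫) + τ ^ 2 * ‖v‖ ^ 2 := by
        ext τ
        rw [norm_add_sq_real, inner_smul_right, norm_smul, mul_pow, Real.norm_eq_abs, sq_abs]; ring
      rw [this]
      have h1 := ((hasDerivAt_id τ).mul_const (2 * ⟪x, v⟫)).const_add (‖x‖ ^ 2)
      have h2 := ((hasDerivAt_pow 2 τ).mul_const (‖v‖ ^ 2))
      refine (h1.add h2).congr_deriv ?_
      simp
    have := sdt (φ := fun τ : ℝ => w (x + τ • v) - α ⟪e, x + τ • v⟫ - A * ‖x + τ • v‖ ^ 2)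
      (φ' := fun τ : ℝ => ⟪g (x + τ • v), v⟫ - α' ⟪e, x + τ • v⟫ * ⟪e, v⟫ - A * (2 * ⟪x, v⟫ + 2 * τ * ‖v‖ ^ 2))
      (c := ⟪H v, v⟫ - α'' ⟪e, x⟫ * ⟪e, v⟫ * ⟪e, v⟫ - A * (2 * ‖v‖ ^ 2)) ?_ ?_ ?_
    · simpa using this
    · filter_upwards [line1 hg v] with τ hτ
      exact (hτ.sub ((hα _).comp τ (hlin τ))).sub ((hns τ).const_mul A)
    · have h1 := line2 hH v
      have h2 : HasDerivAt (fun τ : ℝ => α' ⟪e, x + τ • v⟫ * ⟪e, v⟫) (α'' ⟪e, x⟫ * ⟪e, v⟫ * ⟪e, v⟫) 0 := by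
        have := ((hα' ⟪e, x + (0:ℝ) • v⟫).comp (0:ℝ) (hlin 0)).mul_const ⟪e, v⟫
        simpa [Function.comp_def] using this
      have h3 : HasDerivAt (fun τ : ℝ => A * (2 * ⟪x, v⟫ + 2 * τ * ‖v‖ ^ 2)) (A * (2 * ‖v‖ ^ 2)) 0 := by
        have := ((((hasDerivAt_id (0:ℝ)).const_mul 2).mul_const (‖v‖ ^ 2)).const_add (2 * ⟪x, v⟫)).const_mul A
        simpa using this
      exact (h1.sub h2).sub h3
    · have hc : Tendsto (fun τ : ℝ => x + τ • v) (nhds 0) (nhds x) := by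
        have : Continuous (fun τ : ℝ => x + τ • v) := by fun_prop
        simpa using this.tendsto 0
      have := hc.eventually hm
      simpa [IsLocalMax, IsMaxFilter] using this
  constructor
  · refine ext_inner_right ℝ fun v => ?_
    have := (key v).1
    rw [inner_add_left, inner_smul_left, inner_smul_left]
    simp only [conj_trivial]
    linarith
  · have h := Finset.sum_le_sum fun (i : Fin n) (_ : i ∈ Finset.univ) =>
      (key (EuclideanSpace.single i (1:ℝ))).2
    simp only [Finset.sum_sub_distrib, Finset.sum_const_zero] at h
    have h1 : ∑ i : Fin n, α'' ⟪e, x⟫ * ⟪e, EuclideanSpace.single i (1:ℝ)⟫ * ⟪e, EuclideanSpace.single i (1:ℝ)⟫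
        = α'' ⟪e, x⟫ := by
      have := sum_sq_inner e
      rw [he] at this
      calc _ = α'' ⟪e, x⟫ * ∑ i : Fin n, ⟪e, EuclideanSpace.single i (1:ℝ)⟫ ^ 2 := by
            rw [Finset.mul_sum]; refine Finset.sum_congr rfl fun i _ => by ring
        _ = _ := by rw [this]; ring
    have h2 : ∑ i : Fin n, A * (2 * ‖(EuclideanSpace.single i (1:ℝ) : EuclideanSpace ℝ (Fin n))‖ ^ 2) = 2 * n * A := by
      simp; ring
    rw [h1, h2] at h
    unfold tr
    linarith

/-- Maximum principle against `α(⟪e,x⟫) + A‖x‖²`. -/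
lemma mp {w : EuclideanSpace ℝ (Fin n) → ℝ} {g : EuclideanSpace ℝ (Fin n) → EuclideanSpace ℝ (Fin n)}
    {e : EuclideanSpace ℝ (Fin n)} {H : EuclideanSpace ℝ (Fin n) → EuclideanSpace ℝ (Fin n) →L[ℝ] EuclideanSpace ℝ (Fin n)}
    (he : ‖e‖ = 1) {K : Set (EuclideanSpace ℝ (Fin n))} (hK : IsCompact K) (hw : ContinuousOn w K)
    {α α' α'' : ℝ → ℝ} (hα : ∀ s, HasDerivAt α (α' s) s) (hα' : ∀ s, HasDerivAt α' (α'' s) s) (A m : ℝ)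
    (h : ∀ x ∈ K, w x ≤ m + α ⟪e, x⟫ + A * ‖x‖ ^ 2 ∨
      (K ∈ nhds x ∧ (∀ᶠ z in nhds x, HasGradientAt w (g z) z) ∧ HasFDerivAt g (H x) x ∧
        (g x = α' ⟪e, x⟫ • e + (2 * A) • x → α'' ⟪e, x⟫ + 2 * n * A < tr (H x)))) :
    ∀ x ∈ K, w x ≤ m + α ⟪e, x⟫ + A * ‖x‖ ^ 2 := by
  intro x hx
  have hαc : Continuous α := continuous_iff_continuousAt.2 fun s => (hα s).continuousAt
  have hc : ContinuousOn (fun z => w z - α ⟪e, z⟫ - A * ‖z‖ ^ 2) K := by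
    refine (hw.sub ?_).sub ?_
    · exact (hαc.comp (by fun_prop)).continuousOn
    · fun_prop
  obtain ⟨y, hy, hmax⟩ := hK.exists_isMaxOn ⟨x, hx⟩ hc
  have hxy := hmax hx
  simp only [mem_ofPred_eq] at hxy
  rcases h y hy with h1 | ⟨hn, hg, hH, hcr⟩
  · linarith
  · have := critical he hg hH hα hα' A (hmax.isLocalMax hn)
    linarith [hcr this.1, this.2]

end

section
variable {n : ℕ}

/-- Comparison in a slab with bounded drift. -/
lemma slab (B A0 s1 s2 ε X : ℝ) (hB : 0 ≤ B) (hA0 : 0 ≤ A0) (hε : 0 < ε) (hX : 0 ≤ X) :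
    ∃ L0 > 0, ∃ μ0 > 0, ∀ (e : EuclideanSpace ℝ (Fin n)), ‖e‖ = 1 →
    ∀ L ≥ L0, ∀ (f : EuclideanSpace ℝ (Fin n) → ℝ) (g : EuclideanSpace ℝ (Fin n) → EuclideanSpace ℝ (Fin n))
      (H : EuclideanSpace ℝ (Fin n) → EuclideanSpace ℝ (Fin n) →L[ℝ] EuclideanSpace ℝ (Fin n)) (m : ℝ), 0 ≤ m →
    (∀ x, s1 ≤ ⟪e, x⟫ → ⟪e, x⟫ ≤ s2 → ‖x‖ ≤ L → HasGradientAt f (g x) x ∧ HasFDerivAt g (H x) x ∧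
      -(B * ‖g x‖) - μ0 ≤ tr (H x) ∧ f x ≤ A0) →
    (∀ x, (⟪e, x⟫ = s1 ∨ ⟪e, x⟫ = s2) → ‖x‖ ≤ L → f x ≤ m) →
    ∀ x, s1 ≤ ⟪e, x⟫ → ⟪e, x⟫ ≤ s2 → ‖x‖ ≤ X → f x ≤ m + ε := by
  set κ := ε / 2 * Real.exp (-((B + 1) * s2)) with hκ
  have hκ0 : 0 < κ := by positivity
  set c := κ * (B + 1) * Real.exp ((B + 1) * s1) with hc
  have hc0 : 0 < c := by positivity
  refine ⟨1 + X + 2 * A0 * X ^ 2 / ε + 4 * A0 * (n + B) / c, by positivity, c / 4, by positivity, ?_⟩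
  intro e he L hL f g H m hm hf hbd x hx1 hx2 hxX
  have hL1 : 1 ≤ L := by
    have : 0 ≤ X + 2 * A0 * X ^ 2 / ε + 4 * A0 * (n + B) / c := by positivity
    linarith
  have hLX : X ≤ L := by
    have : 0 ≤ 1 + 2 * A0 * X ^ 2 / ε + 4 * A0 * (n + B) / c := by positivity
    linarith
  have hL3 : 2 * A0 * X ^ 2 / ε ≤ L := by
    have : 0 ≤ 1 + X + 4 * A0 * (n + B) / c := by positivity
    linarith
  have hL4 : 4 * A0 * (n + B) / c ≤ L := by
    have : 0 ≤ 1 + X + 2 * A0 * X ^ 2 / ε := by positivity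
    linarith
  have hL0 : 0 < L := by linarith
  set A := A0 / L ^ 2 with hA
  have hAnn : 0 ≤ A := by positivity
  have hAL : A * L ^ 2 = A0 := by rw [hA]; field_simp
  -- smallness
  have hsm : c / 4 + 2 * A * (n + B * L) < c := by
    have h1 : 4 * A0 * (n + B) ≤ L * c := by rwa [div_le_iff₀ hc0] at hL4
    have h2 : A * (n + B * L) ≤ A0 * (n + B) / L := by
      rw [le_div_iff₀ hL0]
      have h3 : A * (n + B * L) * L = A * (n * L + B * L ^ 2) := by ring
      have h5 : (n:ℝ) * L ≤ n * L ^ 2 := by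
        apply mul_le_mul_of_nonneg_left _ (Nat.cast_nonneg n); nlinarith
      rw [h3, ← hAL]
      nlinarith
    have h6 : A0 * (n + B) / L ≤ c / 4 := by
      rw [div_le_iff₀ hL0]; nlinarith
    nlinarith
  have hAX : A * X ^ 2 ≤ ε / 2 := by
    rw [div_le_iff₀ hε] at hL3
    rw [hA, div_mul_eq_mul_div, div_le_iff₀ (by positivity)]
    have : L ≤ L ^ 2 := by nlinarith
    nlinarith
  have hexp : κ * Real.exp ((B + 1) * s2) = ε / 2 := by
    rw [hκ, mul_assoc, ← Real.exp_add]; simp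
  have hα : ∀ s : ℝ, HasDerivAt (fun s => -(κ * Real.exp ((B + 1) * s)))
      (-(κ * (B + 1) * Real.exp ((B + 1) * s))) s := by
    intro s
    have := (((hasDerivAt_id s).const_mul (B + 1)).exp.const_mul κ).neg
    refine this.congr_deriv ?_
    simp; ring
  have hα' : ∀ s : ℝ, HasDerivAt (fun s => -(κ * (B + 1) * Real.exp ((B + 1) * s)))
      (-(κ * (B + 1) ^ 2 * Real.exp ((B + 1) * s))) s := by
    intro s
    have := (((hasDerivAt_id s).const_mul (B + 1)).exp.const_mul (κ * (B + 1))).neg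
    refine this.congr_deriv ?_
    simp; ring
  have hcomp : IsCompact {x : EuclideanSpace ℝ (Fin n) | s1 ≤ ⟪e, x⟫ ∧ ⟪e, x⟫ ≤ s2 ∧ ‖x‖ ≤ L} := by
    refine (isCompact_closedBall (0 : EuclideanSpace ℝ (Fin n)) L).of_isClosed_subset ?_ ?_
    · have c1 : IsClosed {x : EuclideanSpace ℝ (Fin n) | s1 ≤ ⟪e, x⟫} := isClosed_le (by fun_prop) (by fun_prop)
      have c2 : IsClosed {x : EuclideanSpace ℝ (Fin n) | ⟪e, x⟫ ≤ s2} := isClosed_le (by fun_prop) (by fun_prop)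
      have c3 : IsClosed {x : EuclideanSpace ℝ (Fin n) | ‖x‖ ≤ L} := isClosed_le (by fun_prop) (by fun_prop)
      exact c1.inter (c2.inter c3)
    · intro z hz; simpa using hz.2.2
  have := mp (w := f) (g := g) (H := H) he hcomp
    (fun z hz => (hf z hz.1 hz.2.1 hz.2.2).1.hasFDerivAt.continuousAt.continuousWithinAt)
    hα hα' A (m + ε / 2) ?_ x ⟨hx1, hx2, hxX.trans hLX⟩
  · have h1 : A * ‖x‖ ^ 2 ≤ A * X ^ 2 := by gcongr
    have h2 : 0 < κ * Real.exp ((B + 1) * ⟪e, x⟫) := by positivity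
    linarith
  · rintro z ⟨hz1, hz2, hz3⟩
    have hle : κ * Real.exp ((B + 1) * ⟪e, z⟫) ≤ ε / 2 := by
      rw [← hexp]; gcongr
    have hzz : 0 ≤ A * ‖z‖ ^ 2 := by positivity
    by_cases hb : ⟪e, z⟫ = s1 ∨ ⟪e, z⟫ = s2
    · left
      have := hbd z hb hz3
      linarith
    by_cases hb2 : ‖z‖ = L
    · left
      have := (hf z hz1 hz2 hz3).2.2.2
      rw [hb2, hAL]; linarith
    right
    push Not at hb
    have h1 : s1 < ⟪e, z⟫ := lt_of_le_of_ne hz1 (Ne.symm hb.1)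
    have h2 : ⟪e, z⟫ < s2 := lt_of_le_of_ne hz2 hb.2
    have h3 : ‖z‖ < L := lt_of_le_of_ne hz3 hb2
    have hK : {x : EuclideanSpace ℝ (Fin n) | s1 ≤ ⟪e, x⟫ ∧ ⟪e, x⟫ ≤ s2 ∧ ‖x‖ ≤ L} ∈ nhds z := by
      have e1 : ∀ᶠ y in nhds z, s1 < ⟪e, y⟫ :=
        (Continuous.tendsto (f := fun y : EuclideanSpace ℝ (Fin n) => ⟪e, y⟫) (by fun_prop) z).eventually (lt_mem_nhds h1)
      have e2 : ∀ᶠ y in nhds z, ⟪e, y⟫ < s2 :=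
        (Continuous.tendsto (f := fun y : EuclideanSpace ℝ (Fin n) => ⟪e, y⟫) (by fun_prop) z).eventually (gt_mem_nhds h2)
      have e3 : ∀ᶠ y in nhds z, ‖y‖ < L := (continuous_norm.tendsto z).eventually (gt_mem_nhds h3)
      filter_upwards [e1, e2, e3] with y a b c using ⟨a.le, b.le, c.le⟩
    refine ⟨hK, ?_, (hf z hz1 hz2 hz3).2.1, ?_⟩
    · filter_upwards [hK] with y hy using (hf y hy.1 hy.2.1 hy.2.2).1
    · intro hgz
      have htr := (hf z hz1 hz2 hz3).2.2.1
      have hn : ‖g z‖ ≤ κ * (B + 1) * Real.exp ((B + 1) * ⟪e, z⟫) + 2 * A * L := by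
        rw [hgz]
        refine (norm_add_le _ _).trans ?_
        rw [norm_smul, norm_smul, he, norm_neg, Real.norm_of_nonneg (by positivity), Real.norm_of_nonneg (by positivity), mul_one]
        gcongr
      have hc2 : c ≤ κ * (B + 1) * Real.exp ((B + 1) * ⟪e, z⟫) := by
        rw [hc]; gcongr
      have : B * ‖g z‖ ≤ B * (κ * (B + 1) * Real.exp ((B + 1) * ⟪e, z⟫) + 2 * A * L) := by gcongr
      have e1 : κ * (B + 1) ^ 2 * Real.exp ((B + 1) * ⟪e, z⟫)
          = (B + 1) * (κ * (B + 1) * Real.exp ((B + 1) * ⟪e, z⟫)) := by ring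
      rw [e1]
      generalize κ * (B + 1) * Real.exp ((B + 1) * ⟪e, z⟫) = Y at *
      linarith

/-- `|a^p - b^p|` bound. -/
lemma rpow_sub_le {p Γ a b : ℝ} (hp : 1 ≤ p) (ha : 0 ≤ a) (hb : 0 ≤ b) (haΓ : a ≤ Γ) (hbΓ : b ≤ Γ) :
    |a ^ p - b ^ p| ≤ p * Γ ^ (p - 1) * |a - b| := by
  have := Convex.norm_image_sub_le_of_norm_hasDerivWithin_le (f := fun x : ℝ => x ^ p)
    (f' := fun x => p * x ^ (p - 1)) (s := Icc 0 Γ) (x := b) (y := a) (C := p * Γ ^ (p - 1))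
    (fun x hx => (Real.hasDerivAt_rpow_const (Or.inr hp)).hasDerivWithinAt)
    (fun x hx => by
      rw [Real.norm_of_nonneg (mul_nonneg (by linarith) (Real.rpow_nonneg hx.1 _))]
      have : x ^ (p - 1) ≤ Γ ^ (p - 1) := Real.rpow_le_rpow hx.1 hx.2 (by linarith)
      gcongr)
    (convex_Icc _ _) ⟨hb, hbΓ⟩ ⟨ha, haΓ⟩
  simpa using this

lemma rpow_norm_sub_le {p Γ : ℝ} {a b : EuclideanSpace ℝ (Fin n)} (hp : 1 ≤ p) (haΓ : ‖a‖ ≤ Γ) (hbΓ : ‖b‖ ≤ Γ) :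
    |‖a‖ ^ p - ‖b‖ ^ p| ≤ p * Γ ^ (p - 1) * ‖a - b‖ := by
  refine (rpow_sub_le hp (norm_nonneg _) (norm_nonneg _) haΓ hbΓ).trans ?_
  have h0 : 0 ≤ Γ := (norm_nonneg a).trans haΓ
  have := Real.rpow_nonneg h0 (p - 1)
  have := abs_norm_sub_norm_le a b
  gcongr

end

section
variable {n : ℕ}

lemma ev_gt {χ : ℝ → ℝ} {c : ℝ} (h : HasDerivAt χ c 0) (hc : 0 < c) :
    ∀ᶠ τ in nhdsWithin (0:ℝ) (Ioi 0), χ 0 < χ τ := by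
  have h1 := h.tendsto_slope_zero_right
  filter_upwards [h1.eventually (lt_mem_nhds hc), self_mem_nhdsWithin] with τ h2 h3
  have h3 : 0 < τ := h3
  simp only [zero_add, smul_eq_mul] at h2
  have := (mul_pos_iff_of_pos_left (inv_pos.2 h3)).1 h2
  linarith

lemma sum_single_mul (u v : EuclideanSpace ℝ (Fin n)) :
    ∑ i : Fin n, ⟪u, EuclideanSpace.single i (1:ℝ)⟫ * ⟪v, EuclideanSpace.single i (1:ℝ)⟫ = ⟪u, v⟫ := by
  simp [EuclideanSpace.inner_single_right, PiLp.inner_apply, mul_comm]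

lemma sum_single_smul (u : EuclideanSpace ℝ (Fin n)) :
    ∑ i : Fin n, ⟪u, EuclideanSpace.single i (1:ℝ)⟫ • (EuclideanSpace.single i (1:ℝ)) = u := by
  refine ext_inner_right ℝ fun v => ?_
  rw [sum_inner, ← sum_single_mul u v]
  refine Finset.sum_congr rfl fun i _ => ?_
  rw [inner_smul_left, real_inner_comm v]; simp

lemma tr_reflect (A : EuclideanSpace ℝ (Fin n) →L[ℝ] EuclideanSpace ℝ (Fin n)) (e : EuclideanSpace ℝ (Fin n))
    (he : ‖e‖ = 1) :
    ∑ i : Fin n, ⟪A (EuclideanSpace.single i (1:ℝ) - (2 * ⟪e, EuclideanSpace.single i (1:ℝ)⟫) • e),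
      EuclideanSpace.single i (1:ℝ) - (2 * ⟪e, EuclideanSpace.single i (1:ℝ)⟫) • e⟫ = tr A := by
  have h1 : ∀ i : Fin n, ⟪A (EuclideanSpace.single i (1:ℝ) - (2 * ⟪e, EuclideanSpace.single i (1:ℝ)⟫) • e),
      EuclideanSpace.single i (1:ℝ) - (2 * ⟪e, EuclideanSpace.single i (1:ℝ)⟫) • e⟫ =
      ⟪A (EuclideanSpace.single i (1:ℝ)), EuclideanSpace.single i (1:ℝ)⟫
      - 2 * (⟪e, EuclideanSpace.single i (1:ℝ)⟫ * ⟪A e, EuclideanSpace.single i (1:ℝ)⟫)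
      - 2 * ⟪⟪e, EuclideanSpace.single i (1:ℝ)⟫ • A (EuclideanSpace.single i (1:ℝ)), e⟫
      + 4 * ⟪e, EuclideanSpace.single i (1:ℝ)⟫ ^ 2 * ⟪A e, e⟫ := by
    intro i
    simp only [map_sub, map_smul, inner_sub_left, inner_sub_right, inner_smul_left, inner_smul_right, conj_trivial]
    ring
  simp_rw [h1]
  rw [Finset.sum_add_distrib, Finset.sum_sub_distrib, Finset.sum_sub_distrib, ← Finset.mul_sum, ← Finset.mul_sum,
    sum_single_mul, ← sum_inner, ← Finset.sum_mul, ← Finset.mul_sum, sum_sq_inner, he]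
  have : ∑ i : Fin n, ⟪e, EuclideanSpace.single i (1:ℝ)⟫ • A (EuclideanSpace.single i (1:ℝ)) = A e := by
    conv_rhs => rw [← sum_single_smul e]
    rw [map_sum]
    simp only [map_smul]
  rw [this, real_inner_comm (A e) e]
  unfold tr
  ring

set_option maxHeartbeats 4000000 in
/-- Interior gradient estimate (doubling of variables). -/
lemma gradEst {w : EuclideanSpace ℝ (Fin n) → ℝ} {g : EuclideanSpace ℝ (Fin n) → EuclideanSpace ℝ (Fin n)}
    {H : EuclideanSpace ℝ (Fin n) → EuclideanSpace ℝ (Fin n) →L[ℝ] EuclideanSpace ℝ (Fin n)}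
    {x0 ζ : EuclideanSpace ℝ (Fin n)} {p μ W r c : ℝ} (hp : 1 ≤ p) (hr : 0 < r) (hW : 0 < W)
    (hsol : ∀ x ∈ closedBall x0 r, HasGradientAt w (g x) x ∧ HasFDerivAt g (H x) x ∧
      |tr (H x) + ‖g x‖ ^ p| ≤ μ)
    (happ : ∀ x ∈ closedBall x0 r, |w x - c - ⟪ζ, x - x0⟫| ≤ W)
    (h1 : p * (‖ζ‖ + (12 * n + 30) * W / r) ^ (p - 1) * r ≤ 1) (h2 : μ * r ^ 2 ≤ W) :
    ‖g x0 - ζ‖ ≤ 12 * (n + 1) * W / r := by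
  by_contra hcon
  push Not at hcon
  set k := 12 * (n + 1) * W / r with hk
  set m := 3 * (n + 1) * W / r ^ 2 with hm
  set A := 9 * W / r ^ 2 with hA
  have hn0 : (0:ℝ) ≤ n := Nat.cast_nonneg n
  have hk0 : 0 < k := by positivity
  have hm0 : 0 < m := by positivity
  have hA0 : 0 < A := by positivity
  have hmk : m * (4 * r) = k := by rw [hm, hk]; field_simp; ring
  have hkr : k * r = 12 * (n + 1) * W := by rw [hk]; field_simp
  have hAr : A * r ^ 2 = 9 * W := by rw [hA]; field_simp
  have hmr : m * r ^ 2 = 3 * (n + 1) * W := by rw [hm]; field_simp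
  set Φ : EuclideanSpace ℝ (Fin n) × EuclideanSpace ℝ (Fin n) → ℝ := fun q =>
    w q.1 - w q.2 - ⟪ζ, q.1 - q.2⟫ - (k * ‖q.1 - q.2‖ - m * ‖q.1 - q.2‖ ^ 2) - A * ‖q.1 - x0‖ ^ 2 with hΦ
  have hwc : ContinuousOn w (closedBall x0 r) := fun z hz =>
    (hsol z hz).1.hasFDerivAt.continuousAt.continuousWithinAt
  have hΦc : ContinuousOn Φ (closedBall x0 r ×ˢ closedBall x0 r) := by
    have c1 : ContinuousOn (fun q : EuclideanSpace ℝ (Fin n) × EuclideanSpace ℝ (Fin n) => w q.1)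
        (closedBall x0 r ×ˢ closedBall x0 r) := hwc.comp continuousOn_fst fun q hq => hq.1
    have c2 : ContinuousOn (fun q : EuclideanSpace ℝ (Fin n) × EuclideanSpace ℝ (Fin n) => w q.2)
        (closedBall x0 r ×ˢ closedBall x0 r) := hwc.comp continuousOn_snd fun q hq => hq.2
    refine (((c1.sub c2).sub ?_).sub ?_).sub ?_ <;> fun_prop
  have hx0 : x0 ∈ closedBall x0 r := mem_closedBall_self hr.le
  -- positivity of the max
  have hpos : ∃ q ∈ closedBall x0 r ×ˢ closedBall x0 r, 0 < Φ q := by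
    set v := ‖g x0 - ζ‖⁻¹ • (g x0 - ζ) with hv
    have hne : 0 < ‖g x0 - ζ‖ := hk0.trans hcon
    have hv1 : ‖v‖ = 1 := by
      rw [hv, norm_smul, norm_inv, norm_norm]; field_simp
    have hgv : ⟪g x0, v⟫ - ⟪ζ, v⟫ = ‖g x0 - ζ‖ := by
      rw [← inner_sub_left, hv, inner_smul_right, real_inner_self_eq_norm_sq]; field_simp
    have hd : HasDerivAt (fun τ : ℝ => w (x0 + τ • v) - τ * ⟪ζ, v⟫ - (k * τ - m * τ ^ 2) - A * τ ^ 2)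
        (⟪g x0, v⟫ - ⟪ζ, v⟫ - k) 0 := by
      have l1 := (line1 (w := w) (g := g) (x := x0) ?_ v).self_of_nhds
      · have d1 := (hasDerivAt_id (0:ℝ)).mul_const ⟪ζ, v⟫
        have d2 := ((hasDerivAt_id (0:ℝ)).const_mul k).sub ((hasDerivAt_pow 2 (0:ℝ)).const_mul m)
        have d3 := (hasDerivAt_pow 2 (0:ℝ)).const_mul A
        refine (((l1.sub d1).sub d2).sub d3).congr_deriv ?_
        simp
      · filter_upwards [closedBall_mem_nhds x0 hr] with z hz using (hsol z hz).1
    have hev := ev_gt hd (by rw [hgv]; linarith)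
    have hsm : ∀ᶠ τ in nhdsWithin (0:ℝ) (Ioi 0), τ < r :=
      nhdsWithin_le_nhds (gt_mem_nhds hr)
    obtain ⟨τ, hτ, hτr, hτ0⟩ := (hev.and (hsm.and self_mem_nhdsWithin)).exists
    have hτ0 : 0 < τ := hτ0
    refine ⟨(x0 + τ • v, x0), ⟨?_, hx0⟩, ?_⟩
    · simp [norm_smul, hv1, abs_of_pos hτ0, hτr.le]
    · simp only [hΦ, add_sub_cancel_left, norm_smul, hv1, inner_smul_right, Real.norm_of_nonneg hτ0.le, mul_one]
      simp at hτ
      linarith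
  obtain ⟨q1, hq1, hq1pos⟩ := hpos
  obtain ⟨⟨x, y⟩, ⟨hx, hy⟩, hmax⟩ :=
    ((isCompact_closedBall x0 r).prod (isCompact_closedBall x0 r)).exists_isMaxOn ⟨q1, hq1⟩ hΦc
  have hpos : 0 < Φ (x, y) := hq1pos.trans_le (hmax hq1)
  simp only at hx hy
  have hmax' : ∀ x' ∈ closedBall x0 r, ∀ y' ∈ closedBall x0 r, Φ (x', y') ≤ Φ (x, y) :=
    fun x' hx' y' hy' => hmax (show (x', y') ∈ _ from ⟨hx', hy'⟩)
  have hdist : ∀ x' ∈ closedBall x0 r, ∀ y' ∈ closedBall x0 r, ‖x' - y'‖ ≤ 2 * r := by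
    intro x' hx' y' hy'
    have := dist_triangle_right x' y' x0
    rw [mem_closedBall] at hx' hy'
    rw [← dist_eq_norm]; linarith
  set s := ‖x - y‖ with hs
  have hs2 : s ≤ 2 * r := hdist x hx y hy
  have hs0' : 0 ≤ s := norm_nonneg _
  have hw2 : w x - w y - ⟪ζ, x - y⟫ ≤ 2 * W := by
    have a1 := abs_le.1 (happ x hx)
    have a2 := abs_le.1 (happ y hy)
    have : ⟪ζ, x - y⟫ = ⟪ζ, x - x0⟫ - ⟪ζ, y - x0⟫ := by rw [← inner_sub_right]; congr 1; abel
    linarith [a1.2, a2.1]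
  have hlow : k * s / 2 ≤ k * s - m * s ^ 2 := by
    nlinarith [mul_nonneg (mul_nonneg hm0.le hs0') (sub_nonneg.2 hs2)]
  have hpos2 : k * s / 2 + A * ‖x - x0‖ ^ 2 < 2 * W := by
    simp only [hΦ, ← hs] at hpos; linarith
  have hsr : s < r / 3 := by
    have : 0 ≤ A * ‖x - x0‖ ^ 2 := by positivity
    by_contra hh
    push Not at hh
    have : k * (r / 3) ≤ k * s := by gcongr
    nlinarith
  have hxr : ‖x - x0‖ < r / 2 := by
    have h3 : 0 ≤ k * s := by positivity
    by_contra hh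
    push Not at hh
    have : A * (r / 2) ^ 2 ≤ A * ‖x - x0‖ ^ 2 := by gcongr
    nlinarith
  have hyr : ‖y - x0‖ < r := by
    have : ‖y - x0‖ ≤ ‖x - y‖ + ‖x - x0‖ := by
      rw [← norm_neg (x - y)]
      refine le_trans (le_of_eq ?_) (norm_add_le _ _); congr 1; abel
    linarith
  have hs0 : 0 < s := by
    rcases hs0'.lt_or_eq with h | h
    · exact h
    · exfalso
      have hxy : x = y := by rw [← sub_eq_zero, ← norm_eq_zero]; exact h.symm
      have : 0 ≤ A * ‖x - x0‖ ^ 2 := by positivity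
      subst hxy
      simp [hΦ] at hpos
      linarith
  have hxn : closedBall x0 r ∈ nhds x := by
    refine closedBall_mem_nhds_of_mem ?_
    rw [mem_ball, dist_eq_norm]; linarith
  have hyn : closedBall x0 r ∈ nhds y := by
    refine closedBall_mem_nhds_of_mem ?_
    rw [mem_ball, dist_eq_norm]; linarith
  have hgx : ∀ᶠ z in nhds x, HasGradientAt w (g z) z := by
    filter_upwards [hxn] with z hz using (hsol z hz).1
  have hgy : ∀ᶠ z in nhds y, HasGradientAt w (g z) z := by
    filter_upwards [hyn] with z hz using (hsol z hz).1
  have tend : ∀ z v : EuclideanSpace ℝ (Fin n), Tendsto (fun τ : ℝ => z + τ • v) (nhds 0) (nhds z) := by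
    intro z v
    have : Continuous (fun τ : ℝ => z + τ • v) := by fun_prop
    simpa using this.tendsto 0
  have hns : ∀ (v : EuclideanSpace ℝ (Fin n)) (τ : ℝ), HasDerivAt (fun τ : ℝ => ‖x + τ • v - x0‖ ^ 2)
      (2 * ⟪x - x0, v⟫ + 2 * τ * ‖v‖ ^ 2) τ := by
    intro v τ
    have : (fun τ : ℝ => ‖x + τ • v - x0‖ ^ 2) =
        fun τ => ‖x - x0‖ ^ 2 + τ * (2 * ⟪x - x0, v⟫) + τ ^ 2 * ‖v‖ ^ 2 := by
      ext τ
      rw [show x + τ • v - x0 = (x - x0) + τ • v by abel, norm_add_sq_real, inner_smul_right, norm_smul, mul_pow, Real.norm_eq_abs, sq_abs]; ring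
    rw [this]
    have h1 := ((hasDerivAt_id τ).mul_const (2 * ⟪x - x0, v⟫)).const_add (‖x - x0‖ ^ 2)
    have h2 := ((hasDerivAt_pow 2 τ).mul_const (‖v‖ ^ 2))
    refine (h1.add h2).congr_deriv ?_
    simp
  -- first order
  have hgd : g x - g y = (2 * A) • (x - x0) := by
    refine ext_inner_right ℝ fun v => ?_
    have hl : IsLocalMax (fun τ : ℝ => w (x + τ • v) - w (y + τ • v) - A * ‖x + τ • v - x0‖ ^ 2) 0 := by
      filter_upwards [(tend x v).eventually hxn, (tend y v).eventually hyn] with τ t1 t2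
      have := hmax' _ t1 _ t2
      simp only [hΦ, add_sub_add_right_eq_sub] at this
      simp only [zero_smul, add_zero]
      linarith
    have l1 := (line1 hgx v).self_of_nhds
    have l2 := (line1 hgy v).self_of_nhds
    have := hl.hasDerivAt_eq_zero ((l1.sub l2).sub ((hns v 0).const_mul A))
    simp only [zero_smul, add_zero, mul_zero, zero_mul] at this
    rw [inner_sub_left, inner_smul_left]
    simp only [conj_trivial]
    linarith
  have hgyb : ‖g y - ζ‖ ≤ k := by
    by_contra hh
    push Not at hh
    set v := ζ - g y with hv
    have hvn : ‖v‖ = ‖g y - ζ‖ := norm_sub_rev _ _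
    have hd : HasDerivAt (fun τ : ℝ => -w (y + τ • v) + τ * ⟪ζ, v⟫ - k * τ * ‖v‖) (-⟪g y, v⟫ + ⟪ζ, v⟫ - k * ‖v‖) 0 := by
      have l2 := (line1 hgy v).self_of_nhds
      simp only [zero_smul, add_zero] at l2
      have d1 := (hasDerivAt_id (0:ℝ)).mul_const ⟪ζ, v⟫
      have d2 := ((hasDerivAt_id (0:ℝ)).const_mul k).mul_const ‖v‖
      refine ((l2.neg.add d1).sub d2).congr_deriv ?_
      simp
    have hpos3 : 0 < -⟪g y, v⟫ + ⟪ζ, v⟫ - k * ‖v‖ := by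
      have : -⟪g y, v⟫ + ⟪ζ, v⟫ = ‖v‖ ^ 2 := by
        rw [neg_add_eq_sub, ← inner_sub_left, ← hv, real_inner_self_eq_norm_sq]
      rw [this]
      have : k < ‖v‖ := by rw [hvn]; exact hh
      nlinarith
    have hev := ev_gt hd hpos3
    have hev2 : ∀ᶠ τ in nhdsWithin (0:ℝ) (Ioi 0), y + τ • v ∈ closedBall x0 r :=
      ((tend y v).eventually hyn).filter_mono nhdsWithin_le_nhds
    have hev3 : ∀ᶠ τ in nhdsWithin (0:ℝ) (Ioi 0), τ ∈ Ioi (0:ℝ) := self_mem_nhdsWithin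
    obtain ⟨τ, hτ, hτy, hτ0⟩ := (hev.and (hev2.and hev3)).exists
    have hτ0 : 0 < τ := hτ0
    have h5 := hmax' x hx _ hτy
    have h6 := hdist x hx _ hτy
    set s' := ‖x - (y + τ • v)‖ with hs'
    have hs'0 : 0 ≤ s' := norm_nonneg _
    have h7 : |s' - s| ≤ τ * ‖v‖ := by
      refine (abs_norm_sub_norm_le _ _).trans (le_of_eq ?_)
      rw [show x - (y + τ • v) - (x - y) = -(τ • v) by abel, norm_neg, norm_smul, Real.norm_of_nonneg hτ0.le]
    have h8 : (k * s' - m * s' ^ 2) - (k * s - m * s ^ 2) ≤ k * (τ * ‖v‖) := by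
      have e1 : (k * s' - m * s' ^ 2) - (k * s - m * s ^ 2) = (s' - s) * (k - m * (s + s')) := by ring
      rw [e1]
      have e2 : |k - m * (s + s')| ≤ k := by
        have : m * (s + s') ≤ m * (4 * r) := by gcongr; linarith
        have : 0 ≤ m * (s + s') := by positivity
        rw [abs_le]; constructor <;> linarith
      calc _ ≤ |(s' - s) * (k - m * (s + s'))| := le_abs_self _
        _ = |s' - s| * |k - m * (s + s')| := abs_mul _ _
        _ ≤ (τ * ‖v‖) * k := by gcongr
        _ = _ := by ring
    have h9 : ⟪ζ, x - (y + τ • v)⟫ = ⟪ζ, x - y⟫ - τ * ⟪ζ, v⟫ := by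
      rw [← inner_smul_right, ← inner_sub_right]; congr 1; abel
    simp only [hΦ, ← hs', ← hs, h9] at h5
    simp at hτ
    linarith
  -- second order
  set eh := s⁻¹ • (x - y) with heh
  have heh1 : ‖eh‖ = 1 := by
    rw [heh, norm_smul, norm_inv, Real.norm_of_nonneg hs0.le, ← hs]; field_simp
  have hxy : x - y = s • eh := by rw [heh, smul_smul, mul_inv_cancel₀ hs0.ne', one_smul]
  have hsecond : ∀ i : Fin n,
      ⟪H x (EuclideanSpace.single i (1:ℝ)), EuclideanSpace.single i (1:ℝ)⟫ -
      ⟪H y (EuclideanSpace.single i (1:ℝ) - (2 * ⟪eh, EuclideanSpace.single i (1:ℝ)⟫) • eh),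
        EuclideanSpace.single i (1:ℝ) - (2 * ⟪eh, EuclideanSpace.single i (1:ℝ)⟫) • eh⟫
      + 8 * m * ⟪eh, EuclideanSpace.single i (1:ℝ)⟫ ^ 2 - 2 * A ≤ 0 := by
    intro i
    set v : EuclideanSpace ℝ (Fin n) := EuclideanSpace.single i (1:ℝ) with hv
    have hv1 : ‖v‖ = 1 := by simp [hv]
    set a := ⟪eh, v⟫ with ha
    set v' := v - (2 * a) • eh with hv'
    have hdiff : ∀ τ : ℝ, x + τ • v - (y + τ • v') = (s + 2 * τ * a) • eh := by
      intro τ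
      have q1 : x + τ • v - (y + τ • v') = (x - y) + (2 * τ * a) • eh := by
        rw [hv']; module
      have q2 : (x - y) = s • eh := hxy
      rw [q1, add_smul]
      exact congrArg (fun z => z + (2 * τ * a) • eh) q2
    have := sdt (φ := fun τ : ℝ => w (x + τ • v) - w (y + τ • v') - (s + 2 * τ * a) * ⟪ζ, eh⟫
        - (k * (s + 2 * τ * a) - m * (s + 2 * τ * a) ^ 2) - A * ‖x + τ • v - x0‖ ^ 2)
      (φ' := fun τ : ℝ => ⟪g (x + τ • v), v⟫ - ⟪g (y + τ • v'), v'⟫ - 2 * a * ⟪ζ, eh⟫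
        - (k * (2 * a) - m * (2 * (s + 2 * τ * a) * (2 * a))) - A * (2 * ⟪x - x0, v⟫ + 2 * τ * ‖v‖ ^ 2))
      (c := ⟪H x v, v⟫ - ⟪H y v', v'⟫ + 8 * m * a ^ 2 - 2 * A) ?_ ?_ ?_
    · exact this.2
    · filter_upwards [line1 hgx v, line1 hgy v'] with τ l1 l2
      have d0 : HasDerivAt (fun τ : ℝ => s + 2 * τ * a) (2 * a) τ := by
        refine ((((hasDerivAt_id τ).const_mul 2).mul_const a).const_add s).congr_deriv ?_
        simp
      have d2 := (d0.const_mul k).sub ((d0.pow 2).const_mul m)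
      refine ((((l1.sub l2).sub (d0.mul_const ⟪ζ, eh⟫)).sub d2).sub ((hns v τ).const_mul A)).congr_deriv ?_
      simp
    · have l1 := line2 (hsol x hx).2.1 v
      have l2 := line2 (hsol y hy).2.1 v'
      have d0 : HasDerivAt (fun τ : ℝ => k * (2 * a) - m * (2 * (s + 2 * τ * a) * (2 * a))) (-(8 * m * a ^ 2)) 0 := by
        refine ((((((((hasDerivAt_id (0:ℝ)).const_mul 2).mul_const a).const_add s).const_mul 2).mul_const (2 * a)).const_mul m).const_sub (k * (2 * a))).congr_deriv ?_
        simp; ring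
      have d3 : HasDerivAt (fun τ : ℝ => A * (2 * ⟪x - x0, v⟫ + 2 * τ * ‖v‖ ^ 2)) (2 * A) 0 := by
        refine (((((hasDerivAt_id (0:ℝ)).const_mul 2).mul_const (‖v‖ ^ 2)).const_add (2 * ⟪x - x0, v⟫)).const_mul A).congr_deriv ?_
        simp [hv1]; ring
      refine ((((l1.sub l2).sub_const (2 * a * ⟪ζ, eh⟫)).sub d0).sub d3).congr_deriv ?_
      ring
    · have hpos4 : ∀ᶠ τ in nhds (0:ℝ), 0 < s + 2 * τ * a := by
        have : Tendsto (fun τ : ℝ => s + 2 * τ * a) (nhds 0) (nhds s) := by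
          have : Continuous (fun τ : ℝ => s + 2 * τ * a) := by fun_prop
          simpa using this.tendsto 0
        exact this.eventually (lt_mem_nhds hs0)
      filter_upwards [(tend x v).eventually hxn, (tend y v').eventually hyn, hpos4] with τ t1 t2 t3
      have := hmax' _ t1 _ t2
      simp only [hΦ, hdiff, norm_smul, heh1, Real.norm_of_nonneg t3.le, inner_smul_right, mul_one] at this
      rw [hxy] at this
      simp only [norm_smul, heh1, Real.norm_of_nonneg hs0.le, inner_smul_right, mul_one] at this
      simp only [zero_smul, add_zero, mul_zero, zero_mul]
      linarith
  have hsum := Finset.sum_le_sum fun (i : Fin n) (_ : i ∈ Finset.univ) => hsecond i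
  rw [Finset.sum_sub_distrib, Finset.sum_add_distrib, Finset.sum_sub_distrib, tr_reflect _ _ heh1,
    ← Finset.mul_sum, sum_sq_inner, heh1] at hsum
  simp only [Finset.sum_const, Finset.card_univ, Fintype.card_fin, nsmul_eq_mul, smul_zero, mul_zero] at hsum
  change tr (H x) - tr (H y) + _ - _ ≤ 0 at hsum
  -- conclusion
  set Γ := ‖ζ‖ + (12 * n + 30) * W / r with hΓ
  have hgyΓ : ‖g y‖ ≤ Γ - 18 * W / r := by
    have : ‖g y‖ ≤ ‖g y - ζ‖ + ‖ζ‖ := by simpa using norm_add_le (g y - ζ) ζ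
    have e : Γ - 18 * W / r = ‖ζ‖ + k := by rw [hΓ, hk]; ring
    linarith
  have hdn : ‖g x - g y‖ ≤ 9 * W / r := by
    rw [hgd, norm_smul, Real.norm_of_nonneg (by positivity)]
    have : A * r = 9 * W / r := by rw [hA]; field_simp
    nlinarith
  have hWr : 0 < W / r := by positivity
  have hgxΓ : ‖g x‖ ≤ Γ := by
    have : ‖g x‖ ≤ ‖g x - g y‖ + ‖g y‖ := by simpa using norm_add_le (g x - g y) (g y)
    have e1 : 9 * W / r = 9 * (W / r) := by ring
    have e2 : 18 * W / r = 18 * (W / r) := by ring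
    rw [e1] at hdn; rw [e2] at hgyΓ
    linarith
  have hgyΓ' : ‖g y‖ ≤ Γ := by
    have e2 : 18 * W / r = 18 * (W / r) := by ring
    rw [e2] at hgyΓ
    linarith
  have hpow := rpow_norm_sub_le hp hgxΓ hgyΓ'
  have hΓ0 : 0 ≤ p * Γ ^ (p - 1) := by positivity
  have hpow2 : |‖g x‖ ^ p - ‖g y‖ ^ p| * r ^ 2 ≤ 9 * W := by
    calc |‖g x‖ ^ p - ‖g y‖ ^ p| * r ^ 2 ≤ (p * Γ ^ (p - 1) * (9 * W / r)) * r ^ 2 := by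
          gcongr; exact hpow.trans (by gcongr)
      _ = (p * Γ ^ (p - 1) * r) * (9 * W) := by field_simp
      _ ≤ 1 * (9 * W) := by gcongr
      _ = _ := by ring
  have hX := abs_le.1 (hsol x hx).2.2
  have hY := abs_le.1 (hsol y hy).2.2
  have hP := (abs_le.1 (le_refl |‖g x‖ ^ p - ‖g y‖ ^ p|)).2
  have hr2 : 0 < r ^ 2 := by positivity
  have hfin : (8 * m - 2 * A * n) ≤ 2 * μ + |‖g x‖ ^ p - ‖g y‖ ^ p| := by
    linarith [hX.1, hY.2]
  have := mul_le_mul_of_nonneg_right hfin hr2.le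
  have e3 : (8 * m - 2 * A * n) * r ^ 2 = 8 * (m * r ^ 2) - 2 * n * (A * r ^ 2) := by ring
  rw [e3, hmr, hAr] at this
  have : (n:ℝ) * W ≥ 0 := by positivity
  nlinarith

end

section
variable {n : ℕ}

lemma small_rpow {k : ℝ} (hk : 0 < k) (c : ℝ) {η : ℝ} (hη : 0 < η) :
    ∃ d0 > 0, ∀ d, 0 ≤ d → d ≤ d0 → c * d ^ k ≤ η := by
  have h1 : Tendsto (fun d : ℝ => c * d ^ k) (nhds 0) (nhds (c * 0 ^ k)) :=
    ((Real.continuousAt_rpow_const 0 k (Or.inr hk.le)).tendsto).const_mul c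
  rw [Real.zero_rpow hk.ne', mul_zero] at h1
  obtain ⟨d0, hd0, h2⟩ := Metric.eventually_nhds_iff.1 (h1.eventually (gt_mem_nhds hη))
  refine ⟨d0 / 2, by positivity, fun d hd hdd => (h2 ?_).le⟩
  rw [Real.dist_eq, sub_zero, abs_of_nonneg hd]; linarith

lemma small_rpow_neg {k : ℝ} (hk : 0 < k) (c : ℝ) {η : ℝ} (hη : 0 < η) :
    ∃ R0 > 0, ∀ R, R0 ≤ R → c * R ^ (-k) ≤ η := by
  have h1 : Tendsto (fun d : ℝ => c * d ^ (-k)) atTop (nhds (c * 0)) :=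
    (tendsto_rpow_neg_atTop hk).const_mul c
  rw [mul_zero] at h1
  obtain ⟨R0, h2⟩ := eventually_atTop.1 (h1.eventually (gt_mem_nhds hη))
  exact ⟨max R0 1, by positivity, fun R hR => (h2 R (le_trans (le_max_left _ _) hR)).le⟩

lemma pick {Λ η : ℝ} (hΛ : 0 ≤ Λ) (hη : 0 < η) :
    ∃ τ0 > 0, ∀ τ, 0 < τ → τ ≤ τ0 → τ ≤ η ∧ τ * Λ ^ 2 < η ∧ τ * Λ ≤ 1 ∧ τ ≤ 1 := by
  refine ⟨min (min 1 η) (min (η / (Λ ^ 2 + 1)) (1 / (Λ + 1))), by positivity, fun τ h0 h => ?_⟩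
  simp only [le_min_iff] at h
  obtain ⟨⟨h1, h2⟩, h3, h4⟩ := h
  rw [le_div_iff₀ (by positivity)] at h3 h4
  refine ⟨h2, by nlinarith, by nlinarith, h1⟩

structure Loc (p β C τ : ℝ) (e : EuclideanSpace ℝ (Fin n)) (D : Set (EuclideanSpace ℝ (Fin n)))
    (w : EuclideanSpace ℝ (Fin n) → ℝ) (g : EuclideanSpace ℝ (Fin n) → EuclideanSpace ℝ (Fin n))
    (H : EuclideanSpace ℝ (Fin n) → EuclideanSpace ℝ (Fin n) →L[ℝ] EuclideanSpace ℝ (Fin n)) : Prop where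
  e1 : ‖e‖ = 1
  D_open : IsOpen D
  wc : ContinuousOn w (closure D)
  bd : ∀ x ∈ frontier D, w x = 0
  sol : ∀ x ∈ D, HasGradientAt w (g x) x ∧ HasFDerivAt g (H x) x ∧ |tr (H x) + ‖g x‖ ^ p| ≤ τ
  int : ∀ x, τ * ‖x‖ ≤ 1 → τ * ‖x‖ ^ 2 < ⟪e, x⟫ → x ∈ D ∧ ‖g x‖ ≤ C * ⟪e, x⟫ ^ (-β)
  cl : ∀ x ∈ closure D, τ * ‖x‖ ≤ 1 → -(τ * ‖x‖ ^ 2) ≤ ⟪e, x⟫ ∧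
    |w x| ≤ C * (|⟪e, x⟫| + τ * ‖x‖ ^ 2) ^ (1 - β)

lemma tr_sub (A B : EuclideanSpace ℝ (Fin n) →L[ℝ] EuclideanSpace ℝ (Fin n)) : tr (A - B) = tr A - tr B := by
  simp [tr, inner_sub_left, Finset.sum_sub_distrib]
lemma tr_add (A B : EuclideanSpace ℝ (Fin n) →L[ℝ] EuclideanSpace ℝ (Fin n)) : tr (A + B) = tr A + tr B := by
  simp [tr, inner_add_left, Finset.sum_add_distrib]
lemma tr_smul (c : ℝ) (A : EuclideanSpace ℝ (Fin n) →L[ℝ] EuclideanSpace ℝ (Fin n)) : tr (c • A) = c * tr A := by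
  simp [tr, inner_smul_left, Finset.mul_sum]
lemma tr_neg (A : EuclideanSpace ℝ (Fin n) →L[ℝ] EuclideanSpace ℝ (Fin n)) : tr (-A) = - tr A := by
  simp [tr]

variable {p β C τ : ℝ} {e : EuclideanSpace ℝ (Fin n)} {D : Set (EuclideanSpace ℝ (Fin n))}
    {w : EuclideanSpace ℝ (Fin n) → ℝ} {g : EuclideanSpace ℝ (Fin n) → EuclideanSpace ℝ (Fin n)}
    {H : EuclideanSpace ℝ (Fin n) → EuclideanSpace ℝ (Fin n) →L[ℝ] EuclideanSpace ℝ (Fin n)}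

lemma Loc.inr (h : Loc p β C τ e D w g H) (h0 : 0 < τ) {x : EuclideanSpace ℝ (Fin n)} {Λ s : ℝ} (hx : ‖x‖ ≤ Λ)
    (h1 : τ * Λ ^ 2 < s) (h2 : τ * Λ ≤ 1) (hs : s ≤ ⟪e, x⟫) :
    τ * ‖x‖ ≤ 1 ∧ τ * ‖x‖ ^ 2 < ⟪e, x⟫ ∧ x ∈ D ∧ ‖g x‖ ≤ C * ⟪e, x⟫ ^ (-β) := by
  have a1 : τ * ‖x‖ ≤ 1 := (mul_le_mul_of_nonneg_left hx h0.le).trans h2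
  have a2 : τ * ‖x‖ ^ 2 < ⟪e, x⟫ := by
    refine lt_of_lt_of_le (lt_of_le_of_lt ?_ h1) hs
    gcongr
  exact ⟨a1, a2, h.int x a1 a2⟩

lemma Loc.wb (h : Loc p β C τ e D w g H) (h0 : 0 < τ) (hC : 0 ≤ C) (hβ1 : β < 1) {x : EuclideanSpace ℝ (Fin n)}
    (h1 : τ * ‖x‖ ≤ 1) (h2 : τ * ‖x‖ ^ 2 < ⟪e, x⟫) : |w x| ≤ C * (2 * ⟪e, x⟫) ^ (1 - β) := by
  have := (h.cl x (subset_closure (h.int x h1 h2).1) h1).2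
  refine this.trans ?_
  have : 0 ≤ τ * ‖x‖ ^ 2 := by positivity
  gcongr
  rw [abs_of_nonneg (by linarith)]; linarith

lemma lemA (hp : 2 < p) (hβ0 : 0 < β) (hβ1 : β < 1) (hC : 0 ≤ C) {ε L s1 s2 : ℝ} (hε : 0 < ε) (hL : 0 ≤ L)
    (hs1 : 0 < s1) (hs12 : s1 ≤ s2) :
    ∃ τ0 > 0, ∀ τ, 0 < τ → τ ≤ τ0 → ∀ (e : EuclideanSpace ℝ (Fin n)) D w g H, Loc p β C τ e D w g H →
      ∀ s : ℝ, s1 ≤ s → s ≤ s2 → ∀ h, ⟪e, h⟫ = 0 → ‖h‖ ≤ L → |w (s • e + h) - w (s • e)| ≤ ε := by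
  obtain ⟨d0, hd0, hd⟩ := small_rpow (k := 1 - β) (by linarith) (2 * C) (half_pos hε)
  obtain ⟨R0, hR0, hR⟩ := small_rpow_neg hβ0 (2 * L * C) (half_pos hε)
  set ε1 := min s1 (d0 / 2) with hε1
  have hε10 : 0 < ε1 := by positivity
  set R := max s2 R0 with hRd
  have hR0' : 0 < R := lt_of_lt_of_le hR0 (le_max_right _ _)
  have hεR : ε1 ≤ R := (min_le_left _ _).trans (hs12.trans (le_max_left _ _))
  set γ := C * ε1 ^ (-β) with hγ
  have hγ0 : 0 ≤ γ := by positivity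
  obtain ⟨L0, hL0, μ0, hμ0, hsl⟩ := slab (n := n) (p * γ ^ (p - 1)) (2 * (C * (2 * R) ^ (1 - β))) ε1 R (ε / 2) s2
    (by positivity) (by positivity) (by positivity) (by linarith)
  obtain ⟨τ0, hτ0, hpick⟩ := pick (Λ := L0 + L) (η := min ε1 (μ0 / 2)) (by positivity) (by positivity)
  refine ⟨τ0, hτ0, fun τ hτ hττ e D w g H hloc => ?_⟩
  obtain ⟨k1, k2, k3, -⟩ := hpick τ hτ hττ
  have k1' : 2 * τ ≤ μ0 := by have := min_le_right ε1 (μ0 / 2); linarith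
  have k2' : τ * (L0 + L) ^ 2 < ε1 := lt_of_lt_of_le k2 (min_le_left _ _)
  have hgb : ∀ x, ε1 ≤ ⟪e, x⟫ → ‖x‖ ≤ L0 + L → ‖g x‖ ≤ γ := by
    intro x hx hxn
    refine (hloc.inr hτ hxn k2' k3 hx).2.2.2.trans ?_
    rw [hγ]
    exact mul_le_mul_of_nonneg_left (Real.rpow_le_rpow_of_nonpos hε10 hx (by linarith)) hC
  have hwb : ∀ x, ε1 ≤ ⟪e, x⟫ → ‖x‖ ≤ L0 + L → |w x| ≤ C * (2 * ⟪e, x⟫) ^ (1 - β) := by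
    intro x hx hxn
    have := hloc.inr hτ hxn k2' k3 hx
    exact hloc.wb hτ hC hβ1 this.1 this.2.1
  have main : ∀ h1 h2 : EuclideanSpace ℝ (Fin n), ⟪e, h1⟫ = 0 → ⟪e, h2⟫ = 0 → ‖h1‖ ≤ L → ‖h2‖ ≤ L →
      ∀ s : ℝ, s1 ≤ s → s ≤ s2 → w (s • e + h1) - w (s • e + h2) ≤ ε := by
    intro h1 h2 hh1 hh2 hn1 hn2 s hs hs'
    have hin : ∀ h x : EuclideanSpace ℝ (Fin n), ⟪e, h⟫ = 0 → ⟪e, x + h⟫ = ⟪e, x⟫ := by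
      intro h x hh; rw [inner_add_right, hh, add_zero]
    have hnn : ∀ h x : EuclideanSpace ℝ (Fin n), ‖h‖ ≤ L → ‖x‖ ≤ L0 → ‖x + h‖ ≤ L0 + L := by
      intro h x hh hx; exact (norm_add_le _ _).trans (by linarith)
    have := hsl e hloc.e1 L0 le_rfl (fun x => w (x + h1) - w (x + h2)) (fun x => g (x + h1) - g (x + h2))
      (fun x => H (x + h1) - H (x + h2)) (ε / 2) (by positivity) ?_ ?_ (s • e) ?_ ?_ ?_
    · linarith
    · intro x hx1 hx2 hxL
      have e1 : ε1 ≤ ⟪e, x + h1⟫ := by rw [hin _ _ hh1]; exact hx1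
      have e2 : ε1 ≤ ⟪e, x + h2⟫ := by rw [hin _ _ hh2]; exact hx1
      have m1 := hnn h1 x hn1 hxL
      have m2 := hnn h2 x hn2 hxL
      obtain ⟨a1, a2, a3⟩ := hloc.sol _ (hloc.inr hτ m1 k2' k3 e1).2.2.1
      obtain ⟨b1, b2, b3⟩ := hloc.sol _ (hloc.inr hτ m2 k2' k3 e2).2.2.1
      refine ⟨?_, ?_, ?_, ?_⟩
      · rw [hasGradientAt_iff_hasFDerivAt] at a1 b1 ⊢
        rw [map_sub]
        exact ((hasFDerivAt_comp_add_right h1).2 a1).sub ((hasFDerivAt_comp_add_right h2).2 b1)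
      · exact ((hasFDerivAt_comp_add_right h1).2 a2).sub ((hasFDerivAt_comp_add_right h2).2 b2)
      · have := rpow_norm_sub_le (p := p) (by linarith) (hgb _ e1 m1) (hgb _ e2 m2)
        rw [tr_sub]
        rw [abs_le] at a3 b3 this
        linarith [this.1, this.2, a3.1, a3.2, b3.1, b3.2]
      · have c1 := hwb _ e1 m1
        have c2 := hwb _ e2 m2
        rw [hin _ _ hh1] at c1
        rw [hin _ _ hh2] at c2
        have : C * (2 * ⟪e, x⟫) ^ (1 - β) ≤ C * (2 * R) ^ (1 - β) := by
          gcongr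
          linarith
        rw [abs_le] at c1 c2
        linarith [c1.1, c1.2, c2.1, c2.2]
    · intro x hx hxL
      have hxe : ε1 ≤ ⟪e, x⟫ := by rcases hx with hx | hx <;> rw [hx]; exact hεR
      have e1 : ε1 ≤ ⟪e, x + h1⟫ := by rw [hin _ _ hh1]; exact hxe
      have e2 : ε1 ≤ ⟪e, x + h2⟫ := by rw [hin _ _ hh2]; exact hxe
      have m1 := hnn h1 x hn1 hxL
      have m2 := hnn h2 x hn2 hxL
      rcases hx with hx | hx
      · have c1 := hwb _ e1 m1
        have c2 := hwb _ e2 m2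
        rw [hin _ _ hh1, hx] at c1
        rw [hin _ _ hh2, hx] at c2
        have := hd (2 * ε1) (by positivity) (by have := min_le_right s1 (d0 / 2); linarith)
        rw [abs_le] at c1 c2
        linarith [c1.1, c1.2, c2.1, c2.2]
      · have hconv : Convex ℝ ({z : EuclideanSpace ℝ (Fin n) | ⟪e, z⟫ = R} ∩ closedBall 0 (L0 + L)) := by
          refine Convex.inter ?_ (convex_closedBall _ _)
          exact convex_hyperplane (f := fun z => ⟪e, z⟫) ⟨fun a b => inner_add_right _ _ _, fun a b => inner_smul_right _ _ _⟩ R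
        have := hconv.norm_image_sub_le_of_norm_hasFDerivWithin_le (f := w)
          (f' := fun z => (InnerProductSpace.toDual ℝ _) (g z)) (C := C * R ^ (-β)) (x := x + h2) (y := x + h1) ?_ ?_ ?_ ?_
        · have q1 : ‖x + h1 - (x + h2)‖ ≤ 2 * L := by
            rw [add_sub_add_left_eq_sub]
            exact (norm_sub_le _ _).trans (by linarith)
          have q2 : C * R ^ (-β) * ‖x + h1 - (x + h2)‖ ≤ C * R ^ (-β) * (2 * L) := by gcongr
          have q3 := hR R (le_max_right _ _)
          have q4 := le_abs_self (w (x + h1) - w (x + h2))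
          rw [Real.norm_eq_abs] at this
          linarith
        · rintro z ⟨hz1, hz2⟩
          have hz1 : ⟪e, z⟫ = R := hz1
          rw [mem_closedBall_zero_iff] at hz2
          have := hloc.inr hτ hz2 k2' k3 (hz1 ▸ hεR)
          exact (hasGradientAt_iff_hasFDerivAt.1 (hloc.sol z this.2.2.1).1).hasFDerivWithinAt
        · rintro z ⟨hz1, hz2⟩
          have hz1 : ⟪e, z⟫ = R := hz1
          rw [mem_closedBall_zero_iff] at hz2
          have := (hloc.inr hτ hz2 k2' k3 (hz1 ▸ hεR)).2.2.2
          rw [hz1] at this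
          simpa using this
        · exact ⟨by rw [mem_ofPred_eq, hin _ _ hh2, hx], by simpa using m2⟩
        · exact ⟨by rw [mem_ofPred_eq, hin _ _ hh1, hx], by simpa using m1⟩
    · rw [inner_smul_right, real_inner_self_eq_norm_sq, hloc.e1]
      have := min_le_left s1 (d0 / 2); linarith
    · rw [inner_smul_right, real_inner_self_eq_norm_sq, hloc.e1]
      have := le_max_left s2 R0; linarith
    · rw [norm_smul, hloc.e1, Real.norm_of_nonneg (by linarith)]; linarith
  intro s hs hs' h hh hn
  have z1 := main h 0 hh (inner_zero_right _) hn (by simpa using hL) s hs hs'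
  have z2 := main 0 h (inner_zero_right _) hh (by simpa using hL) hn s hs hs'
  rw [add_zero] at z1 z2
  rw [abs_le]; constructor <;> linarith

end

section
variable {n : ℕ}
variable {p β C τ : ℝ} {e : EuclideanSpace ℝ (Fin n)} {D : Set (EuclideanSpace ℝ (Fin n))}
    {w : EuclideanSpace ℝ (Fin n) → ℝ} {g : EuclideanSpace ℝ (Fin n) → EuclideanSpace ℝ (Fin n)}
    {H : EuclideanSpace ℝ (Fin n) → EuclideanSpace ℝ (Fin n) →L[ℝ] EuclideanSpace ℝ (Fin n)}

lemma Loc.barr (hloc : Loc p β C τ e D w g H) (hτ : 0 < τ) (hC : 0 ≤ C) (hβ0 : 0 < β) (hβ1 : β < 1)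
    {N m A L : ℝ} (hm : 0 ≤ m) (hL : 1 ≤ L) (h1 : τ * L ^ 2 < 1) (h2 : τ * L ≤ 1) (h3 : (|N| + m) * τ ≤ A)
    (h4 : 2 * C + |N| + m ≤ A * L ^ 2)
    {W : EuclideanSpace ℝ (Fin n) → ℝ} {Gf : EuclideanSpace ℝ (Fin n) → EuclideanSpace ℝ (Fin n)}
    {Hf : EuclideanSpace ℝ (Fin n) → EuclideanSpace ℝ (Fin n) →L[ℝ] EuclideanSpace ℝ (Fin n)}
    (hW : ∀ x, |W x| = |w x|) (hWc : ContinuousOn W (closure D))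
    (htop : ∀ x, ⟪e, x⟫ = 1 → ‖x‖ ≤ L → W x ≤ N - m)
    (hin : ∀ x ∈ D, HasGradientAt W (Gf x) x ∧ HasFDerivAt Gf (Hf x) x ∧
      (‖Gf x‖ ≤ |N| + 2 * m + 2 * A * L → -2 * m + 2 * n * A < tr (Hf x))) :
    ∀ x ∈ closure D, ⟪e, x⟫ ≤ 1 → ‖x‖ ≤ L → W x ≤ N * ⟪e, x⟫ - m * ⟪e, x⟫ ^ 2 + A * ‖x‖ ^ 2 := by
  have hA : 0 ≤ A := le_trans (by positivity) h3
  have hcont : Continuous fun x : EuclideanSpace ℝ (Fin n) => ⟪e, x⟫ := by fun_prop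
  set K := (closure D ∩ {x | ⟪e, x⟫ ≤ 1}) ∩ closedBall (0 : EuclideanSpace ℝ (Fin n)) L with hK
  have hKc : IsCompact K :=
    (isCompact_closedBall _ _).inter_left (isClosed_closure.inter (isClosed_le hcont continuous_const))
  have hα : ∀ s : ℝ, HasDerivAt (fun s => N * s - m * s ^ 2) (N - m * (2 * s)) s := by
    intro s
    refine (((hasDerivAt_id s).const_mul N).sub (((hasDerivAt_id s).pow 2).const_mul m)).congr_deriv ?_
    simp
  have hα' : ∀ s : ℝ, HasDerivAt (fun s => N - m * (2 * s)) (-2 * m) s := by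
    intro s
    refine ((((hasDerivAt_id s).const_mul 2).const_mul m).const_sub N).congr_deriv ?_
    simp; ring
  have key := mp (w := W) (g := Gf) (H := Hf) (α'' := fun _ => -2 * m) hloc.e1 hKc (hWc.mono (fun x hx => hx.1.1)) hα hα' A 0 ?_
  · intro x hx hx1 hxL
    have := key x ⟨⟨hx, hx1⟩, by simpa using hxL⟩
    linarith
  · rintro x ⟨⟨hxD, hx1⟩, hxL⟩
    have hx1 : ⟪e, x⟫ ≤ 1 := hx1
    rw [mem_closedBall_zero_iff] at hxL
    have hτx : τ * ‖x‖ ≤ 1 := (mul_le_mul_of_nonneg_left hxL hτ.le).trans h2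
    have hτx2 : τ * ‖x‖ ^ 2 < 1 := lt_of_le_of_lt (by gcongr) h1
    have hτx20 : 0 ≤ τ * ‖x‖ ^ 2 := by positivity
    obtain ⟨c1, c2⟩ := hloc.cl x hxD hτx
    have hy1 : |⟪e, x⟫| ≤ 1 := abs_le.2 ⟨by linarith, hx1⟩
    have hNy : -(|N| * |⟪e, x⟫|) ≤ N * ⟪e, x⟫ := by rw [← abs_mul]; exact neg_abs_le _
    have hmy : m * ⟪e, x⟫ ^ 2 ≤ m * |⟪e, x⟫| := by
      rw [← sq_abs]; nlinarith [abs_nonneg ⟪e, x⟫, mul_nonneg hm (abs_nonneg ⟪e, x⟫)]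
    by_cases hxf : x ∈ frontier D
    · left
      have hw0 : W x ≤ 0 := by
        have := hW x; rw [hloc.bd x hxf, abs_zero, abs_eq_zero] at this; rw [this]
      have hy2 : |⟪e, x⟫| ≤ τ * ‖x‖ ^ 2 := by
        refine abs_le.2 ⟨c1, ?_⟩
        by_contra hc
        have := (hloc.int x hτx (not_le.1 hc)).1
        rw [frontier, hloc.D_open.interior_eq] at hxf
        exact hxf.2 this
      have : (|N| + m) * |⟪e, x⟫| ≤ A * ‖x‖ ^ 2 := by
        calc (|N| + m) * |⟪e, x⟫| ≤ (|N| + m) * (τ * ‖x‖ ^ 2) := by gcongr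
          _ = (|N| + m) * τ * ‖x‖ ^ 2 := by ring
          _ ≤ _ := by gcongr
      linarith
    have hxD' : x ∈ D := by
      by_contra hc
      exact hxf (by rw [frontier, hloc.D_open.interior_eq]; exact ⟨hxD, hc⟩)
    rcases hxL.eq_or_lt with hxL' | hxL'
    · left
      have d1 : |W x| ≤ 2 * C := by
        rw [hW]
        refine c2.trans ?_
        have : (|⟪e, x⟫| + τ * ‖x‖ ^ 2) ^ (1 - β) ≤ 2 := by
          calc _ ≤ (2:ℝ) ^ (1 - β) := by
                gcongr
                linarith
            _ ≤ (2:ℝ) ^ (1:ℝ) := Real.rpow_le_rpow_of_exponent_le (by norm_num) (by linarith)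
            _ = 2 := by norm_num
        nlinarith
      have d2 := le_abs_self (W x)
      have d3 : |N| * |⟪e, x⟫| ≤ |N| := mul_le_of_le_one_right (abs_nonneg _) hy1
      have d4 : m * |⟪e, x⟫| ≤ m := mul_le_of_le_one_right hm hy1
      rw [hxL']
      linarith
    rcases hx1.eq_or_lt with hx1' | hx1'
    · left
      have := htop x hx1' hxL
      have : 0 ≤ A * ‖x‖ ^ 2 := by positivity
      rw [hx1']; linarith
    right
    obtain ⟨b1, b2, b3⟩ := hin x hxD'
    refine ⟨?_, ?_, b2, fun hg => b3 ?_⟩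
    · refine inter_mem (inter_mem (mem_of_superset (hloc.D_open.mem_nhds hxD') subset_closure) ?_) ?_
      · exact mem_of_superset ((isOpen_lt hcont continuous_const).mem_nhds hx1') (fun z (hz : ⟪e, z⟫ < 1) => show ⟪e, z⟫ ≤ 1 from hz.le)
      · exact closedBall_mem_nhds_of_mem (by simpa using hxL')
    · filter_upwards [hloc.D_open.mem_nhds hxD'] with z hz using (hin z hz).1
    · rw [hg]
      refine (norm_add_le _ _).trans ?_
      rw [norm_smul, norm_smul, hloc.e1, mul_one, Real.norm_eq_abs, Real.norm_of_nonneg (by positivity)]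
      have : |N - m * (2 * ⟪e, x⟫)| ≤ |N| + 2 * m := by
        refine (abs_sub _ _).trans ?_
        rw [abs_mul, abs_mul, abs_of_nonneg hm, abs_two]
        nlinarith
      have : 2 * A * ‖x‖ ≤ 2 * A * L := by gcongr
      linarith

lemma decomp (he : ‖e‖ = 1) (x : EuclideanSpace ℝ (Fin n)) :
    x = ⟪e, x⟫ • e + (x - ⟪e, x⟫ • e) ∧ ⟪e, x - ⟪e, x⟫ • e⟫ = 0 ∧ ‖x - ⟪e, x⟫ • e‖ ≤ ‖x‖ := by
  have h0 : ⟪e, x - ⟪e, x⟫ • e⟫ = 0 := by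
    rw [inner_sub_right, inner_smul_right, real_inner_self_eq_norm_sq, he]; ring
  refine ⟨by abel, h0, ?_⟩
  have h2 : ‖x‖ ^ 2 = ‖⟪e, x⟫ • e‖ ^ 2 + ‖x - ⟪e, x⟫ • e‖ ^ 2 := by
    have := norm_add_sq_real (⟪e, x⟫ • e) (x - ⟪e, x⟫ • e)
    rw [inner_smul_left, h0] at this
    simp only [add_sub_cancel, mul_zero, add_zero] at this
    exact this
  refine le_of_sq_le_sq ?_ (norm_nonneg _)
  nlinarith [sq_nonneg ‖⟪e, x⟫ • e‖]

lemma lemUB (hp : 2 < p) (hβ0 : 0 < β) (hβ1 : β < 1) (hC : 0 ≤ C) {q0 η : ℝ} (hq0 : 0 < q0) (hη : 0 < η) (hη1 : η ≤ 1)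
    (hq : (4 * q0) ^ p ≤ η * q0 / 4) :
    ∃ τ0 > 0, ∀ τ, 0 < τ → τ ≤ τ0 → ∀ (e : EuclideanSpace ℝ (Fin n)) D w g H, Loc p β C τ e D w g H →
      w e ≤ q0 → ∀ x ∈ closure D, ⟪e, x⟫ ≤ 1 → ‖x‖ ≤ 1 → w x ≤ q0 * (1 + η) * ⟪e, x⟫ + η * q0 * ‖x‖ ^ 2 := by
  set N := q0 * (1 + η) with hN
  set m := η * q0 / 2 with hm
  set Q := 2 * C + N + m with hQ
  have hN0 : 0 < N := by positivity
  have hm0 : 0 < m := by positivity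
  have hQ0 : 0 < Q := by positivity
  set L := 1 + 2 * Q / q0 + (8 * n * Q + Q) / (η * q0) with hLd
  have hL1 : 1 ≤ L := by
    have : 0 ≤ 2 * Q / q0 + (8 * n * Q + Q) / (η * q0) := by positivity
    linarith
  have hL0 : 0 < L := by linarith
  set A := Q / L ^ 2 with hA
  have hA0 : 0 < A := by positivity
  have hAL : A * L ^ 2 = Q := by rw [hA]; field_simp
  have hAL1 : 2 * A * L ≤ q0 := by
    have : 2 * Q / q0 ≤ L := by
      have : 0 ≤ (8 * n * Q + Q) / (η * q0) := by positivity
      linarith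
    rw [div_le_iff₀ hq0] at this
    have h : 2 * A * L * L ≤ q0 * L := by nlinarith
    exact le_of_mul_le_mul_right h hL0
  have hAn : (8 * n + 1) * A ≤ η * q0 := by
    have : (8 * n * Q + Q) / (η * q0) ≤ L := by
      have : 0 ≤ 2 * Q / q0 := by positivity
      linarith
    rw [div_le_iff₀ (by positivity)] at this
    have h : (8 * n + 1) * A * L ^ 2 ≤ η * q0 * L ^ 2 := by
      calc (8 * n + 1) * A * L ^ 2 = 8 * n * Q + Q := by rw [mul_assoc, hAL]; ring
        _ ≤ L * (η * q0) := this
        _ ≤ η * q0 * L ^ 2 := by nlinarith [mul_pos hη hq0]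
    exact le_of_mul_le_mul_right h (by positivity)
  have hnA : 0 ≤ n * A := by positivity
  obtain ⟨τ1, hτ1, hA1⟩ := lemA (n := n) hp hβ0 hβ1 hC (ε := η * q0 / 2) (L := L) (s1 := 1) (s2 := 1) (by positivity)
    hL0.le one_pos le_rfl
  obtain ⟨τ2, hτ2, hpk⟩ := pick (Λ := L) (η := min (min 1 (η * q0 / 8)) (A / (N + m))) hL0.le (by positivity)
  refine ⟨min τ1 τ2, by positivity, fun τ hτ hττ e D w g H hloc hwe => ?_⟩
  obtain ⟨k1, k2, k3, -⟩ := hpk τ hτ (hττ.trans (min_le_right _ _))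
  have hA1 := hA1 τ hτ (hττ.trans (min_le_left _ _)) e D w g H hloc
  simp only [le_min_iff] at k1
  simp only [lt_min_iff] at k2
  obtain ⟨⟨k11, k12⟩, k13⟩ := k1
  have key := hloc.barr hτ hC hβ0 hβ1 (N := N) (m := m) (A := A) (L := L) (W := w) (Gf := g) (Hf := H) hm0.le hL1 k2.1.1 k3 ?_ ?_
    (fun x => rfl) hloc.wc ?_ ?_
  · intro x hx hx1 hxn
    have := key x hx hx1 (hxn.trans hL1)
    have h1 : A * ‖x‖ ^ 2 ≤ η * q0 * ‖x‖ ^ 2 := by gcongr; linarith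
    have h2 : 0 ≤ m * ⟪e, x⟫ ^ 2 := by positivity
    linarith
  · rw [abs_of_pos hN0]
    rw [le_div_iff₀ (by positivity)] at k13; linarith
  · rw [abs_of_pos hN0, hAL]
  · intro x hx hxL
    obtain ⟨d1, d2, d3⟩ := decomp hloc.e1 x
    have := hA1 1 le_rfl le_rfl _ d2 (d3.trans hxL)
    rw [hx] at d1 this
    rw [← d1, one_smul] at this
    have := (abs_le.1 this).2
    linarith
  · intro x hx
    obtain ⟨b1, b2, b3⟩ := hloc.sol x hx
    refine ⟨b1, b2, fun hg => ?_⟩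
    rw [abs_of_pos hN0] at hg
    have hg2 : ‖g x‖ ≤ 4 * q0 := by
      have : N + 2 * m ≤ 3 * q0 := by rw [hN, hm]; nlinarith
      linarith
    have hg3 : ‖g x‖ ^ p ≤ (4 * q0) ^ p := by gcongr
    have := (abs_le.1 b3).1
    have hnn : 0 < η * q0 := by positivity
    have : 2 * m = η * q0 := by rw [hm]; ring
    linarith

lemma lemLB (hp : 2 < p) (hβ0 : 0 < β) (hβ1 : β < 1) (hC : 0 ≤ C) (q : ℝ) {η : ℝ} (hη : 0 < η) :
    ∃ τ0 > 0, ∀ τ, 0 < τ → τ ≤ τ0 → ∀ (e : EuclideanSpace ℝ (Fin n)) D w g H, Loc p β C τ e D w g H →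
      q ≤ w e → ∀ x ∈ closure D, ⟪e, x⟫ ≤ 1 → ‖x‖ ≤ 1 → (q - η) * ⟪e, x⟫ - η * ‖x‖ ^ 2 ≤ w x := by
  set N := -(q - η) with hN
  set m := η / 2 with hm
  set Q := 2 * C + |N| + m with hQ
  have hm0 : 0 < m := by positivity
  have hQ0 : 0 < Q := by positivity
  set L := 1 + (8 * n * Q + Q) / η with hLd
  have hL1 : 1 ≤ L := by
    have : 0 ≤ (8 * n * Q + Q) / η := by positivity
    linarith
  have hL0 : 0 < L := by linarith
  set A := Q / L ^ 2 with hA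
  have hA0 : 0 < A := by positivity
  have hAL : A * L ^ 2 = Q := by rw [hA]; field_simp
  have hAn : (8 * n + 1) * A ≤ η := by
    have : (8 * n * Q + Q) / η ≤ L := by linarith
    rw [div_le_iff₀ (by positivity)] at this
    have h : (8 * n + 1) * A * L ^ 2 ≤ η * L ^ 2 := by
      calc (8 * n + 1) * A * L ^ 2 = 8 * n * Q + Q := by rw [mul_assoc, hAL]; ring
        _ ≤ L * η := this
        _ ≤ η * L ^ 2 := by nlinarith [mul_pos hη hL0]
    exact le_of_mul_le_mul_right h (by positivity)
  have hnA : 0 ≤ n * A := by positivity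
  obtain ⟨τ1, hτ1, hA1⟩ := lemA (n := n) hp hβ0 hβ1 hC (ε := η / 2) (L := L) (s1 := 1) (s2 := 1) (by positivity)
    hL0.le one_pos le_rfl
  obtain ⟨τ2, hτ2, hpk⟩ := pick (Λ := L) (η := min (min 1 (η / 8)) (A / (|N| + m))) hL0.le (by positivity)
  refine ⟨min τ1 τ2, by positivity, fun τ hτ hττ e D w g H hloc hwe => ?_⟩
  obtain ⟨k1, k2, k3, -⟩ := hpk τ hτ (hττ.trans (min_le_right _ _))
  have hA1 := hA1 τ hτ (hττ.trans (min_le_left _ _)) e D w g H hloc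
  simp only [le_min_iff] at k1
  simp only [lt_min_iff] at k2
  obtain ⟨⟨k11, k12⟩, k13⟩ := k1
  have key := hloc.barr hτ hC hβ0 hβ1 (N := N) (m := m) (A := A) (L := L) (W := fun x => - w x) (Gf := fun x => - g x)
    (Hf := fun x => - H x) hm0.le hL1 k2.1.1 k3 ?_ ?_
    (fun x => abs_neg _) hloc.wc.neg ?_ ?_
  · intro x hx hx1 hxn
    have := key x hx hx1 (hxn.trans hL1)
    have h1 : A * ‖x‖ ^ 2 ≤ η * ‖x‖ ^ 2 := by gcongr; linarith
    have h2 : 0 ≤ m * ⟪e, x⟫ ^ 2 := by positivity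
    rw [hN] at this
    linarith
  · rw [le_div_iff₀ (by positivity)] at k13; linarith
  · rw [hAL]
  · intro x hx hxL
    obtain ⟨d1, d2, d3⟩ := decomp hloc.e1 x
    have := hA1 1 le_rfl le_rfl _ d2 (d3.trans hxL)
    rw [hx] at d1 this
    rw [← d1, one_smul] at this
    have := (abs_le.1 this).1
    linarith
  · intro x hx
    obtain ⟨b1, b2, b3⟩ := hloc.sol x hx
    refine ⟨?_, b2.neg, fun hg => ?_⟩
    · rw [hasGradientAt_iff_hasFDerivAt] at b1 ⊢
      rw [map_neg]
      exact b1.neg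
    have hg3 : 0 ≤ ‖g x‖ ^ p := by positivity
    have := (abs_le.1 b3).2
    rw [tr_neg]
    linarith

end

section
variable {n : ℕ}
variable {p β C τ : ℝ} {e : EuclideanSpace ℝ (Fin n)} {D : Set (EuclideanSpace ℝ (Fin n))}
    {w : EuclideanSpace ℝ (Fin n) → ℝ} {g : EuclideanSpace ℝ (Fin n) → EuclideanSpace ℝ (Fin n)}
    {H : EuclideanSpace ℝ (Fin n) → EuclideanSpace ℝ (Fin n) →L[ℝ] EuclideanSpace ℝ (Fin n)}

lemma inner_smul_self' (he : ‖e‖ = 1) (s : ℝ) : ⟪e, s • e⟫ = s := by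
  rw [inner_smul_right, real_inner_self_eq_norm_sq, he]; ring

lemma Loc.ball_mem (hloc : Loc p β C τ e D w g H) (hτ : 0 < τ) (hτ1 : τ ≤ 1 / 2) {d : ℝ} (hd0 : 0 < d) (hd : d ≤ 1 / 4)
    {x : EuclideanSpace ℝ (Fin n)} (hx : x ∈ closedBall (d • e) (d / 2)) :
    x ∈ D ∧ ‖x‖ ≤ 3 / 2 * d ∧ d / 2 ≤ ⟪e, x⟫ ∧ ⟪e, x⟫ ≤ 3 / 2 * d ∧ ‖x‖ ^ 2 ≤ 3 / 2 * d := by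
  rw [mem_closedBall, dist_eq_norm] at hx
  have h1 : ‖x‖ ≤ 3 / 2 * d := by
    have : x = d • e + (x - d • e) := by abel
    rw [this]
    refine (norm_add_le _ _).trans ?_
    rw [norm_smul, hloc.e1, Real.norm_of_nonneg hd0.le]; linarith
  have h2 : |⟪e, x⟫ - d| ≤ d / 2 := by
    have : ⟪e, x⟫ - d = ⟪e, x - d • e⟫ := by rw [inner_sub_right, inner_smul_self' hloc.e1]
    rw [this]
    refine (abs_real_inner_le_norm _ _).trans ?_
    rw [hloc.e1, one_mul]; exact hx
  rw [abs_le] at h2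
  have h3 : ‖x‖ ^ 2 ≤ (3 / 2 * d) * (3 / 2 * d) := by rw [sq]; gcongr
  refine ⟨(hloc.int x ?_ ?_).1, h1, by linarith, by linarith, by nlinarith⟩
  · nlinarith [norm_nonneg x]
  · nlinarith [sq_nonneg ‖x‖]

lemma lemB (hp : 2 < p) (hβ0 : 0 < β) (hβ1 : β < 1) (hC : 0 ≤ C) {q0 η : ℝ} (hq0 : 0 < q0) (hη : 0 < η) (hη1 : η ≤ 1)
    (hq : (4 * q0) ^ p ≤ η * q0 / 4) :
    ∃ τ0 > 0, ∀ τ, 0 < τ → τ ≤ τ0 → ∀ (e : EuclideanSpace ℝ (Fin n)) D w g H, Loc p β C τ e D w g H →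
      w e ≤ q0 → ∀ σ : ℝ, 0 < σ → σ ≤ 1 / 2 → w (σ • e) ≤ (1 + 2 * η) * (1 / 2) ^ β * q0 * σ ^ (1 - β) := by
  obtain ⟨τ0, hτ0, h⟩ := lemUB (n := n) hp hβ0 hβ1 hC hq0 hη hη1 hq
  refine ⟨min τ0 (1 / 2), by positivity, fun τ hτ hττ e D w g H hloc hwe σ hσ hσ2 => ?_⟩
  have hτ1 : τ ≤ 1 / 2 := hττ.trans (min_le_right _ _)
  have hn : ‖σ • e‖ = σ := by rw [norm_smul, hloc.e1, Real.norm_of_nonneg hσ.le, mul_one]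
  have := h τ hτ (hττ.trans (min_le_left _ _)) e D w g H hloc hwe (σ • e) ?_ ?_ ?_
  · rw [hn, inner_smul_self' hloc.e1] at this
    have h1 : w (σ • e) ≤ (1 + 2 * η) * q0 * σ := by
      have : η * q0 * σ ^ 2 ≤ η * q0 * σ := by gcongr; nlinarith
      linarith
    have h2 : σ = σ ^ β * σ ^ (1 - β) := by
      rw [← Real.rpow_add hσ]; norm_num
    have h3 : σ ^ β ≤ (1 / 2) ^ β := by gcongr
    calc w (σ • e) ≤ (1 + 2 * η) * q0 * (σ ^ β * σ ^ (1 - β)) := by rw [← h2]; exact h1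
      _ ≤ (1 + 2 * η) * q0 * ((1 / 2) ^ β * σ ^ (1 - β)) := by gcongr
      _ = _ := by ring
  · refine subset_closure (hloc.int _ ?_ ?_).1
    · rw [hn]; nlinarith
    · rw [hn, inner_smul_self' hloc.e1]; nlinarith
  · rw [inner_smul_self' hloc.e1]; linarith
  · rw [hn]; linarith

set_option maxHeartbeats 1000000 in
lemma lemC (hp : 2 < p) (hβ0 : 0 < β) (hβ1 : β < 1) (hC : 0 ≤ C) {q0 η : ℝ} (hq0 : 0 < q0) (hη : 0 < η) 
    (hηn : 288 * (n + 1) * η ≤ 1)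
    (hq : (4 * q0) ^ p ≤ η * q0 / 4) (hq2 : p * (2 * q0) ^ (p - 1) ≤ 1) :
    ∃ τ0 > 0, ∀ τ, 0 < τ → τ ≤ τ0 → ∀ (e : EuclideanSpace ℝ (Fin n)) D w g H, Loc p β C τ e D w g H →
      w e = q0 → ∀ d : ℝ, 0 < d → d ≤ 1 / 4 → ‖g (d • e) - q0 • e‖ ≤ q0 / 4 := by
  have hn0 : (0:ℝ) ≤ n := by positivity
  have hη1 : η ≤ 1 := by nlinarith
  obtain ⟨τ1, hτ1, hU⟩ := lemUB (n := n) hp hβ0 hβ1 hC hq0 hη hη1 hq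
  obtain ⟨τ2, hτ2, hL⟩ := lemLB (n := n) hp hβ0 hβ1 hC q0 (η := η * q0) (by positivity)
  refine ⟨min (min τ1 τ2) (min (1 / 2) (η * q0)), by positivity, fun τ hτ hττ e D w g H hloc hwe d hd hd4 => ?_⟩
  simp only [le_min_iff] at hττ
  obtain ⟨⟨t1, t2⟩, t3, t4⟩ := hττ
  have hU := hU τ hτ t1 e D w g H hloc hwe.le
  have hL := hL τ hτ t2 e D w g H hloc hwe.ge
  have hball := fun x hx => hloc.ball_mem hτ t3 hd hd4 (x := x) hx
  have := gradEst (w := w) (g := g) (H := H) (x0 := d • e) (ζ := q0 • e) (p := p) (r := d / 2) (W := 3 * η * q0 * d)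
    (c := q0 * d) (μ := τ) (by linarith) (by positivity) (by positivity) ?_ ?_ ?_ ?_
  · refine this.trans ?_
    have : 12 * ((n:ℝ) + 1) * (3 * η * q0 * d) / (d / 2) = 288 * (n + 1) * η * q0 / 4 := by
      field_simp; ring
    rw [this]
    nlinarith
  · intro x hx
    exact hloc.sol x (hball x hx).1
  · intro x hx
    obtain ⟨b1, b2, b3, b4, b5⟩ := hball x hx
    have h1 := hU x (subset_closure b1) (by linarith only [b4, hd4]) (by linarith only [b2, hd4])
    have h2 := hL x (subset_closure b1) (by linarith only [b4, hd4]) (by linarith only [b2, hd4])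
    have h3 : w x - q0 * d - ⟪q0 • e, x - d • e⟫ = w x - q0 * ⟪e, x⟫ := by
      rw [real_inner_smul_left, inner_sub_right, inner_smul_self' hloc.e1]; ring
    rw [h3]
    have h4 : η * q0 * ⟪e, x⟫ ≤ η * q0 * (3 / 2 * d) := by gcongr
    have h5 : η * q0 * ‖x‖ ^ 2 ≤ η * q0 * (3 / 2 * d) := by gcongr
    rw [abs_le]; constructor <;> linarith only [h1, h2, h4, h5]
  · have h1 : ‖q0 • e‖ + (12 * n + 30) * (3 * η * q0 * d) / (d / 2) ≤ 2 * q0 := by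
      rw [norm_smul, hloc.e1, Real.norm_of_nonneg hq0.le]
      have : (12 * (n:ℝ) + 30) * (3 * η * q0 * d) / (d / 2) = (72 * n + 180) * η * q0 := by
        field_simp; ring
      rw [this]
      have : (72 * (n:ℝ) + 180) * η ≤ 1 := by nlinarith
      nlinarith
    have h0 : 0 ≤ ‖q0 • e‖ + (12 * n + 30) * (3 * η * q0 * d) / (d / 2) := by positivity
    have h2 : (‖q0 • e‖ + (12 * n + 30) * (3 * η * q0 * d) / (d / 2)) ^ (p - 1) ≤ (2 * q0) ^ (p - 1) := by
      gcongr
      linarith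
    have h3 : p * (‖q0 • e‖ + (12 * n + 30) * (3 * η * q0 * d) / (d / 2)) ^ (p - 1) ≤ 1 := by
      refine le_trans ?_ hq2
      gcongr
    have h4 : 0 ≤ p * (‖q0 • e‖ + (12 * n + 30) * (3 * η * q0 * d) / (d / 2)) ^ (p - 1) := by positivity
    nlinarith
  · have : τ * (d / 2) ^ 2 ≤ η * q0 * (d / 2) ^ 2 := by gcongr
    have h2 : (d / 2) ^ 2 ≤ 3 * d := by nlinarith
    have : η * q0 * (d / 2) ^ 2 ≤ η * q0 * (3 * d) := by gcongr
    linarith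

set_option maxHeartbeats 1000000 in
lemma lemE (hp : 2 < p) (hβ0 : 0 < β) (hβ1 : β < 1) (hC : 0 ≤ C) {q0 η : ℝ} (hq0 : 0 < q0) (hη : 0 < η) (hη1 : η ≤ 1)
    (hq : (4 * q0) ^ p ≤ η * q0 / 4) :
    ∃ τ0 > 0, ∃ d0 : ℝ, 0 < d0 ∧ ∃ K1 : ℝ, ∀ τ, 0 < τ → τ ≤ τ0 → ∀ (e : EuclideanSpace ℝ (Fin n)) D w g H, Loc p β C τ e D w g H →
      w e ≤ q0 → ∀ d : ℝ, 0 < d → d ≤ d0 → ‖g (d • e)‖ ≤ K1 := by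
  have hn0 : (0:ℝ) ≤ n := by positivity
  obtain ⟨τ1, hτ1, hU⟩ := lemUB (n := n) hp hβ0 hβ1 hC hq0 hη hη1 hq
  obtain ⟨τ2, hτ2, hL⟩ := lemLB (n := n) hp hβ0 hβ1 hC (-(2 * C)) (η := 1) (by positivity)
  set K2 := 6 * q0 + 3 * C + 3 with hK2
  have hK20 : 0 < K2 := by positivity
  set Z := p * ((12 * n + 30) * (2 * K2)) ^ (p - 1) with hZ
  have hZ0 : 0 ≤ Z := by positivity
  refine ⟨min (min τ1 τ2) (1 / 2), by positivity, min (1 / 4) (1 / (Z + 1)), by positivity, 12 * (n + 1) * (2 * K2),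
    fun τ hτ hττ e D w g H hloc hwe d hd hdd => ?_⟩
  simp only [le_min_iff] at hττ hdd
  obtain ⟨⟨t1, t2⟩, t3⟩ := hττ
  obtain ⟨hd4, hdZ⟩ := hdd
  rw [le_div_iff₀ (by positivity)] at hdZ
  have hU := hU τ hτ t1 e D w g H hloc hwe
  have hlow : -(2 * C) ≤ w e := by
    have hee : ⟪e, e⟫ = 1 := by rw [real_inner_self_eq_norm_sq, hloc.e1]; norm_num
    have := hloc.wb hτ hC hβ1 (x := e) (by rw [hloc.e1]; linarith) (by rw [hloc.e1, hee]; linarith)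
    rw [hee] at this
    have h2 : ((2:ℝ) * 1) ^ (1 - β) ≤ 2 := by
      calc ((2:ℝ) * 1) ^ (1 - β) ≤ (2 * 1) ^ (1:ℝ) := Real.rpow_le_rpow_of_exponent_le (by norm_num) (by linarith)
        _ = 2 := by norm_num
    have := (abs_le.1 this).1
    nlinarith
  have hL := hL τ hτ t2 e D w g H hloc hlow
  have hball := fun x hx => hloc.ball_mem hτ t3 hd hd4 (x := x) hx
  have := gradEst (w := w) (g := g) (H := H) (x0 := d • e) (ζ := 0) (p := p) (r := d / 2) (W := K2 * d)
    (c := 0) (μ := τ) (by linarith) (by positivity) (by positivity) ?_ ?_ ?_ ?_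
  · rw [sub_zero] at this
    refine this.trans (le_of_eq ?_)
    field_simp
  · intro x hx
    exact hloc.sol x (hball x hx).1
  · intro x hx
    obtain ⟨b1, b2, b3, b4, b5⟩ := hball x hx
    have h1 := hU x (subset_closure b1) (by linarith only [b4, hd4]) (by linarith only [b2, hd4])
    have h2 := hL x (subset_closure b1) (by linarith only [b4, hd4]) (by linarith only [b2, hd4])
    rw [inner_zero_left, sub_zero, sub_zero]
    have hy0 : 0 ≤ ⟪e, x⟫ := by linarith
    have h3 : q0 * (1 + η) * ⟪e, x⟫ ≤ q0 * (1 + 1) * (3 / 2 * d) := by gcongr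
    have h4 : η * q0 * ‖x‖ ^ 2 ≤ 1 * q0 * (3 / 2 * d) := by gcongr
    have h5 : (2 * C + 1) * ⟪e, x⟫ ≤ (2 * C + 1) * (3 / 2 * d) := by gcongr
    have h6 : 0 ≤ q0 * d := by positivity
    have h7 : 0 ≤ C * d := by positivity
    rw [hK2, abs_le]; constructor <;> linarith
  · have h1 : ‖(0 : EuclideanSpace ℝ (Fin n))‖ + (12 * n + 30) * (K2 * d) / (d / 2) = (12 * n + 30) * (2 * K2) := by
      rw [norm_zero]; field_simp; ring
    rw [h1, ← hZ]
    nlinarith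
  · have h2 : τ * (d / 2) ^ 2 ≤ 1 * (d / 2) ^ 2 := by gcongr; linarith
    have h3 : (d / 2) ^ 2 ≤ 3 * d := by nlinarith
    have h4 : 3 * d ≤ K2 * d := by gcongr; rw [hK2]; linarith
    linarith

end

section
variable {n : ℕ}
variable {p β C τ : ℝ} {e : EuclideanSpace ℝ (Fin n)} {D : Set (EuclideanSpace ℝ (Fin n))}
    {w : EuclideanSpace ℝ (Fin n) → ℝ} {g : EuclideanSpace ℝ (Fin n) → EuclideanSpace ℝ (Fin n)}
    {H : EuclideanSpace ℝ (Fin n) → EuclideanSpace ℝ (Fin n) →L[ℝ] EuclideanSpace ℝ (Fin n)}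

lemma quadf (he : ‖e‖ = 1) {x : EuclideanSpace ℝ (Fin n)} (h1 : HasGradientAt w (g x) x) (h2 : HasFDerivAt g (H x) x)
    (σ k0 k1 k2 : ℝ) :
    HasGradientAt (fun x => σ * w x + (k0 + k1 * ⟪e, x⟫ + k2 * ⟪e, x⟫ ^ 2)) (σ • g x + (k1 + 2 * k2 * ⟪e, x⟫) • e) x ∧
    HasFDerivAt (fun x => σ • g x + (k1 + 2 * k2 * ⟪e, x⟫) • e)
      (σ • H x + (2 * k2) • ((innerSL ℝ e).smulRight e)) x ∧
    tr (σ • H x + (2 * k2) • ((innerSL ℝ e).smulRight e)) = σ * tr (H x) + 2 * k2 := by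
  have hin : HasFDerivAt (fun x : EuclideanSpace ℝ (Fin n) => ⟪e, x⟫) (innerSL ℝ e) x :=
    (innerSL ℝ e).hasFDerivAt
  refine ⟨?_, ?_, ?_⟩
  · rw [hasGradientAt_iff_hasFDerivAt] at h1 ⊢
    have := (h1.const_mul σ).add (((hin.const_mul k1).const_add k0).add ((hin.pow 2).const_mul k2))
    refine this.congr_fderiv ?_
    ext v
    simp [inner_add_left, real_inner_smul_left]
    ring
  · have := (h2.const_smul σ).add (((hin.const_mul (2 * k2)).const_add k1).smul_const e)
    refine this.congr_fderiv ?_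
    ext v
    simp [smul_smul, mul_assoc]
  · rw [tr_add, tr_smul, tr_smul]
    have : tr ((innerSL ℝ e).smulRight e) = 1 := by
      unfold tr
      have h1 : ∑ i : Fin n, ⟪e, EuclideanSpace.single i (1:ℝ)⟫ * ⟪e, EuclideanSpace.single i (1:ℝ)⟫ = 1 := by
        rw [sum_single_mul, real_inner_self_eq_norm_sq, he]; norm_num
      refine Eq.trans ?_ h1
      refine Finset.sum_congr rfl fun i _ => ?_
      simp [real_inner_smul_left]
    rw [this, mul_one]

lemma interp (hp : 2 < p) (hβ0 : 0 < β) (hβ1 : β < 1) (hC : 0 ≤ C) {s1 s2 F ε X : ℝ} (hs1 : 0 < s1) (hs12 : s1 < s2)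
    (hF : 0 ≤ F) (hε : 0 < ε) (hX : 0 ≤ X) {σ : ℝ} (hσ : σ = -1 ∨ (σ = 1 ∧ (C * s1 ^ (-β)) ^ p ≤ 2 * F)) :
    ∃ τ0 > 0, ∀ τ, 0 < τ → τ ≤ τ0 → ∀ (e : EuclideanSpace ℝ (Fin n)) D w g H, Loc p β C τ e D w g H →
      ∀ x, s1 ≤ ⟪e, x⟫ → ⟪e, x⟫ ≤ s2 → ‖x‖ ≤ X →
        σ * (w x - (w (s1 • e) + (w (s2 • e) - w (s1 • e)) / (s2 - s1) * (⟪e, x⟫ - s1))) ≤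
          F * (⟪e, x⟫ - s1) * (s2 - ⟪e, x⟫) + 2 * ε := by
  have hs2 : 0 < s2 := hs1.trans hs12
  set B0 := C * (2 * s2) ^ (1 - β) with hB0
  have hB00 : 0 ≤ B0 := by positivity
  obtain ⟨L0, hL0, μ0, hμ0, hsl⟩ := slab (n := n) 0 (2 * B0) s1 s2 ε X le_rfl (by positivity) hε hX
  obtain ⟨τ1, hτ1, hA⟩ := lemA (n := n) hp hβ0 hβ1 hC hε hL0.le hs1 hs12.le
  obtain ⟨τ2, hτ2, hpk⟩ := pick (Λ := L0 + s2) (η := min s1 μ0) (by positivity) (by positivity)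
  refine ⟨min τ1 τ2, by positivity, fun τ hτ hττ e D w g H hloc => ?_⟩
  simp only [le_min_iff] at hττ
  obtain ⟨k1, k2, k3, -⟩ := hpk τ hτ hττ.2
  have hA := hA τ hτ hττ.1 e D w g H hloc
  have k1' : τ ≤ μ0 := k1.trans (min_le_right _ _)
  have k2' : τ * (L0 + s2) ^ 2 < s1 := lt_of_lt_of_le k2 (min_le_left _ _)
  have hinr : ∀ x, s1 ≤ ⟪e, x⟫ → ‖x‖ ≤ L0 + s2 → _ := fun x hx hxn => hloc.inr hτ hxn k2' k3 hx
  have hwb : ∀ x, s1 ≤ ⟪e, x⟫ → ⟪e, x⟫ ≤ s2 → ‖x‖ ≤ L0 + s2 → |w x| ≤ B0 := by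
    intro x h1 h2 h3
    refine (hloc.wb hτ hC hβ1 (hinr x h1 h3).1 (hinr x h1 h3).2.1).trans ?_
    rw [hB0]; gcongr
    linarith
  have hne : ∀ s, 0 ≤ s → s ≤ s2 → ‖s • e‖ ≤ L0 + s2 := by
    intro s hs hs'
    rw [norm_smul, hloc.e1, Real.norm_of_nonneg hs]; linarith
  set v1 := w (s1 • e) with hv1
  set v2 := w (s2 • e) with hv2
  have hv1b : |v1| ≤ B0 := hwb _ (by rw [inner_smul_self' hloc.e1]) (by rw [inner_smul_self' hloc.e1]; exact hs12.le)
    (hne _ hs1.le hs12.le)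
  have hv2b : |v2| ≤ B0 := hwb _ (by rw [inner_smul_self' hloc.e1]; exact hs12.le) (by rw [inner_smul_self' hloc.e1])
    (hne _ hs2.le le_rfl)
  set z := (v2 - v1) / (s2 - s1) with hz
  have hzs : z * (s2 - s1) = v2 - v1 := by rw [hz]; field_simp [sub_ne_zero.2 hs12.ne']
  have hℓ : ∀ y, s1 ≤ y → y ≤ s2 → |v1 + z * (y - s1)| ≤ B0 := by
    intro y h1 h2
    have hd : 0 < s2 - s1 := by linarith
    set t := (y - s1) / (s2 - s1) with ht
    have ht0 : 0 ≤ t := div_nonneg (by linarith) hd.le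
    have ht1 : t ≤ 1 := (div_le_one hd).2 (by linarith)
    have : v1 + z * (y - s1) = (1 - t) * v1 + t * v2 := by
      have : y - s1 = t * (s2 - s1) := by rw [ht]; field_simp
      rw [this]; linear_combination t * hzs
    rw [this]
    rw [abs_le] at *
    constructor <;> nlinarith
  have hσ1 : |σ| = 1 := by rcases hσ with h | h <;> simp [h]
  have hσabs : ∀ t : ℝ, σ * t ≤ |t| := fun t => by
    calc σ * t ≤ |σ * t| := le_abs_self _
      _ = |t| := by rw [abs_mul, hσ1, one_mul]
  have heq : ∀ x, σ * (w x - (v1 + z * (⟪e, x⟫ - s1))) - F * (⟪e, x⟫ - s1) * (s2 - ⟪e, x⟫) =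
      σ * w x + ((-σ * (v1 - z * s1) + F * s1 * s2) + (-σ * z - F * (s1 + s2)) * ⟪e, x⟫ + F * ⟪e, x⟫ ^ 2) := by
    intro x; ring
  intro x hx1 hx2 hxX
  have := hsl e hloc.e1 L0 le_rfl
    (fun x => σ * w x + ((-σ * (v1 - z * s1) + F * s1 * s2) + (-σ * z - F * (s1 + s2)) * ⟪e, x⟫ + F * ⟪e, x⟫ ^ 2))
    (fun x => σ • g x + ((-σ * z - F * (s1 + s2)) + 2 * F * ⟪e, x⟫) • e)
    (fun x => σ • H x + (2 * F) • ((innerSL ℝ e).smulRight e)) ε hε.le ?_ ?_ x hx1 hx2 hxX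
  · rw [← heq] at this; linarith
  · intro x hx1 hx2 hxL
    have hxL' : ‖x‖ ≤ L0 + s2 := by linarith
    obtain ⟨a1, a2, a3⟩ := hloc.sol x (hinr x hx1 hxL').2.2.1
    obtain ⟨b1, b2, b3⟩ := quadf hloc.e1 a1 a2 σ (-σ * (v1 - z * s1) + F * s1 * s2) (-σ * z - F * (s1 + s2)) F
    refine ⟨b1, b2, ?_, ?_⟩
    · rw [b3]
      rw [abs_le] at a3
      have hgp : 0 ≤ ‖g x‖ ^ p := by positivity
      rcases hσ with h | ⟨h, hFF⟩
      · rw [h]; linarith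
      · have : ‖g x‖ ^ p ≤ (C * s1 ^ (-β)) ^ p := by
          gcongr
          refine (hinr x hx1 hxL').2.2.2.trans ?_
          exact mul_le_mul_of_nonneg_left (Real.rpow_le_rpow_of_nonpos hs1 hx1 (by linarith)) hC
        rw [h]; linarith
    · rw [← heq]
      have c1 := hσabs (w x - (v1 + z * (⟪e, x⟫ - s1)))
      have c2 := hwb x hx1 hx2 hxL'
      have c3 := hℓ _ hx1 hx2
      have c4 := abs_sub (w x) (v1 + z * (⟪e, x⟫ - s1))
      have c5 : 0 ≤ F * (⟪e, x⟫ - s1) * (s2 - ⟪e, x⟫) :=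
        mul_nonneg (mul_nonneg hF (by linarith)) (by linarith)
      linarith
  · intro x hx hxL
    rw [← heq]
    obtain ⟨d1, d2, d3⟩ := decomp hloc.e1 x
    have c1 := hσabs (w x - (v1 + z * (⟪e, x⟫ - s1)))
    rcases hx with hx | hx
    · have := hA s1 le_rfl hs12.le _ d2 (d3.trans hxL)
      rw [hx] at d1 this
      rw [← d1] at this
      rw [hx] at c1 ⊢
      simp only [sub_self, mul_zero, add_zero, zero_mul, sub_zero] at c1 ⊢
      linarith
    · have := hA s2 hs12.le le_rfl _ d2 (d3.trans hxL)
      rw [hx] at d1 this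
      rw [← d1] at this
      rw [hx, hzs] at c1
      rw [hx, hzs]
      simp only [sub_self, mul_zero, sub_zero, add_sub_cancel] at c1 ⊢
      linarith


set_option maxHeartbeats 1000000 in
lemma lemD (hp : 2 < p) (hβ0 : 0 < β) (hβ1 : β < 1) (hC : 0 ≤ C) {q0 : ℝ} (hq0 : 0 < q0) :
    ∃ R : ℝ, 8 ≤ R ∧ ∃ τ0 > 0, ∀ τ, 0 < τ → τ ≤ τ0 → ∀ (e : EuclideanSpace ℝ (Fin n)) D w g H, Loc p β C τ e D w g H →
      q0 * R ^ (1 - β) ≤ w (R • e) → 1 / R ≤ ⟪g e, e⟫ := by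
  have hn0 : (0:ℝ) ≤ n := by positivity
  obtain ⟨R0, hR0, hR⟩ := small_rpow_neg (k := 1 - β) (by linarith) (2 * C + 4) hq0
  set R := max 8 R0 with hRd
  have hR8 : 8 ≤ R := le_max_left _ _
  have hRpos : 0 < R := by linarith
  have hR1 : 2 * C + 4 ≤ q0 * R ^ (1 - β) := by
    have := hR R (le_max_right _ _)
    rw [Real.rpow_neg hRpos.le] at this
    have h1 : 0 < R ^ (1 - β) := by positivity
    rwa [← div_eq_mul_inv, div_le_iff₀ h1] at this
  refine ⟨R, hR8, ?_⟩
  set F := 1 + (2 * C) ^ p with hF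
  have hF1 : 1 ≤ F := by
    have : 0 ≤ (2 * C) ^ p := by positivity
    linarith
  have hF0 : 0 < F := by linarith
  set Z := p * (2 * C + (24 * n + 60) * F) ^ (p - 1) with hZ
  have hZ0 : 0 ≤ Z := by positivity
  set r := min (1 / 2) (min (1 / (Z + 1)) (1 / (R * (25 * (n + 1) * F)))) with hr
  have hr0 : 0 < r := by positivity
  have hr2 : r ≤ 1 / 2 := min_le_left _ _
  have hrZ : Z * r ≤ 1 := by
    have : r ≤ 1 / (Z + 1) := (min_le_right _ _).trans (min_le_left _ _)
    rw [le_div_iff₀ (by positivity)] at this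
    nlinarith
  have hrR : 25 * (n + 1) * F * r ≤ 1 / R := by
    have : r ≤ 1 / (R * (25 * (n + 1) * F)) := (min_le_right _ _).trans (min_le_right _ _)
    rw [le_div_iff₀ (by positivity)] at this
    rw [le_div_iff₀ (by positivity)]; linarith
  have hγ : ∀ s : ℝ, 1 / 2 ≤ s → C * s ^ (-β) ≤ 2 * C := by
    intro s hs
    have : s ^ (-β) ≤ 2 := by
      calc s ^ (-β) ≤ (1 / 2 : ℝ) ^ (-β) := Real.rpow_le_rpow_of_nonpos (by norm_num) hs (by linarith)
        _ = 2 ^ β := by rw [Real.rpow_neg (by norm_num), one_div, Real.inv_rpow (by norm_num), inv_inv]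
        _ ≤ 2 ^ (1:ℝ) := Real.rpow_le_rpow_of_exponent_le (by norm_num) hβ1.le
        _ = 2 := by norm_num
    nlinarith
  have hCF : (C * (1 - r) ^ (-β)) ^ p ≤ 2 * F := by
    have h0 : 0 ≤ (1 - r) := by linarith
    have : (C * (1 - r) ^ (-β)) ^ p ≤ (2 * C) ^ p :=
      Real.rpow_le_rpow (by positivity) (hγ (1 - r) (by linarith)) (by linarith)
    have : 0 ≤ (2 * C) ^ p := by positivity
    linarith
  set ε := F * r ^ 2 / 2 with hε
  have hε0 : 0 < ε := by positivity
  obtain ⟨τ1, hτ1, h1⟩ := interp (n := n) hp hβ0 hβ1 hC (s1 := 1 - r) (s2 := R) (F := 0) (ε := ε) (X := 2) (by linarith)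
    (by linarith) le_rfl hε0 (by norm_num) (σ := -1) (Or.inl rfl)
  obtain ⟨τ2, hτ2, h2⟩ := interp (n := n) hp hβ0 hβ1 hC (s1 := 1 - r) (s2 := 1 + r) (F := F) (ε := ε) (X := 2) (by linarith)
    (by linarith) hF0.le hε0 (by norm_num) (σ := -1) (Or.inl rfl)
  obtain ⟨τ3, hτ3, h3⟩ := interp (n := n) hp hβ0 hβ1 hC (s1 := 1 - r) (s2 := 1 + r) (F := F) (ε := ε) (X := 2) (by linarith)
    (by linarith) hF0.le hε0 (by norm_num) (σ := 1) (Or.inr ⟨rfl, hCF⟩)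
  refine ⟨min (min τ1 τ2) (min τ3 (1 / 10)), by positivity, fun τ hτ hττ e D w g H hloc hwR => ?_⟩
  simp only [le_min_iff] at hττ
  obtain ⟨⟨t1, t2⟩, t3, t4⟩ := hττ
  have h1 := h1 τ hτ t1 e D w g H hloc
  have h2 := h2 τ hτ t2 e D w g H hloc
  have h3 := h3 τ hτ t3 e D w g H hloc
  clear_value F R r ε Z
  have hee : ⟪e, e⟫ = 1 := by rw [real_inner_self_eq_norm_sq, hloc.e1]; norm_num
  have hball : ∀ x ∈ closedBall e r, ‖x‖ ≤ 3 / 2 ∧ 1 - r ≤ ⟪e, x⟫ ∧ ⟪e, x⟫ ≤ 1 + r ∧ x ∈ D ∧ ‖g x‖ ≤ 2 * C := by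
    intro x hx
    rw [mem_closedBall, dist_eq_norm] at hx
    have c1 : ‖x‖ ≤ 3 / 2 := by
      have : x = e + (x - e) := by abel
      rw [this]
      refine (norm_add_le _ _).trans ?_
      rw [hloc.e1]; linarith
    have c2 : |⟪e, x⟫ - 1| ≤ r := by
      have : ⟪e, x⟫ - 1 = ⟪e, x - e⟫ := by rw [inner_sub_right, hee]
      rw [this]
      refine (abs_real_inner_le_norm _ _).trans ?_
      rw [hloc.e1, one_mul]; exact hx
    rw [abs_le] at c2
    have c3 := hloc.inr hτ c1 (s := 1 / 2) (by linarith) (by linarith) (by linarith)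
    exact ⟨c1, by linarith, by linarith, c3.2.2.1, c3.2.2.2.trans (hγ _ (by linarith))⟩
  have hm1 : (1 - r) • e ∈ closedBall e r := by
    rw [mem_closedBall, dist_eq_norm, sub_smul, one_smul, sub_sub_cancel_left, norm_neg, norm_smul, hloc.e1,
      Real.norm_of_nonneg hr0.le, mul_one]
  have hm2 : (1 + r) • e ∈ closedBall e r := by
    rw [mem_closedBall, dist_eq_norm, add_smul, one_smul, add_sub_cancel_left, norm_smul, hloc.e1,
      Real.norm_of_nonneg hr0.le, mul_one]
  set v1 := w ((1 - r) • e) with hv1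
  set v2 := w ((1 + r) • e) with hv2
  set z := (v2 - v1) / (1 + r - (1 - r)) with hz
  have hzr : z * (2 * r) = v2 - v1 := by
    rw [hz, show 1 + r - (1 - r) = 2 * r by ring, div_mul_cancel₀ _ (by positivity)]
  -- slope bound from above
  have hz2 : |z| ≤ 2 * C := by
    have := (convex_closedBall e r).norm_image_sub_le_of_norm_hasFDerivWithin_le (f := w)
          (f' := fun z => (InnerProductSpace.toDual ℝ _) (g z)) (C := 2 * C) ?_ ?_ hm1 hm2
    · rw [← sub_smul, norm_smul, hloc.e1, Real.norm_eq_abs, ← hv1, ← hv2, ← hzr, Real.norm_eq_abs, abs_mul,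
        show 1 + r - (1 - r) = 2 * r by ring, mul_one, abs_of_pos (show 0 < 2 * r by linarith)] at this
      exact le_of_mul_le_mul_right this (by linarith)
    · intro x hx
      exact (hasGradientAt_iff_hasFDerivAt.1 (hloc.sol x (hball x hx).2.2.2.1).1).hasFDerivWithinAt
    · intro x hx
      simpa using (hball x hx).2.2.2.2
  -- slope bound from below
  have hv1b : v1 ≤ 2 * C := by
    obtain ⟨c1, c2, c3, c4, c5⟩ := hball _ hm1
    have c3 := hloc.inr hτ c1 (s := 1 / 2) (by linarith) (by linarith) (by linarith)
    have c6 := hloc.wb hτ hC hβ1 c3.1 c3.2.1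
    rw [inner_smul_self' hloc.e1] at c6
    have : (2 * (1 - r)) ^ (1 - β) ≤ 2 := by
      have h01 : (0:ℝ) ≤ 2 * (1 - r) := by linarith
      calc (2 * (1 - r)) ^ (1 - β) ≤ 2 ^ (1 - β) := by
            gcongr
            linarith
        _ ≤ 2 ^ (1:ℝ) := Real.rpow_le_rpow_of_exponent_le (by norm_num) (by linarith)
        _ = 2 := by norm_num
    have := le_abs_self v1
    nlinarith
  have hz3 : 4 / R - F * r / 2 ≤ z := by
    have c := h1 ((1 + r) • e) (by rw [inner_smul_self' hloc.e1]; linarith) (by rw [inner_smul_self' hloc.e1]; linarith)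
      ((hball _ hm2).1.trans (by norm_num))
    rw [inner_smul_self' hloc.e1, ← hv2] at c
    have c2 : 4 / R ≤ (w (R • e) - v1) / (R - (1 - r)) := by
      rw [div_le_div_iff₀ hRpos (by linarith)]
      have : 4 ≤ w (R • e) - v1 := by linarith
      nlinarith
    have c3 : 4 / R * (2 * r) ≤ (w (R • e) - v1) / (R - (1 - r)) * (1 + r - (1 - r)) := by
      rw [show 1 + r - (1 - r) = 2 * r by ring]
      gcongr
    have c4 : (4 / R - F * r / 2) * (2 * r) ≤ z * (2 * r) := by
      rw [hzr, sub_mul]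
      have : F * r / 2 * (2 * r) = 2 * ε := by rw [hε]; ring
      linarith
    exact le_of_mul_le_mul_right c4 (by linarith)
  have hrn : ‖r‖ = r := Real.norm_of_nonneg hr0.le
  have key := gradEst (w := w) (g := g) (H := H) (x0 := e) (ζ := z • e) (p := p) (r := r) (W := 2 * F * r ^ 2)
    (c := v1 + z * r) (μ := τ) (by linarith) hr0 (by positivity) ?_ ?_ ?_ ?_
  · have e1 : 12 * ((n:ℝ) + 1) * (2 * F * r ^ 2) / r = 24 * (n + 1) * F * r := by
      field_simp; ring
    rw [e1] at key
    have e2 : ⟪g e, e⟫ = z + ⟪g e - z • e, e⟫ := by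
      rw [inner_sub_left, real_inner_smul_left, hee]; ring
    have e3 : |⟪g e - z • e, e⟫| ≤ 24 * (n + 1) * F * r := by
      refine (abs_real_inner_le_norm _ _).trans ?_
      rw [hloc.e1, mul_one]; exact key
    rw [abs_le] at e3
    rw [e2]
    have e4 : F * r / 2 ≤ (n + 1) * F * r := by
      have : 0 < F * r := by positivity
      nlinarith
    have e5 : 4 / R = 4 * (1 / R) := by ring
    have e6 : 0 < 1 / R := by positivity
    linarith [e3.1]
  · intro x hx
    exact hloc.sol x (hball x hx).2.2.2.1
  · intro x hx
    obtain ⟨b1, b2, b3, b4, b5⟩ := hball x hx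
    have c1 := h2 x b2 b3 (by linarith)
    have c2 := h3 x b2 b3 (by linarith)
    have c3 : F * (⟪e, x⟫ - (1 - r)) * (1 + r - ⟪e, x⟫) ≤ F * r ^ 2 := by
      rw [mul_assoc]
      gcongr
      nlinarith [sq_nonneg (⟪e, x⟫ - 1)]
    have c4 : w x - (v1 + z * r) - ⟪z • e, x - e⟫ = w x - (v1 + z * (⟪e, x⟫ - (1 - r))) := by
      rw [real_inner_smul_left, inner_sub_right, hee]; ring
    rw [c4, abs_le]
    have c5 : 2 * ε = F * r ^ 2 := by rw [hε]; ring
    constructor <;> linarith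
  · have e1 : ‖z • e‖ + (12 * n + 30) * (2 * F * r ^ 2) / r ≤ 2 * C + (24 * n + 60) * F := by
      rw [norm_smul, hloc.e1, Real.norm_eq_abs, mul_one]
      have : (12 * (n:ℝ) + 30) * (2 * F * r ^ 2) / r = (24 * n + 60) * F * r := by
        field_simp; ring
      rw [this]
      have : (24 * (n:ℝ) + 60) * F * r ≤ (24 * n + 60) * F * 1 := by
        gcongr
        linarith
      linarith
    have h0 : 0 ≤ ‖z • e‖ + (12 * n + 30) * (2 * F * r ^ 2) / r := by positivity
    refine le_trans ?_ hrZ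
    rw [hZ]
    gcongr
    linarith
  · have : 0 < r ^ 2 := by positivity
    nlinarith

end

section
variable {n : ℕ} {Ω : Set (EuclideanSpace ℝ (Fin n))}

lemma precon_frontier {s : Set (EuclideanSpace ℝ (Fin n))} (hs : IsPreconnected s)
    (h1 : ∃ x, x ∈ s ∧ x ∈ Ω) (h2 : ∃ x, x ∈ s ∧ x ∉ Ω) : ∃ y, y ∈ s ∧ y ∈ frontier Ω := by
  by_contra hcon
  push Not at hcon
  have hin : ∀ x ∈ s, x ∈ Ω → x ∈ interior Ω := by
    intro x hx hxΩ
    by_contra h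
    exact hcon x hx ⟨subset_closure hxΩ, h⟩
  have hout : ∀ x ∈ s, x ∉ Ω → x ∈ (closure Ω)ᶜ := by
    intro x hx hxΩ h
    exact hcon x hx ⟨h, fun h' => hxΩ (interior_subset h')⟩
  obtain ⟨x, hx, hxΩ⟩ := h1
  obtain ⟨z, hz, hzΩ⟩ := h2
  obtain ⟨y, hy, hy1, hy2⟩ := hs (interior Ω) (closure Ω)ᶜ isOpen_interior isClosed_closure.isOpen_compl
    (fun w hw => by
      by_cases hwΩ : w ∈ Ω
      · exact Or.inl (hin w hw hwΩ)
      · exact Or.inr (hout w hw hwΩ)) ⟨x, hx, hin x hx hxΩ⟩ ⟨z, hz, hout z hz hzΩ⟩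
  exact hy2 (subset_closure (interior_subset hy1))

lemma ball_sub_of_infDist {c : EuclideanSpace ℝ (Fin n)} {s : ℝ} (hc : c ∈ Ω) (h : s ≤ infDist c (frontier Ω)) :
    ball c s ⊆ Ω := by
  rcases le_or_gt s 0 with hs | hs
  · rw [ball_eq_empty.2 hs]; exact empty_subset _
  by_contra hcon
  rw [not_subset] at hcon
  obtain ⟨z, hz, hzΩ⟩ := hcon
  obtain ⟨y, hy, hyf⟩ := precon_frontier (Ω := Ω) (convex_ball c s).isPreconnected
    ⟨c, mem_ball_self hs, hc⟩ ⟨z, hz, hzΩ⟩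
  have h1 := infDist_le_dist_of_mem (x := c) hyf
  rw [mem_ball'] at hy
  linarith

lemma le_infDist_of_ball {x : EuclideanSpace ℝ (Fin n)} {s : ℝ} (hΩ : IsOpen Ω) (hne : (frontier Ω).Nonempty)
    (h : ball x s ⊆ Ω) : s ≤ infDist x (frontier Ω) := by
  rw [le_infDist hne]
  intro y hy
  by_contra hc
  have : y ∈ Ω := h (by rw [mem_ball']; exact not_le.1 hc)
  rw [hΩ.frontier_eq] at hy
  exact hy.2 this

lemma mem_of_inner {δ₀ : ℝ} (hδ₀ : 0 < δ₀) {b e : EuclideanSpace ℝ (Fin n)} (he : ‖e‖ = 1)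
    (hs : ∀ s ∈ Ioo (0:ℝ) δ₀, b + s • e ∈ Ω ∧ infDist (b + s • e) (frontier Ω) = s)
    {x : EuclideanSpace ℝ (Fin n)} (hx : ‖x - b‖ ^ 2 / δ₀ < ⟪e, x - b⟫) : x ∈ Ω := by
  obtain ⟨h1, h2⟩ := hs (δ₀ / 2) ⟨by linarith, by linarith⟩
  refine ball_sub_of_infDist h1 h2.ge ?_
  rw [mem_ball, dist_eq_norm]
  refine lt_of_pow_lt_pow_left₀ 2 (by positivity) ?_
  have : x - (b + (δ₀ / 2) • e) = (x - b) - (δ₀ / 2) • e := by abel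
  rw [this, norm_sub_sq_real, inner_smul_right, real_inner_comm, norm_smul, he, Real.norm_of_nonneg (by linarith)]
  rw [div_lt_iff₀ hδ₀] at hx
  nlinarith

lemma infDist_lower {δ₀ : ℝ} (hδ₀ : 0 < δ₀) (hΩ : IsOpen Ω) {b e : EuclideanSpace ℝ (Fin n)} (he : ‖e‖ = 1)
    (hb : b ∈ frontier Ω)
    (hs : ∀ s ∈ Ioo (0:ℝ) δ₀, b + s • e ∈ Ω ∧ infDist (b + s • e) (frontier Ω) = s)
    {x : EuclideanSpace ℝ (Fin n)} (hx0 : 0 < ⟪e, x - b⟫) (hx : 5 * ‖x - b‖ ^ 2 / δ₀ ≤ ⟪e, x - b⟫) :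
    x ∈ Ω ∧ ⟪e, x - b⟫ / 2 ≤ infDist x (frontier Ω) := by
  have hsub : ball x (⟪e, x - b⟫ / 2) ⊆ Ω := by
    intro z hz
    rw [mem_ball, dist_eq_norm] at hz
    refine mem_of_inner hδ₀ he hs ?_
    have hyn : ⟪e, x - b⟫ ≤ ‖x - b‖ := by
      have := real_inner_le_norm e (x - b); rwa [he, one_mul] at this
    have h1 : ‖z - b‖ ≤ 3 / 2 * ‖x - b‖ := by
      have : z - b = (z - x) + (x - b) := by abel
      rw [this]; refine (norm_add_le _ _).trans (by linarith)
    have h2 : ⟪e, x - b⟫ / 2 < ⟪e, z - b⟫ := by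
      have e1 : ⟪e, z - b⟫ = ⟪e, z - x⟫ + ⟪e, x - b⟫ := by rw [← inner_add_right]; congr 1; abel
      have e2 := abs_real_inner_le_norm e (z - x)
      rw [he, one_mul, abs_le] at e2
      linarith [e2.1]
    refine lt_of_le_of_lt ?_ h2
    rw [div_le_iff₀ hδ₀] at hx ⊢
    have : ‖z - b‖ ^ 2 ≤ (3 / 2 * ‖x - b‖) ^ 2 := by gcongr
    nlinarith [sq_nonneg ‖x - b‖]
  exact ⟨hsub (mem_ball_self (by linarith)), le_infDist_of_ball hΩ ⟨b, hb⟩ hsub⟩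

/-- local geometry near a boundary point -/
lemma geo (hΩ : IsOpen Ω) {δ₀ : ℝ} (hδ₀ : 0 < δ₀) {ν : EuclideanSpace ℝ (Fin n) → EuclideanSpace ℝ (Fin n)}
    (hν : ∀ b ∈ frontier Ω, ‖ν b‖ = 1 ∧
      ∀ s ∈ Ioo (0 : ℝ) δ₀, b + s • ν b ∈ Ω ∧ infDist (b + s • ν b) (frontier Ω) = s)
    {a : EuclideanSpace ℝ (Fin n)} (ha : a ∈ frontier Ω)
    {f : EuclideanSpace ℝ (Fin n) → ℝ} {U : Set (EuclideanSpace ℝ (Fin n))} (hU : U ∈ nhds a)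
    (hf : ContDiffOn ℝ 2 f U) (hf0 : ∀ y ∈ U, fderiv ℝ f y ≠ 0)
    (h1 : U ∩ Ω = U ∩ {y | f y < 0}) (h2 : U ∩ frontier Ω = U ∩ {y | f y = 0}) :
    ∃ ρ > 0, ∃ Cg : ℝ, 0 < Cg ∧ ∀ b ∈ frontier Ω, dist b a < ρ → ‖ν b - ν a‖ ≤ Cg * ‖b - a‖ ∧
      ∀ x ∈ closure Ω, dist x b < ρ → -(Cg * ‖x - b‖ ^ 2) ≤ ⟪ν b, x - b⟫ ∧
        (x ∈ Ω → infDist x (frontier Ω) ≤ |⟪ν b, x - b⟫| + Cg * ‖x - b‖ ^ 2) := by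
  have hfa : ContDiffAt ℝ 2 f a := hf.contDiffAt hU
  have hfd : ContDiffAt ℝ 1 (fderiv ℝ f) a := hfa.fderiv_right (by norm_num)
  obtain ⟨Kl, V, hV, hLip⟩ := hfd.exists_lipschitzOnWith
  have hc0 : 0 < ‖fderiv ℝ f a‖ := norm_pos_iff.2 (hf0 a (mem_of_mem_nhds hU))
  set c0 := ‖fderiv ℝ f a‖ / 2 with hc0d
  have hc00 : 0 < c0 := by positivity
  have hcn : ∀ᶠ z in nhds a, c0 < ‖fderiv ℝ f z‖ :=
    hfd.continuousAt.norm.eventually (lt_mem_nhds (by rw [hc0d]; linarith))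
  obtain ⟨ρ, hρ, hρb⟩ := Metric.eventually_nhds_iff_ball.1 ((hcn.and (eventually_mem_nhds_iff.2 hU)).and hV)
  have hUb : ∀ z ∈ ball a ρ, z ∈ U := fun z hz => mem_of_mem_nhds (hρb z hz).1.2
  have hdiff : ∀ z ∈ ball a ρ, HasFDerivAt f (fderiv ℝ f z) z := fun z hz =>
    ((hf.contDiffAt (hρb z hz).1.2).differentiableAt (by norm_num)).hasFDerivAt
  set m : EuclideanSpace ℝ (Fin n) → EuclideanSpace ℝ (Fin n) :=
    fun z => -((InnerProductSpace.toDual ℝ _).symm (fderiv ℝ f z)) with hm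
  have hmi : ∀ z v, fderiv ℝ f z v = -⟪m z, v⟫ := by
    intro z v
    rw [hm, inner_neg_left, neg_neg, InnerProductSpace.toDual_symm_apply]
  have hmn : ∀ z, ‖m z‖ = ‖fderiv ℝ f z‖ := fun z => by simp [hm]
  have hmL : ∀ z ∈ ball a ρ, ∀ z' ∈ ball a ρ, ‖m z - m z'‖ ≤ Kl * ‖z - z'‖ := by
    intro z hz z' hz'
    have := hLip.dist_le_mul z (hρb z hz).2 z' (hρb z' hz').2
    rw [dist_eq_norm, dist_eq_norm] at this
    have e1 : m z - m z' = -((InnerProductSpace.toDual ℝ _).symm (fderiv ℝ f z - fderiv ℝ f z')) := by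
      simp only [hm, map_sub]; abel
    rw [e1, norm_neg, LinearIsometryEquiv.norm_map]; exact this
  -- direction
  have hdir : ∀ b ∈ frontier Ω, b ∈ ball a ρ → m b = ‖m b‖ • ν b := by
    intro b hb hba
    obtain ⟨hn1, hns⟩ := hν b hb
    have hfb : f b = 0 := by
      have : b ∈ U ∩ {y | f y = 0} := by rw [← h2]; exact ⟨hUb b hba, hb⟩
      exact this.2
    have hpos : ∀ v : EuclideanSpace ℝ (Fin n), 0 < ⟪ν b, v⟫ → 0 ≤ ⟪m b, v⟫ := by
      intro v hv
      by_contra hcon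
      push Not at hcon
      have hd : HasDerivAt (fun τ : ℝ => f (b + τ • v)) (-⟪m b, v⟫) 0 := by
        have h := (hdiff b hba)
        have hl : HasDerivAt (fun τ : ℝ => b + τ • v) v 0 := by
          have := ((hasDerivAt_id (0:ℝ)).smul_const v).const_add b
          simpa using this
        have h' : HasFDerivAt f (fderiv ℝ f b) (b + (0:ℝ) • v) := by simpa using h
        have := h'.comp_hasDerivAt (0:ℝ) hl
        rw [hmi] at this
        exact this
      have ev1 := ev_gt hd (by linarith)
      have tend : Tendsto (fun τ : ℝ => b + τ • v) (nhds 0) (nhds b) := by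
        have : Continuous (fun τ : ℝ => b + τ • v) := by fun_prop
        simpa using this.tendsto 0
      have ev2 : ∀ᶠ τ in nhdsWithin (0:ℝ) (Ioi 0), b + τ • v ∈ ball a ρ :=
        (tend.eventually (isOpen_ball.mem_nhds hba)).filter_mono nhdsWithin_le_nhds
      have ev3 : ∀ᶠ τ in nhdsWithin (0:ℝ) (Ioi 0), τ ∈ Ioi (0:ℝ) := self_mem_nhdsWithin
      have ev4 : ∀ᶠ τ in nhdsWithin (0:ℝ) (Ioi 0), τ * (‖v‖ ^ 2 / δ₀) < ⟪ν b, v⟫ := by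
        have : Tendsto (fun τ : ℝ => τ * (‖v‖ ^ 2 / δ₀)) (nhds 0) (nhds 0) := by
          have : Continuous (fun τ : ℝ => τ * (‖v‖ ^ 2 / δ₀)) := by fun_prop
          simpa using this.tendsto 0
        exact (this.eventually (gt_mem_nhds hv)).filter_mono nhdsWithin_le_nhds
      obtain ⟨τ, q1, q2, q3, q4⟩ := (ev1.and (ev2.and (ev3.and ev4))).exists
      have q3 : 0 < τ := q3
      have : b + τ • v ∈ Ω := by
        refine mem_of_inner hδ₀ hn1 hns ?_
        rw [add_sub_cancel_left, norm_smul, inner_smul_right, Real.norm_of_nonneg q3.le]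
        calc (τ * ‖v‖) ^ 2 / δ₀ = τ * (τ * (‖v‖ ^ 2 / δ₀)) := by ring
          _ < τ * ⟪ν b, v⟫ := by gcongr
      have : b + τ • v ∈ U ∩ {y | f y < 0} := by rw [← h1]; exact ⟨hUb _ q2, this⟩
      have : f (b + τ • v) < 0 := this.2
      simp only [zero_smul, add_zero, hfb] at q1
      linarith
    have hle : ‖m b‖ * ‖ν b‖ ≤ ⟪m b, ν b⟫ := by
      rw [hn1, mul_one]
      have hcs := real_inner_le_norm (m b) (ν b)
      rw [hn1, mul_one] at hcs
      have hmpos : 0 < ‖m b‖ := by rw [hmn]; exact hc00.trans (hρb b hba).1.1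
      have hκ : ∀ κ > 0, ‖m b‖ ^ 2 ≤ (‖m b‖ + κ) * ⟪m b, ν b⟫ := by
        intro κ hκ
        have := hpos ((‖m b‖ + κ) • ν b - m b) (by
          rw [inner_sub_right, inner_smul_right, real_inner_self_eq_norm_sq, hn1, real_inner_comm]; linarith)
        rw [inner_sub_right, inner_smul_right, real_inner_self_eq_norm_sq] at this
        linarith
      have h3 : ‖m b‖ ^ 2 ≤ ‖m b‖ * ⟪m b, ν b⟫ := by
        refine le_of_forall_pos_le_add fun ε hε => ?_
        have := hκ (ε / ‖m b‖) (by positivity)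
        have h4 : ε / ‖m b‖ * ⟪m b, ν b⟫ ≤ ε / ‖m b‖ * ‖m b‖ := by gcongr
        rw [div_mul_cancel₀ _ hmpos.ne'] at h4
        linarith
      rw [sq] at h3
      exact le_of_mul_le_mul_left h3 hmpos
    have heq := le_antisymm (real_inner_le_norm (m b) (ν b)) hle
    rw [inner_eq_norm_mul_iff_real, hn1, one_smul] at heq
    exact heq
  set Cg := Kl / c0 with hCg
  have hCg0 : 0 ≤ Cg := by positivity
  have hCgc : Kl = Cg * c0 := by rw [hCg]; field_simp
  have htay : ∀ b ∈ frontier Ω, b ∈ ball a ρ → ∀ x ∈ closure Ω, x ∈ ball a ρ → -(Cg * ‖x - b‖ ^ 2) ≤ ⟪ν b, x - b⟫ := by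
    intro b hb hba x hx hxa
    have hfb : f b = 0 := by
      have : b ∈ U ∩ {y | f y = 0} := by rw [← h2]; exact ⟨hUb b hba, hb⟩
      exact this.2
    have hfx : f x ≤ 0 := by
      by_cases hxΩ : x ∈ Ω
      · have : x ∈ U ∩ {y | f y < 0} := by rw [← h1]; exact ⟨hUb x hxa, hxΩ⟩
        exact le_of_lt this.2
      · have hxf : x ∈ frontier Ω := by rw [hΩ.frontier_eq]; exact ⟨hx, hxΩ⟩
        have : x ∈ U ∩ {y | f y = 0} := by rw [← h2]; exact ⟨hUb x hxa, hxf⟩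
        exact le_of_eq this.2
    have hconv : Convex ℝ (ball a ρ ∩ closedBall b ‖x - b‖) := (convex_ball _ _).inter (convex_closedBall _ _)
    have := hconv.norm_image_sub_le_of_norm_hasFDerivWithin_le' (f := f) (f' := fun z => fderiv ℝ f z) (φ := fderiv ℝ f b)
      (C := Kl * ‖x - b‖) (x := b) (y := x) (fun z hz => (hdiff z hz.1).hasFDerivWithinAt) ?_ ⟨hba, by simp⟩
      ⟨hxa, by rw [mem_closedBall, dist_eq_norm]⟩
    · rw [hfb, hmi, Real.norm_eq_abs, abs_le] at this
      have hmb := hdir b hb hba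
      have h5 : ⟪m b, x - b⟫ = ‖m b‖ * ⟪ν b, x - b⟫ := by
        conv_lhs => rw [hmb]
        rw [real_inner_smul_left]
      rw [h5] at this
      have h6 : -(Kl * ‖x - b‖ * ‖x - b‖) ≤ ‖m b‖ * ⟪ν b, x - b⟫ := by linarith [this.1]
      have h7 : c0 < ‖m b‖ := by rw [hmn]; exact (hρb b hba).1.1
      by_contra hcon
      push Not at hcon
      have h8 : 0 ≤ Cg * ‖x - b‖ ^ 2 := by positivity
      rw [hCgc] at h6
      nlinarith
    · intro z hz
      have := hLip.dist_le_mul z (hρb z hz.1).2 b (hρb b hba).2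
      rw [dist_eq_norm] at this
      refine this.trans ?_
      gcongr
      exact hz.2
  set r := min (ρ / 4) (1 / (10 * Cg + 1)) with hr
  have hr0 : 0 < r := by positivity
  have hr4 : r ≤ ρ / 4 := min_le_left _ _
  have hrC : (10 * Cg + 1) * r ≤ 1 := by
    have : r ≤ 1 / (10 * Cg + 1) := min_le_right _ _
    rw [le_div_iff₀ (by positivity)] at this
    linarith
  refine ⟨r, hr0, 10 * Cg + 1, by positivity, fun b hb hba => ?_⟩
  have hba' : b ∈ ball a ρ := by rw [mem_ball]; linarith
  have haa : a ∈ ball a ρ := mem_ball_self hρ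
  refine ⟨?_, fun x hx hxb => ?_⟩
  · have e1 : ‖m a‖ • (ν b - ν a) = (‖m a‖ - ‖m b‖) • ν b + (m b - m a) := by
      rw [smul_sub, sub_smul, ← hdir b hb hba', ← hdir a ha haa]
      abel
    have e2 : ‖m a‖ * ‖ν b - ν a‖ ≤ 2 * (Kl * ‖b - a‖) := by
      calc ‖m a‖ * ‖ν b - ν a‖ = ‖‖m a‖ • (ν b - ν a)‖ := by rw [norm_smul, norm_norm]
        _ ≤ |‖m a‖ - ‖m b‖| + ‖m b - m a‖ := by
            rw [e1]; refine (norm_add_le _ _).trans ?_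
            rw [norm_smul, (hν b hb).1, mul_one, Real.norm_eq_abs]
        _ ≤ ‖m b - m a‖ + ‖m b - m a‖ := by
            gcongr
            rw [abs_sub_comm]; exact abs_norm_sub_norm_le _ _
        _ ≤ 2 * (Kl * ‖b - a‖) := by have := hmL b hba' a haa; linarith
    have h7 : c0 < ‖m a‖ := by rw [hmn]; exact (hρb a haa).1.1
    have e3 : c0 * ‖ν b - ν a‖ ≤ c0 * (2 * Cg * ‖b - a‖) := by
      calc c0 * ‖ν b - ν a‖ ≤ ‖m a‖ * ‖ν b - ν a‖ := by gcongr
        _ ≤ _ := e2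
        _ = _ := by rw [hCgc]; ring
    have e4 := le_of_mul_le_mul_left e3 hc00
    have : 0 ≤ (8 * Cg + 1) * ‖b - a‖ := by positivity
    linarith
  · have hxa : dist x a < 2 * r := (dist_triangle x b a).trans_lt (by linarith)
    have hxa' : x ∈ ball a ρ := by rw [mem_ball]; linarith
    have t1 := htay b hb hba' x hx hxa'
    refine ⟨?_, fun hxΩ => ?_⟩
    · have : 0 ≤ (9 * Cg + 1) * ‖x - b‖ ^ 2 := by positivity
      linarith
    set y := ⟪ν b, x - b⟫ with hy
    set T := |y| + (10 * Cg + 1) * ‖x - b‖ ^ 2 with hT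
    have hn1 := (hν b hb).1
    have hxbn : 0 < ‖x - b‖ := by
      rw [norm_pos_iff, sub_ne_zero]
      rintro rfl
      rw [hΩ.frontier_eq] at hb
      exact hb.2 hxΩ
    have hT0 : 0 ≤ T := by positivity
    rw [dist_eq_norm] at hxb
    have hT2 : T ≤ 2 * ‖x - b‖ := by
      have k1 : |y| ≤ ‖x - b‖ := by
        have := abs_real_inner_le_norm (ν b) (x - b); rwa [hn1, one_mul] at this
      have k2 : (10 * Cg + 1) * ‖x - b‖ ≤ 1 := le_trans (by gcongr) hrC
      have k3 : (10 * Cg + 1) * ‖x - b‖ * ‖x - b‖ ≤ 1 * ‖x - b‖ := by gcongr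
      rw [hT]; nlinarith
    have hTn : ‖T • ν b‖ = T := by rw [norm_smul, hn1, mul_one, Real.norm_of_nonneg hT0]
    have hz : x - T • ν b ∉ Ω := by
      intro hz
      have := htay b hb hba' (x - T • ν b) (subset_closure hz) (by
        rw [mem_ball]
        have : dist (x - T • ν b) x = T := by
          rw [dist_eq_norm, sub_sub_cancel_left, norm_neg, hTn]
        have := dist_triangle (x - T • ν b) x a
        linarith)
      have k1 : x - T • ν b - b = (x - b) - T • ν b := by abel
      rw [k1, inner_sub_right, inner_smul_right, real_inner_self_eq_norm_sq, hn1, ← hy] at this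
      have k2 : ‖x - b - T • ν b‖ ≤ 3 * ‖x - b‖ := (norm_sub_le _ _).trans (by rw [hTn]; linarith)
      have k3 : Cg * ‖x - b - T • ν b‖ ^ 2 ≤ Cg * (3 * ‖x - b‖) ^ 2 := by gcongr
      have k4 := le_abs_self y
      have k5 : 0 < ‖x - b‖ ^ 2 := by positivity
      have k6 : 0 ≤ Cg * ‖x - b‖ ^ 2 := by positivity
      rw [hT] at this
      nlinarith
    obtain ⟨v, hv, hvf⟩ := precon_frontier (Ω := Ω) (convex_segment (𝕜 := ℝ) x (x - T • ν b)).isPreconnected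
      ⟨x, left_mem_segment _ _ _, hxΩ⟩ ⟨_, right_mem_segment _ _ _, hz⟩
    refine (infDist_le_dist_of_mem hvf).trans ?_
    have : segment ℝ x (x - T • ν b) ⊆ closedBall x T := by
      refine (convex_closedBall x T).segment_subset (mem_closedBall_self hT0) ?_
      rw [mem_closedBall, dist_eq_norm, sub_sub_cancel_left, norm_neg, hTn]
    have := this hv
    rwa [mem_closedBall'] at this

end

section
variable {n : ℕ} {Ω : Set (EuclideanSpace ℝ (Fin n))}

lemma foot {x b e : EuclideanSpace ℝ (Fin n)} (hg : HasGradientAt (fun y => infDist y (frontier Ω)) e x)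
    (hb : b ∈ frontier Ω) (hd : dist x b = infDist x (frontier Ω)) (he : ‖e‖ = 1) :
    x = b + infDist x (frontier Ω) • e := by
  have hl : HasDerivAt (fun s : ℝ => x + s • (b - x)) (b - x) 0 := by
    have := ((hasDerivAt_id (0:ℝ)).smul_const (b - x)).const_add x
    simpa using this
  have hg' : HasFDerivAt (fun y => infDist y (frontier Ω)) (InnerProductSpace.toDual ℝ _ e) (x + (0:ℝ) • (b - x)) := by
    simpa using hg.hasFDerivAt
  have h1 := hg'.comp_hasDerivAt (0:ℝ) hl
  rw [InnerProductSpace.toDual_apply_apply] at h1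
  have h2 : HasDerivAt (fun s : ℝ => infDist (x + s • (b - x)) (frontier Ω) + s * dist x b)
      (⟪e, b - x⟫ + 1 * dist x b) 0 := h1.add ((hasDerivAt_id (0:ℝ)).mul_const (dist x b))
  have h3 : ⟪e, b - x⟫ + 1 * dist x b ≤ 0 := by
    by_contra hcon
    push Not at hcon
    have ev := ev_gt h2 hcon
    have ev1 : ∀ᶠ s in nhdsWithin (0:ℝ) (Ioi 0), s ∈ Ioi (0:ℝ) := self_mem_nhdsWithin
    have ev2 : ∀ᶠ s in nhdsWithin (0:ℝ) (Ioi 0), s < 1 :=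
      Filter.Eventually.filter_mono nhdsWithin_le_nhds (gt_mem_nhds one_pos)
    obtain ⟨s, q1, q2, q3⟩ := (ev.and (ev1.and ev2)).exists
    have q2 : 0 < s := q2
    have h4 := infDist_le_dist_of_mem (x := x + s • (b - x)) hb
    have h5 : dist (x + s • (b - x)) b = (1 - s) * dist x b := by
      have : x + s • (b - x) - b = (1 - s) • (x - b) := by module
      rw [dist_eq_norm, this, norm_smul, Real.norm_of_nonneg (by linarith), dist_eq_norm]
    simp only [zero_smul, add_zero, zero_mul] at q1
    rw [← hd] at q1
    nlinarith
  have h4 : ⟪e, b - x⟫ = -⟪x - b, e⟫ := by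
    rw [real_inner_comm, ← inner_neg_left]; congr 1; abel
  rw [h4, one_mul, dist_eq_norm] at h3
  have h5 : ⟪x - b, e⟫ = ‖x - b‖ * ‖e‖ := le_antisymm (real_inner_le_norm _ _) (by rw [he]; linarith)
  rw [inner_eq_norm_mul_iff_real, he, one_smul] at h5
  rw [← hd, dist_eq_norm, ← h5]; abel

/-- one time slice of the solution -/
structure Slice (Ω : Set (EuclideanSpace ℝ (Fin n))) (p β C₀ M : ℝ) (v : EuclideanSpace ℝ (Fin n) → ℝ)
    (g : EuclideanSpace ℝ (Fin n) → EuclideanSpace ℝ (Fin n))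
    (H : EuclideanSpace ℝ (Fin n) → (EuclideanSpace ℝ (Fin n) →L[ℝ] EuclideanSpace ℝ (Fin n))) : Prop where
  vc : ContinuousOn v (closure Ω)
  v0 : ∀ x ∈ frontier Ω, v x = 0
  sol : ∀ x ∈ Ω, HasGradientAt v (g x) x ∧ HasFDerivAt g (H x) x ∧ |tr (H x) + ‖g x‖ ^ p| ≤ M
  gb : ∀ x ∈ Ω, ‖g x‖ ≤ C₀ * ((infDist x (frontier Ω)) ^ (-β) + 1)

lemma ray_bd {β C₀ δ₀ : ℝ} (hβ0 : 0 < β) (hβ1 : β < 1) (hC : 0 ≤ C₀) {v : EuclideanSpace ℝ (Fin n) → ℝ}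
    {g : EuclideanSpace ℝ (Fin n) → EuclideanSpace ℝ (Fin n)} (vc : ContinuousOn v (closure Ω))
    (hg : ∀ x ∈ Ω, HasGradientAt v (g x) x)
    (gb : ∀ x ∈ Ω, ‖g x‖ ≤ C₀ * ((infDist x (frontier Ω)) ^ (-β) + 1))
    {b e : EuclideanSpace ℝ (Fin n)} (hb : b ∈ frontier Ω) (hv0 : v b = 0) (he : ‖e‖ = 1)
    (hs : ∀ s ∈ Ioo (0:ℝ) δ₀, b + s • e ∈ Ω ∧ infDist (b + s • e) (frontier Ω) = s)
    {d : ℝ} (hd : 0 < d) (hd1 : d < δ₀) (hd2 : d ≤ 1) : v (b + d • e) ≤ 2 * C₀ / (1 - β) * d ^ (1 - β) := by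
  have hcl : ∀ s ∈ Icc 0 d, b + s • e ∈ closure Ω := by
    intro s hs'
    rcases hs'.1.eq_or_lt with h | h
    · rw [← h]; simpa using frontier_subset_closure hb
    · exact subset_closure (hs s ⟨h, by linarith [hs'.2]⟩).1
  have hc : ContinuousOn (fun s : ℝ => 2 * C₀ / (1 - β) * s ^ (1 - β) - v (b + s • e)) (Icc 0 d) := by
    refine ContinuousOn.sub ?_ ?_
    · exact (continuous_const.mul (Real.continuous_rpow_const (by linarith))).continuousOn
    · exact vc.comp (by fun_prop) hcl
  have hder : ∀ s ∈ interior (Icc 0 d), HasDerivWithinAt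
      (fun s : ℝ => 2 * C₀ / (1 - β) * s ^ (1 - β) - v (b + s • e))
      (2 * C₀ / (1 - β) * ((1 - β) * s ^ (1 - β - 1)) - ⟪g (b + s • e), e⟫) (interior (Icc 0 d)) s := by
    intro s hs'
    rw [interior_Icc] at hs'
    have hl : HasDerivAt (fun s : ℝ => b + s • e) e s := by
      have := ((hasDerivAt_id s).smul_const e).const_add b
      simpa using this
    have h1 := (hg _ (hs s ⟨hs'.1, by linarith [hs'.2]⟩).1).hasFDerivAt.comp_hasDerivAt s hl
    rw [InnerProductSpace.toDual_apply_apply] at h1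
    exact (((Real.hasDerivAt_rpow_const (Or.inl hs'.1.ne')).const_mul _).sub h1).hasDerivWithinAt
  have hmono := monotoneOn_of_hasDerivWithinAt_nonneg (convex_Icc 0 d) hc hder (by
    intro s hs'
    rw [interior_Icc] at hs'
    obtain ⟨k1, k2⟩ := hs s ⟨hs'.1, by linarith [hs'.2]⟩
    have k3 := gb _ k1
    rw [k2] at k3
    have k4 := real_inner_le_norm (g (b + s • e)) e
    rw [he, mul_one] at k4
    have k5 : 2 * C₀ / (1 - β) * ((1 - β) * s ^ (1 - β - 1)) = 2 * C₀ * s ^ (-β) := by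
      rw [show 1 - β - 1 = -β by ring]
      have : 1 - β ≠ 0 := by linarith
      field_simp
    have k6 : 1 ≤ s ^ (-β) := Real.one_le_rpow_of_pos_of_le_one_of_nonpos hs'.1 (by linarith [hs'.2]) (by linarith)
    rw [k5]
    nlinarith)
  have := hmono ⟨le_refl _, hd.le⟩ ⟨hd.le, le_refl _⟩ hd.le
  simp only [zero_smul, add_zero, hv0, Real.zero_rpow (show 1 - β ≠ 0 by linarith)] at this
  linarith

lemma Slice.vb {p β C₀ δ₀ M : ℝ} (hβ0 : 0 < β) (hβ1 : β < 1) (hC : 0 ≤ C₀) {v : EuclideanSpace ℝ (Fin n) → ℝ}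
    {g : EuclideanSpace ℝ (Fin n) → EuclideanSpace ℝ (Fin n)} {H} (S : Slice Ω p β C₀ M v g H)
    {b e : EuclideanSpace ℝ (Fin n)} (hb : b ∈ frontier Ω) (he : ‖e‖ = 1)
    (hs : ∀ s ∈ Ioo (0:ℝ) δ₀, b + s • e ∈ Ω ∧ infDist (b + s • e) (frontier Ω) = s)
    {d : ℝ} (hd : 0 < d) (hd1 : d < δ₀) (hd2 : d ≤ 1) : |v (b + d • e)| ≤ 2 * C₀ / (1 - β) * d ^ (1 - β) := by
  rw [abs_le]
  have h1 := ray_bd hβ0 hβ1 hC S.vc (fun x hx => (S.sol x hx).1) S.gb hb (S.v0 b hb) he hs hd hd1 hd2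
  have h2 := ray_bd (v := fun x => -v x) (g := fun x => -g x) hβ0 hβ1 hC S.vc.neg (fun x hx => by
    have := (S.sol x hx).1
    rw [hasGradientAt_iff_hasFDerivAt] at this ⊢
    rw [map_neg]; exact this.neg) (fun x hx => by rw [norm_neg]; exact S.gb x hx) hb (by rw [S.v0 b hb, neg_zero]) he hs hd hd1 hd2
  exact ⟨by linarith, h1⟩
end

section
variable {n : ℕ} {Ω : Set (EuclideanSpace ℝ (Fin n))}

lemma mkLoc (hΩ : IsOpen Ω) {p β C₀ δ₀ M ρg Cg : ℝ} (hp : 2 < p) (hβ0 : 0 < β) (hβ1 : β < 1) (hβp : β * p = 1 + β)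
    (hC₀ : 0 ≤ C₀) (hM0 : 0 ≤ M) (hδ₀ : 0 < δ₀)
    {ν : EuclideanSpace ℝ (Fin n) → EuclideanSpace ℝ (Fin n)}
    (hν : ∀ b ∈ frontier Ω, ‖ν b‖ = 1 ∧
      ∀ s ∈ Ioo (0 : ℝ) δ₀, b + s • ν b ∈ Ω ∧ infDist (b + s • ν b) (frontier Ω) = s)
    (hfoot : ∀ x ∈ Ω, infDist x (frontier Ω) < δ₀ → ∃ b ∈ frontier Ω, x = b + infDist x (frontier Ω) • ν b)
    {a : EuclideanSpace ℝ (Fin n)} (hρg : 0 < ρg) (hCg : 0 < Cg)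
    (hgeo : ∀ b ∈ frontier Ω, dist b a < ρg →
      ∀ x ∈ closure Ω, dist x b < ρg → -(Cg * ‖x - b‖ ^ 2) ≤ ⟪ν b, x - b⟫ ∧
        (x ∈ Ω → infDist x (frontier Ω) ≤ |⟪ν b, x - b⟫| + Cg * ‖x - b‖ ^ 2)) {τ : ℝ} (hτ : 0 < τ) :
    ∃ ρ > 0, ∀ b ∈ frontier Ω, dist b a < ρ → ∀ l : ℝ, 0 < l → l ≤ ρ → ∀ v g H, Slice Ω p β C₀ M v g H →
      Loc p β (4 * C₀ + 2 * C₀ / (1 - β)) τ (ν b) {x | b + l • x ∈ Ω} (fun x => l ^ (β - 1) * v (b + l • x))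
        (fun x => l ^ β • g (b + l • x)) (fun x => l ^ (1 + β) • H (b + l • x)) := by
  set κ := min ρg (min δ₀ 1) / 2 with hκ
  have hκ0 : 0 < κ := by positivity
  have κ1 : κ < ρg := by
    have : min ρg (min δ₀ 1) ≤ ρg := min_le_left _ _
    linarith
  have κ2 : κ < δ₀ := by
    have : min ρg (min δ₀ 1) ≤ δ₀ := (min_le_right _ _).trans (min_le_left _ _)
    linarith
  have κ3 : κ < 1 := by
    have : min ρg (min δ₀ 1) ≤ 1 := (min_le_right _ _).trans (min_le_right _ _)
    linarith
  obtain ⟨ρ, hρ0, r1, r2, r3, r4, r5, r6⟩ : ∃ ρ > 0, ρ ≤ 1 ∧ ρ ≤ ρg ∧ ρ ≤ κ * τ ∧ 5 * ρ ≤ τ * δ₀ ∧ Cg * ρ ≤ τ ∧ M * ρ ≤ τ := by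
    refine ⟨min 1 (min ρg (min (κ * τ) (min (τ * δ₀ / 5) (min (τ / Cg) (τ / (M + 1)))))), by positivity, ?_, ?_, ?_, ?_, ?_, ?_⟩
    · exact min_le_left _ _
    · exact (min_le_right _ _).trans (min_le_left _ _)
    · exact (min_le_right _ _).trans ((min_le_right _ _).trans (min_le_left _ _))
    · have : min 1 (min ρg (min (κ * τ) (min (τ * δ₀ / 5) (min (τ / Cg) (τ / (M + 1)))))) ≤ τ * δ₀ / 5 :=
        (min_le_right _ _).trans ((min_le_right _ _).trans ((min_le_right _ _).trans (min_le_left _ _)))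
      linarith
    · have : min 1 (min ρg (min (κ * τ) (min (τ * δ₀ / 5) (min (τ / Cg) (τ / (M + 1)))))) ≤ τ / Cg :=
        (min_le_right _ _).trans ((min_le_right _ _).trans ((min_le_right _ _).trans ((min_le_right _ _).trans (min_le_left _ _))))
      rw [le_div_iff₀ hCg] at this
      linarith
    · have : min 1 (min ρg (min (κ * τ) (min (τ * δ₀ / 5) (min (τ / Cg) (τ / (M + 1)))))) ≤ τ / (M + 1) :=
        (min_le_right _ _).trans ((min_le_right _ _).trans ((min_le_right _ _).trans ((min_le_right _ _).trans (min_le_right _ _))))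
      refine (mul_le_mul_of_nonneg_left this hM0).trans ?_
      rw [mul_div_assoc', div_le_iff₀ (by positivity)]
      nlinarith
  refine ⟨ρ, hρ0, fun b hb hba l hl hlρ v g H S => ?_⟩
  obtain ⟨hn1, hns⟩ := hν b hb
  have hcont : Continuous (fun x : EuclideanSpace ℝ (Fin n) => b + l • x) := by fun_prop
  have hXn : ∀ x : EuclideanSpace ℝ (Fin n), ‖b + l • x - b‖ = l * ‖x‖ := by
    intro x; rw [add_sub_cancel_left, norm_smul, Real.norm_of_nonneg hl.le]
  have hXi : ∀ x : EuclideanSpace ℝ (Fin n), ⟪ν b, b + l • x - b⟫ = l * ⟪ν b, x⟫ := by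
    intro x; rw [add_sub_cancel_left, inner_smul_right]
  have hXκ : ∀ x : EuclideanSpace ℝ (Fin n), τ * ‖x‖ ≤ 1 → l * ‖x‖ ≤ κ := by
    intro x hx
    calc l * ‖x‖ ≤ κ * τ * ‖x‖ := by gcongr; linarith
      _ = κ * (τ * ‖x‖) := by ring
      _ ≤ κ * 1 := by gcongr
      _ = κ := mul_one _
  have hdl : ∀ x : EuclideanSpace ℝ (Fin n), infDist (b + l • x) (frontier Ω) ≤ l * ‖x‖ := by
    intro x
    have := infDist_le_dist_of_mem (x := b + l • x) hb
    rwa [dist_eq_norm, hXn] at this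
  have hclD : ∀ x ∈ closure {x | b + l • x ∈ Ω}, b + l • x ∈ closure Ω := fun x hx =>
    hcont.closure_preimage_subset Ω hx
  have hfrD : ∀ x ∈ frontier {x | b + l • x ∈ Ω}, b + l • x ∈ frontier Ω := fun x hx =>
    hcont.frontier_preimage_subset Ω hx
  have hl1 : l ≤ 1 := hlρ.trans r1
  refine ⟨hn1, hΩ.preimage hcont, ?_, ?_, ?_, ?_, ?_⟩
  · exact (S.vc.comp hcont.continuousOn hclD).const_mul _ |>.congr fun x hx => rfl
  · intro x hx
    simp only [S.v0 _ (hfrD x hx), mul_zero]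
  · intro x hx
    obtain ⟨s1, s2, s3⟩ := S.sol _ hx
    have hA : HasFDerivAt (fun x : EuclideanSpace ℝ (Fin n) => b + l • x)
        (l • ContinuousLinearMap.id ℝ (EuclideanSpace ℝ (Fin n))) x :=
      ((hasFDerivAt_id x).const_smul l).const_add b
    refine ⟨?_, ?_, ?_⟩
    · rw [hasGradientAt_iff_hasFDerivAt] at s1 ⊢
      have := (s1.comp x hA).const_mul (l ^ (β - 1))
      refine this.congr_fderiv ?_
      ext z
      have hll : l ^ (β - 1) * l = l ^ β := by
        rw [← Real.rpow_add_one hl.ne']; congr 1; ring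
      simp [inner_smul_left, inner_smul_right, ← hll]
      ring
    · have := (s2.comp x hA).const_smul (l ^ β)
      refine this.congr_fderiv ?_
      have hll : l ^ β * l = l ^ (1 + β) := by
        rw [← Real.rpow_add_one hl.ne']; congr 1; ring
      rw [← hll]
      ext1 z
      simp [smul_smul]
    · have h1 : ‖l ^ β • g (b + l • x)‖ ^ p = l ^ (1 + β) * ‖g (b + l • x)‖ ^ p := by
        rw [norm_smul, Real.norm_of_nonneg (by positivity), Real.mul_rpow (by positivity) (by positivity), ← Real.rpow_mul hl.le, hβp]
      rw [tr_smul, h1, ← mul_add, abs_mul, abs_of_pos (by positivity)]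
      have h2 : l ^ (1 + β) ≤ l := by
        conv_rhs => rw [← Real.rpow_one l]
        exact Real.rpow_le_rpow_of_exponent_ge hl hl1 (by linarith)
      calc l ^ (1 + β) * |tr (H (b + l • x)) + ‖g (b + l • x)‖ ^ p| ≤ l * M := by gcongr
        _ ≤ ρ * M := by gcongr
        _ ≤ τ := by linarith
  · intro x hx1 hx2
    have hy0 : 0 < ⟪ν b, x⟫ := lt_of_le_of_lt (by positivity) hx2
    obtain ⟨k1, k2⟩ := infDist_lower hδ₀ hΩ hn1 hb hns (x := b + l • x) (by rw [hXi]; positivity) (by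
      rw [hXi, hXn, div_le_iff₀ hδ₀]
      have : 5 * l ≤ τ * δ₀ := by linarith
      calc 5 * (l * ‖x‖) ^ 2 = (5 * l) * (l * ‖x‖ ^ 2) := by ring
        _ ≤ (τ * δ₀) * (l * ‖x‖ ^ 2) := by gcongr
        _ = (τ * ‖x‖ ^ 2) * (l * δ₀) := by ring
        _ ≤ ⟪ν b, x⟫ * (l * δ₀) := by gcongr
        _ = l * ⟪ν b, x⟫ * δ₀ := by ring)
    refine ⟨k1, ?_⟩
    rw [hXi] at k2
    have k3 := S.gb _ k1
    have hx3 := hXκ x hx1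
    have hx4 := hdl x
    have hly : 0 < l * ⟪ν b, x⟫ / 2 := by positivity
    set d := infDist (b + l • x) (frontier Ω) with hd
    have hdp : 0 < d := by linarith
    have k4 : 1 ≤ d ^ (-β) := Real.one_le_rpow_of_pos_of_le_one_of_nonpos hdp (by linarith) (by linarith)
    have k5 : d ^ (-β) ≤ (l * ⟪ν b, x⟫ / 2) ^ (-β) := Real.rpow_le_rpow_of_nonpos hly k2 (by linarith)
    have k6 : (l * ⟪ν b, x⟫ / 2) ^ (-β) ≤ 2 * (l ^ (-β) * ⟪ν b, x⟫ ^ (-β)) := by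
      rw [Real.div_rpow (by positivity) (by norm_num), Real.mul_rpow hl.le hy0.le, div_eq_mul_inv, ← Real.rpow_neg (by norm_num), neg_neg, mul_comm]
      gcongr
      calc (2:ℝ) ^ β ≤ 2 ^ (1:ℝ) := Real.rpow_le_rpow_of_exponent_le (by norm_num) hβ1.le
        _ = 2 := Real.rpow_one _
    rw [norm_smul, Real.norm_of_nonneg (by positivity)]
    have hll : l ^ β * l ^ (-β) = 1 := by rw [← Real.rpow_add hl, add_neg_cancel, Real.rpow_zero]
    calc l ^ β * ‖g (b + l • x)‖ ≤ l ^ β * (C₀ * (d ^ (-β) + 1)) := by gcongr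
      _ ≤ l ^ β * (C₀ * (2 * d ^ (-β))) := by gcongr; linarith
      _ ≤ l ^ β * (C₀ * (2 * (2 * (l ^ (-β) * ⟪ν b, x⟫ ^ (-β))))) := by gcongr; exact k5.trans k6
      _ = 4 * C₀ * (l ^ β * l ^ (-β)) * ⟪ν b, x⟫ ^ (-β) := by ring
      _ = 4 * C₀ * ⟪ν b, x⟫ ^ (-β) := by rw [hll, mul_one]
      _ ≤ _ := by
        gcongr
        have : 0 ≤ 2 * C₀ / (1 - β) := div_nonneg (by positivity) (by linarith)
        linarith
  · intro x hx hx1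
    have hX := hclD x hx
    have hx3 := hXκ x hx1
    obtain ⟨k1, k2⟩ := hgeo b hb (by linarith) _ hX (by rw [dist_eq_norm, hXn]; linarith)
    rw [hXi, hXn] at k1 k2
    have hCl : Cg * l ≤ τ := le_trans (by gcongr) r5
    have k0 : Cg * (l * ‖x‖) ^ 2 ≤ l * (τ * ‖x‖ ^ 2) := by
      calc Cg * (l * ‖x‖) ^ 2 = l * (Cg * l * ‖x‖ ^ 2) := by ring
        _ ≤ _ := by gcongr
    have hK0 : 0 ≤ 2 * C₀ / (1 - β) := div_nonneg (by positivity) (by linarith)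
    refine ⟨?_, ?_⟩
    · have : l * -(τ * ‖x‖ ^ 2) ≤ l * ⟪ν b, x⟫ := by linarith
      exact le_of_mul_le_mul_left this hl
    · by_cases hXΩ : b + l • x ∈ Ω
      · have k3 := k2 hXΩ
        rw [abs_mul, abs_of_pos hl] at k3
        have hx4 := hdl x
        obtain ⟨b', hb', hbe⟩ := hfoot _ hXΩ (by linarith)
        obtain ⟨hn1', hns'⟩ := hν b' hb'
        have hd0 : 0 < infDist (b + l • x) (frontier Ω) := by
          rw [← isClosed_frontier.notMem_iff_infDist_pos ⟨b, hb⟩, hΩ.frontier_eq]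
          exact fun h => h.2 hXΩ
        have k4 := S.vb hβ0 hβ1 hC₀ hb' hn1' hns' hd0 (by linarith) (by linarith)
        rw [← hbe] at k4
        have k5 : infDist (b + l • x) (frontier Ω) ≤ l * (|⟪ν b, x⟫| + τ * ‖x‖ ^ 2) := by linarith
        rw [abs_mul, abs_of_pos (by positivity)]
        have hll : l ^ (β - 1) * l ^ (1 - β) = 1 := by
          rw [← Real.rpow_add hl, show β - 1 + (1 - β) = 0 by ring, Real.rpow_zero]
        calc l ^ (β - 1) * |v (b + l • x)| ≤ l ^ (β - 1) * (2 * C₀ / (1 - β) * (l * (|⟪ν b, x⟫| + τ * ‖x‖ ^ 2)) ^ (1 - β)) := by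
              gcongr
              exact k4.trans (by gcongr)
          _ = 2 * C₀ / (1 - β) * (l ^ (β - 1) * l ^ (1 - β)) * (|⟪ν b, x⟫| + τ * ‖x‖ ^ 2) ^ (1 - β) := by
              rw [Real.mul_rpow hl.le (by positivity)]; ring
          _ = 2 * C₀ / (1 - β) * (|⟪ν b, x⟫| + τ * ‖x‖ ^ 2) ^ (1 - β) := by rw [hll, mul_one]
          _ ≤ _ := by gcongr; linarith
      · have : b + l • x ∈ frontier Ω := by rw [hΩ.frontier_eq]; exact ⟨hX, hXΩ⟩
        rw [S.v0 _ this, mul_zero, abs_zero]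
        positivity
end

section
variable {n : ℕ} {Ω : Set (EuclideanSpace ℝ (Fin n))}

lemma pick_q (n : ℕ) {p β : ℝ} (hp : 2 < p) (hβ0 : 0 < β) : ∃ η : ℝ, 0 < η ∧ η ≤ 1 ∧ 288 * (n + 1) * η ≤ 1 ∧
    (1 + 2 * η) * (1 / 2) ^ β < 1 ∧ ∃ q0 : ℝ, 0 < q0 ∧ (4 * q0) ^ p ≤ η * q0 / 4 ∧ p * (2 * q0) ^ (p - 1) ≤ 1 := by
  have h2 : 1 < (2:ℝ) ^ β := Real.one_lt_rpow (by norm_num) hβ0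
  have hn0 : (0:ℝ) ≤ n := by positivity
  set η := min (1 / (288 * ((n:ℝ) + 1))) ((2 ^ β - 1) / 4) with hη
  have h0 : 0 < η := lt_min (by positivity) (by linarith)
  have h3 : 288 * ((n:ℝ) + 1) * η ≤ 1 := by
    have : η ≤ 1 / (288 * ((n:ℝ) + 1)) := min_le_left _ _
    rw [le_div_iff₀ (by positivity)] at this
    linarith
  have h4 : η ≤ (2 ^ β - 1) / 4 := min_le_right _ _
  refine ⟨η, h0, by nlinarith, h3, ?_, ?_⟩
  · rw [one_div, Real.inv_rpow (by norm_num), ← div_eq_mul_inv, div_lt_one (by positivity)]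
    linarith
  · obtain ⟨d1, hd1, k1⟩ := small_rpow (k := p - 1) (by linarith) (4 ^ p * 4) h0
    obtain ⟨d2, hd2, k2⟩ := small_rpow (k := p - 1) (by linarith) (p * 2 ^ (p - 1)) one_pos
    have hq : 0 < min d1 d2 := by positivity
    refine ⟨min d1 d2, hq, ?_, ?_⟩
    · have := k1 _ hq.le (min_le_left _ _)
      have e1 : (min d1 d2) ^ p = (min d1 d2) ^ (p - 1) * min d1 d2 := by
        rw [← Real.rpow_add_one hq.ne']; congr 1; ring
      rw [Real.mul_rpow (by norm_num) hq.le, e1]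
      nlinarith
    · have := k2 _ hq.le (min_le_right _ _)
      rw [Real.mul_rpow (by norm_num) hq.le]
      linarith

lemma core (hΩ : IsOpen Ω) {p β C₀ δ₀ M ρg Cg : ℝ} (hp : 2 < p) (hβ0 : 0 < β) (hβ1 : β < 1) (hβp : β * p = 1 + β)
    (hC₀ : 0 ≤ C₀) (hM0 : 0 ≤ M) (hδ₀ : 0 < δ₀)
    {ν : EuclideanSpace ℝ (Fin n) → EuclideanSpace ℝ (Fin n)}
    (hν : ∀ b ∈ frontier Ω, ‖ν b‖ = 1 ∧
      ∀ s ∈ Ioo (0 : ℝ) δ₀, b + s • ν b ∈ Ω ∧ infDist (b + s • ν b) (frontier Ω) = s)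
    (hfoot : ∀ x ∈ Ω, infDist x (frontier Ω) < δ₀ → ∃ b ∈ frontier Ω, x = b + infDist x (frontier Ω) • ν b)
    {a : EuclideanSpace ℝ (Fin n)} (hρg : 0 < ρg) (hCg : 0 < Cg)
    (hgeo : ∀ b ∈ frontier Ω, dist b a < ρg →
      ∀ x ∈ closure Ω, dist x b < ρg → -(Cg * ‖x - b‖ ^ 2) ≤ ⟪ν b, x - b⟫ ∧
        (x ∈ Ω → infDist x (frontier Ω) ≤ |⟪ν b, x - b⟫| + Cg * ‖x - b‖ ^ 2)) :
    ∃ q0 : ℝ, 0 < q0 ∧ ∃ θ : ℝ, θ < 1 ∧ ∃ R : ℝ, 8 ≤ R ∧ ∃ d0 : ℝ, 0 < d0 ∧ ∃ K1 : ℝ, ∃ ρ : ℝ, 0 < ρ ∧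
      ∀ b ∈ frontier Ω, dist b a < ρ → ∀ v g H, Slice Ω p β C₀ M v g H → 
      (∀ l : ℝ, 0 < l → l ≤ ρ → v (b + l • ν b) ≤ q0 * l ^ (1 - β) → ∀ d : ℝ, 0 < d → d ≤ l / 2 →
        v (b + d • ν b) ≤ θ * q0 * d ^ (1 - β)) ∧
      (∀ l : ℝ, 0 < l → l ≤ ρ → v (b + l • ν b) = q0 * l ^ (1 - β) → ∀ d : ℝ, 0 < d → d ≤ l / 4 →
        3 / 4 * q0 * l ^ (-β) ≤ ⟪g (b + d • ν b), ν b⟫) ∧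
      (∀ l : ℝ, 0 < l → l ≤ ρ → q0 * (R * l) ^ (1 - β) ≤ v (b + (R * l) • ν b) →
        1 / R * l ^ (-β) ≤ ⟪g (b + l • ν b), ν b⟫) ∧
      (∀ l : ℝ, 0 < l → l ≤ ρ → v (b + l • ν b) ≤ q0 * l ^ (1 - β) → ∀ d : ℝ, 0 < d → d ≤ l * d0 →
        ‖g (b + d • ν b)‖ ≤ K1 * l ^ (-β)) := by
  obtain ⟨η, hη, hη1, hηn, hθ, q0, hq0, hq, hq2⟩ := pick_q n hp hβ0
  have hC : 0 ≤ 4 * C₀ + 2 * C₀ / (1 - β) := add_nonneg (by positivity) (div_nonneg (by positivity) (by linarith))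
  obtain ⟨t1, ht1, lB⟩ := lemB (n := n) hp hβ0 hβ1 hC hq0 hη hη1 hq
  obtain ⟨t2, ht2, lC⟩ := lemC (n := n) hp hβ0 hβ1 hC hq0 hη hηn hq hq2
  obtain ⟨R, hR, t3, ht3, lD⟩ := lemD (n := n) hp hβ0 hβ1 hC hq0
  obtain ⟨t4, ht4, d0, hd0, K1, lE⟩ := lemE (n := n) hp hβ0 hβ1 hC hq0 hη hη1 hq
  set τ := min t1 (min t2 (min t3 t4)) with hτd
  have hτ : 0 < τ := by positivity
  have m1 : τ ≤ t1 := min_le_left _ _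
  have m2 : τ ≤ t2 := (min_le_right _ _).trans (min_le_left _ _)
  have m3 : τ ≤ t3 := (min_le_right _ _).trans ((min_le_right _ _).trans (min_le_left _ _))
  have m4 : τ ≤ t4 := (min_le_right _ _).trans ((min_le_right _ _).trans (min_le_right _ _))
  obtain ⟨ρ, hρ, hloc⟩ := mkLoc hΩ hp hβ0 hβ1 hβp hC₀ hM0 hδ₀ hν hfoot hρg hCg hgeo hτ
  refine ⟨q0, hq0, _, hθ, R, hR, d0, hd0, K1, ρ, hρ, fun b hb hba v g H S => ?_⟩
  have L := fun l hl hlρ => hloc b hb hba l hl hlρ v g H S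
  have hn1 := (hν b hb).1
  have i1 : ∀ l : ℝ, 0 < l → l ^ (β - 1) * l ^ (1 - β) = 1 := fun l hl => by
    rw [← Real.rpow_add hl, show β - 1 + (1 - β) = 0 by ring, Real.rpow_zero]
  have i2 : ∀ l : ℝ, 0 < l → l ^ (-β) * l ^ β = 1 := fun l hl => by
    rw [← Real.rpow_add hl, neg_add_cancel, Real.rpow_zero]
  have le1 : ∀ l : ℝ, 0 < l → v (b + l • ν b) ≤ q0 * l ^ (1 - β) → l ^ (β - 1) * v (b + l • ν b) ≤ q0 := by
    intro l hl h
    calc l ^ (β - 1) * v (b + l • ν b) ≤ l ^ (β - 1) * (q0 * l ^ (1 - β)) := by gcongr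
      _ = q0 * (l ^ (β - 1) * l ^ (1 - β)) := by ring
      _ = q0 := by rw [i1 l hl, mul_one]
  refine ⟨?_, ?_, ?_, ?_⟩
  · intro l hl hlρ h d hd hdl
    have := lB τ hτ m1 _ _ _ _ _ (L l hl hlρ) (le1 l hl h) (d / l) (by positivity) (by
      rw [div_le_iff₀ hl]; linarith)
    rw [smul_smul, mul_div_cancel₀ _ hl.ne', Real.div_rpow hd.le hl.le] at this
    have h2 := mul_le_mul_of_nonneg_right this (show 0 ≤ l ^ (1 - β) by positivity)
    have e1 : l ^ (β - 1) * v (b + d • ν b) * l ^ (1 - β) = v (b + d • ν b) := by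
      rw [mul_right_comm, i1 l hl, one_mul]
    rw [e1] at h2
    refine h2.trans (le_of_eq ?_)
    have : l ^ (1 - β) ≠ 0 := by positivity
    field_simp
  · intro l hl hlρ h d hd hdl
    have := lC τ hτ m2 _ _ _ _ _ (L l hl hlρ) (by
      show l ^ (β - 1) * v (b + l • ν b) = q0
      rw [h, mul_left_comm, i1 l hl, mul_one]) (d / l) (by positivity) (by
      rw [div_le_iff₀ hl]; linarith)
    rw [smul_smul, mul_div_cancel₀ _ hl.ne'] at this
    have h2 := abs_real_inner_le_norm (l ^ β • g (b + d • ν b) - q0 • ν b) (ν b)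
    rw [hn1, mul_one, inner_sub_left, real_inner_smul_left, real_inner_smul_left, real_inner_self_eq_norm_sq, hn1, abs_le] at h2
    have h3 : 3 / 4 * q0 ≤ l ^ β * ⟪g (b + d • ν b), ν b⟫ := by linarith [h2.1]
    have h4 := mul_le_mul_of_nonneg_left h3 (show 0 ≤ l ^ (-β) by positivity)
    rw [← mul_assoc (l ^ (-β)) (l ^ β), i2 l hl] at h4
    linarith
  · intro l hl hlρ h
    have := lD τ hτ m3 _ _ _ _ _ (L l hl hlρ) (by
      show q0 * R ^ (1 - β) ≤ l ^ (β - 1) * v (b + l • R • ν b)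
      rw [smul_smul, mul_comm l R]
      calc q0 * R ^ (1 - β) = l ^ (β - 1) * l ^ (1 - β) * (q0 * R ^ (1 - β)) := by rw [i1 l hl, one_mul]
        _ = l ^ (β - 1) * (q0 * (R * l) ^ (1 - β)) := by
          rw [Real.mul_rpow (by linarith) hl.le]; ring
        _ ≤ _ := by gcongr)
    rw [real_inner_smul_left] at this
    have h4 := mul_le_mul_of_nonneg_left this (show 0 ≤ l ^ (-β) by positivity)
    rw [← mul_assoc (l ^ (-β)) (l ^ β), i2 l hl] at h4
    linarith
  · intro l hl hlρ h d hd hdl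
    have := lE τ hτ m4 _ _ _ _ _ (L l hl hlρ) (le1 l hl h) (d / l) (by positivity) (by
      rw [div_le_iff₀ hl]; linarith)
    rw [smul_smul, mul_div_cancel₀ _ hl.ne', norm_smul, Real.norm_of_nonneg (by positivity)] at this
    have h4 := mul_le_mul_of_nonneg_left this (show 0 ≤ l ^ (-β) by positivity)
    rw [← mul_assoc (l ^ (-β)) (l ^ β), i2 l hl] at h4
    linarith
end

set_option maxHeartbeats 2000000

theorem stmt9 {n : ℕ} (hn : 1 ≤ n)
    -- the exponents and constants
    (p β cp dp : ℝ) (hp : 2 < p) (hβ : β = 1 / (p - 1))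
    (hcp : cp = β ^ β / (1 - β)) (hdp : dp = β ^ β)
    -- the bounded domain Ω with C² boundary
    (Ω : Set (EuclideanSpace ℝ (Fin n))) (hΩo : IsOpen Ω) (hΩb : Bornology.IsBounded Ω) (hΩc2 : IsC2Boundary Ω)
    -- the distance to the boundary
    (δ : EuclideanSpace ℝ (Fin n) → ℝ) (hδ : ∀ x, δ x = infDist x (frontier Ω))
    -- δ₀ and the boundary neighborhood Ωδ = {x ∈ Ω : δ(x) < δ₀}
    (δ₀ : ℝ) (hδ₀ : 0 < δ₀)
    (Ωδ : Set (EuclideanSpace ℝ (Fin n))) (hΩδ : Ωδ = {x ∈ Ω | δ x < δ₀})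
    -- δ is C² on Ωδ
    (hδC2 : ContDiffOn ℝ 2 δ Ωδ)
    -- every x ∈ Ωδ has a unique nearest boundary point P x
    (P : EuclideanSpace ℝ (Fin n) → EuclideanSpace ℝ (Fin n))
    (hP : ∀ x ∈ Ωδ, P x ∈ frontier Ω ∧ dist x (P x) = δ x ∧
      ∀ b ∈ frontier Ω, dist x b = δ x → b = P x)
    -- interior sphere condition of radius δ₀ at every boundary point
    (hsph : ∀ b ∈ frontier Ω, ∃ y, ball y δ₀ ⊆ Ω ∧ dist y b = δ₀)
    -- the inward unit normal field ν
    (ν : EuclideanSpace ℝ (Fin n) → EuclideanSpace ℝ (Fin n))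
    (hν1 : ∀ b ∈ frontier Ω, ‖ν b‖ = 1 ∧
      ∀ s ∈ Ioo (0 : ℝ) δ₀, b + s • ν b ∈ Ω ∧ δ (b + s • ν b) = s)
    (hν2 : ∀ x ∈ Ωδ, ν x = ν (P x) ∧ HasGradientAt δ (ν x) x)
    -- the solution u on [0,T], with spatial gradient G, spatial Hessian H and
    -- time derivative u'
    (T : ℝ) (hT : 0 < T)
    (u : EuclideanSpace ℝ (Fin n) → ℝ → ℝ)
    (G : EuclideanSpace ℝ (Fin n) → ℝ → EuclideanSpace ℝ (Fin n))
    (H : EuclideanSpace ℝ (Fin n) → ℝ → (EuclideanSpace ℝ (Fin n) →L[ℝ] EuclideanSpace ℝ (Fin n)))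
    (u' : EuclideanSpace ℝ (Fin n) → ℝ → ℝ)
    -- u is continuous on Ω̄ × [0,T] and vanishes on ∂Ω × [0,T]
    (hu_cont : ContinuousOn (fun q : EuclideanSpace ℝ (Fin n) × ℝ => u q.1 q.2) (closure Ω ×ˢ Icc 0 T))
    (hu_bd : ∀ b ∈ frontier Ω, ∀ t ∈ Icc (0 : ℝ) T, u b t = 0)
    -- u is continuously differentiable in x on Ω̄ × [0,T), with spatial gradient G
    (hG : ∀ t ∈ Ico (0 : ℝ) T, ∀ x ∈ closure Ω,
      HasGradientWithinAt (fun y => u y t) (G x t) (closure Ω) x)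
    (hG_cont : ContinuousOn (fun q : EuclideanSpace ℝ (Fin n) × ℝ => G q.1 q.2) (closure Ω ×ˢ Ico 0 T))
    -- on Ω × (0,T], u has spatial gradient G, spatial Hessian H and time derivative u',
    -- all continuous there
    (hG2 : ∀ t ∈ Ioc (0 : ℝ) T, ∀ x ∈ Ω, HasGradientAt (fun y => u y t) (G x t) x)
    (hH : ∀ t ∈ Ioc (0 : ℝ) T, ∀ x ∈ Ω, HasFDerivAt (fun y => G y t) (H x t) x)
    (hu' : ∀ t ∈ Ioc (0 : ℝ) T, ∀ x ∈ Ω, HasDerivAt (fun s => u x s) (u' x t) t)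
    (hreg : ContinuousOn (fun q : EuclideanSpace ℝ (Fin n) × ℝ =>
      (u q.1 q.2, G q.1 q.2, H q.1 q.2, u' q.1 q.2)) (Ω ×ˢ Ioc 0 T))
    -- the PDE uₜ - Δu = |∇u|^p on Ω × (0,T]
    (hPDE : ∀ t ∈ Ioc (0 : ℝ) T, ∀ x ∈ Ω,
      u' x t - ∑ i : Fin n, ⟪H x t (EuclideanSpace.single i (1 : ℝ)),
        EuclideanSpace.single i (1 : ℝ)⟫ = ‖G x t‖ ^ p)
    -- a priori bounds: |uₜ| ≤ M on Ω × [T/2,T] and the Bernstein estimate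
    (M : ℝ) (hM : ∀ x ∈ Ω, ∀ t ∈ Icc (T / 2) T, |u' x t| ≤ M)
    (C₀ : ℝ) (hC₀ : ∀ x ∈ Ω, ∀ t ∈ Ico (0 : ℝ) T, ‖G x t‖ ≤ C₀ * ((δ x) ^ (-β) + 1))
    -- a ∈ ∂Ω is a gradient blow-up point:
    -- limsup of |∇u(x,t)| as t → T⁻, x → a equals ∞
    (a : EuclideanSpace ℝ (Fin n)) (ha : a ∈ frontier Ω)
    (hGBU : ∀ K : ℝ, ∀ η > 0, ∃ x ∈ Ω, ∃ t ∈ Ioo (T - η) T,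
      0 < t ∧ dist x a < η ∧ K ≤ ‖G x t‖)
    :
    ∀ K > 0, ∃ η > 0, ∀ x ∈ Ωδ, dist x a < η →
      ∀ t ∈ Ioo (T - η) T, K ≤ ⟪G x t, ν x⟫ := by
  have hp1 : 0 < p - 1 := by linarith
  have hβ0 : 0 < β := by rw [hβ]; positivity
  have hβ1 : β < 1 := by rw [hβ, div_lt_one hp1]; linarith
  have hβp : β * p = 1 + β := by rw [hβ]; field_simp; ring
  obtain rfl : δ = fun x => infDist x (frontier Ω) := funext hδ
  have hν : ∀ b ∈ frontier Ω, ‖ν b‖ = 1 ∧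
      ∀ s ∈ Ioo (0 : ℝ) δ₀, b + s • ν b ∈ Ω ∧ infDist (b + s • ν b) (frontier Ω) = s := hν1
  have hfootP : ∀ x ∈ Ωδ, x = P x + infDist x (frontier Ω) • ν (P x) := by
    intro x hx
    obtain ⟨h1, h2, h3⟩ := hP x hx
    obtain ⟨h4, h5⟩ := hν2 x hx
    rw [h4] at h5
    exact foot h5 h1 h2 (hν _ h1).1
  have hmem : ∀ x ∈ Ω, infDist x (frontier Ω) < δ₀ → x ∈ Ωδ := fun x hx hd => by
    rw [hΩδ]; exact ⟨hx, hd⟩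
  have hfoot : ∀ x ∈ Ω, infDist x (frontier Ω) < δ₀ → ∃ b ∈ frontier Ω, x = b + infDist x (frontier Ω) • ν b :=
    fun x hx hd => ⟨P x, (hP x (hmem x hx hd)).1, hfootP x (hmem x hx hd)⟩
  obtain ⟨f, U, hU, hf, hf0, hf1, hf2⟩ := hΩc2 a ha
  obtain ⟨ρg, hρg, Cg, hCg, hgeo⟩ := geo hΩo hδ₀ hν ha hU hf hf0 hf1 hf2
  obtain ⟨q0, hq0, θ, hθ, R, hR, d0, hd0, K1, ρ, hρ, hcore⟩ := core (M := |M|) (C₀ := |C₀|) hΩo hp hβ0 hβ1 hβp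
    (abs_nonneg _) (abs_nonneg _) hδ₀ hν hfoot hρg hCg (fun b hb hba => (hgeo b hb hba).2)
  have hslice : ∀ t, T / 2 < t → t < T → Slice Ω p β |C₀| |M| (fun x => u x t) (fun x => G x t) (fun x => H x t) := by
    intro t ht1 ht2
    have ht0 : t ∈ Ioc (0:ℝ) T := ⟨by linarith, ht2.le⟩
    refine ⟨?_, ?_, ?_, ?_⟩
    · exact hu_cont.comp (f := fun x => (x, t)) (by fun_prop) fun x hx => ⟨hx, ht0.1.le, ht2.le⟩
    · exact fun x hx => hu_bd x hx t ⟨ht0.1.le, ht2.le⟩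
    · refine fun x hx => ⟨hG2 t ht0 x hx, hH t ht0 x hx, ?_⟩
      have e1 : tr (H x t) + ‖G x t‖ ^ p = u' x t := by
        rw [← hPDE t ht0 x hx, tr]; ring
      rw [e1]
      exact (hM x hx t ⟨ht1.le, ht2.le⟩).trans (le_abs_self M)
    · intro x hx
      refine (hC₀ x hx t ⟨ht0.1.le, ht2⟩).trans ?_
      have : 0 ≤ infDist x (frontier Ω) := infDist_nonneg
      have h3 : 0 ≤ infDist x (frontier Ω) ^ (-β) + 1 := by positivity
      exact mul_le_mul_of_nonneg_right (le_abs_self C₀) h3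
  -- continuity of u along the moving normal rays
  have hcontn : ∀ l ∈ Ioo (0:ℝ) δ₀, ∀ s ∈ nhds (u (a + l • ν a) T), ∃ η > 0, ∀ b ∈ frontier Ω, dist b a < η →
      ∀ t, 0 ≤ t → T - η < t → t < T → u (b + l • ν b) t ∈ s := by
    intro l hl s hs
    have h1 := hu_cont (a + l • ν a, T) ⟨subset_closure ((hν a ha).2 l hl).1, hT.le, le_refl _⟩
    have h2 : ∀ᶠ q in nhdsWithin (a + l • ν a, T) (closure Ω ×ˢ Icc 0 T), u q.1 q.2 ∈ s := h1.eventually hs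
    rw [eventually_nhdsWithin_iff, Metric.eventually_nhds_iff_ball] at h2
    obtain ⟨ε, hε, h3⟩ := h2
    have hl0 := hl.1
    refine ⟨min ρg (min ε (ε / (1 + l * Cg))), by positivity, fun b hb hba t ht0 ht1 ht2 => ?_⟩
    have a1 : dist b a < ρg := hba.trans_le (min_le_left _ _)
    have a2 : dist b a < ε / (1 + l * Cg) := hba.trans_le ((min_le_right _ _).trans (min_le_right _ _))
    have a3 : min ρg (min ε (ε / (1 + l * Cg))) ≤ ε := (min_le_right _ _).trans (min_le_left _ _)
    refine h3 (b + l • ν b, t) ?_ ⟨subset_closure ((hν b hb).2 l hl).1, ht0, ht2.le⟩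
    rw [mem_ball, Prod.dist_eq]
    refine max_lt ?_ ?_
    · have e1 : (b + l • ν b) - (a + l • ν a) = (b - a) + l • (ν b - ν a) := by module
      show dist (b + l • ν b) (a + l • ν a) < ε
      rw [dist_eq_norm, e1]
      rw [lt_div_iff₀ (by positivity), dist_eq_norm] at a2
      have e2 := (hgeo b hb a1).1
      calc ‖(b - a) + l • (ν b - ν a)‖ ≤ ‖b - a‖ + l * ‖ν b - ν a‖ := by
            refine (norm_add_le _ _).trans ?_
            rw [norm_smul, Real.norm_of_nonneg hl0.le]
        _ ≤ ‖b - a‖ + l * (Cg * ‖b - a‖) := by gcongr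
        _ = ‖b - a‖ * (1 + l * Cg) := by ring
        _ < ε := a2
    · show dist t T < ε
      rw [Real.dist_eq, abs_lt]
      constructor <;> linarith
  have hPa : ∀ x ∈ Ωδ, dist (P x) a ≤ 2 * dist x a ∧ infDist x (frontier Ω) ≤ dist x a := by
    intro x hx
    obtain ⟨h1, h2, h3⟩ := hP x hx
    have h4 : infDist x (frontier Ω) ≤ dist x a := infDist_le_dist_of_mem ha
    have h2 : dist x (P x) = infDist x (frontier Ω) := h2
    refine ⟨?_, h4⟩
    have := dist_triangle (P x) x a
    rw [dist_comm (P x) x] at this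
    linarith
  have hpos : ∀ x ∈ Ω, 0 < infDist x (frontier Ω) := by
    intro x hx
    rw [← isClosed_frontier.notMem_iff_infDist_pos ⟨a, ha⟩, hΩo.frontier_eq]
    exact fun h => h.2 hx
  -- lower bound at the blow-up time
  have hlow : ∀ l, 0 < l → l ≤ ρ → l < δ₀ → q0 * l ^ (1 - β) ≤ u (a + l • ν a) T := by
    intro l hl hlρ hlδ
    by_contra hcon
    push Not at hcon
    obtain ⟨η, hη, h1⟩ := hcontn l ⟨hl, hlδ⟩ _ (gt_mem_nhds hcon |> fun h => h)
    have hld : 0 < l * d0 := by positivity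
    obtain ⟨x, hx, t, ht, ht0, hxa, hK⟩ := hGBU (K1 * l ^ (-β) + 1)
      (min (η / 2) (min (T / 2) (min δ₀ (min (l * d0) (ρ / 2))))) (by positivity)
    have b1 := min_le_left (η / 2) (min (T / 2) (min δ₀ (min (l * d0) (ρ / 2))))
    have b2 := min_le_right (η / 2) (min (T / 2) (min δ₀ (min (l * d0) (ρ / 2))))
    have b3 := min_le_left (T / 2) (min δ₀ (min (l * d0) (ρ / 2)))
    have b4 := min_le_right (T / 2) (min δ₀ (min (l * d0) (ρ / 2)))
    have b5 := min_le_left δ₀ (min (l * d0) (ρ / 2))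
    have b6 := min_le_right δ₀ (min (l * d0) (ρ / 2))
    have b7 := min_le_left (l * d0) (ρ / 2)
    have b8 := min_le_right (l * d0) (ρ / 2)
    have hdx : infDist x (frontier Ω) ≤ dist x a := infDist_le_dist_of_mem ha
    have hxδ : x ∈ Ωδ := hmem x hx (by linarith)
    obtain ⟨c1, c2⟩ := hPa x hxδ
    have hPf := (hP x hxδ).1
    have hul := h1 (P x) hPf (by linarith) t ht0.le (by linarith [ht.1]) ht.2
    have := (hcore (P x) hPf (by linarith) _ _ _ (hslice t (by linarith [ht.1]) ht.2)).2.2.2 l hl hlρ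
      (le_of_lt hul) (infDist x (frontier Ω)) (hpos x hx) (by linarith)
    rw [← hfootP x hxδ] at this
    linarith
  intro K hK
  obtain ⟨l1, hl1, k1⟩ := small_rpow (k := β) hβ0 K (show 0 < 3 / 4 * q0 by positivity)
  obtain ⟨l2, hl2, k2⟩ := small_rpow (k := β) hβ0 (K * R) one_pos
  obtain ⟨L, hL, L1, L2, L3⟩ : ∃ L : ℝ, 0 < L ∧ L ≤ ρ ∧ L < δ₀ ∧ L ≤ l1 := by
    refine ⟨min ρ (min (δ₀ / 2) l1), by positivity, min_le_left _ _, ?_, (min_le_right _ _).trans (min_le_right _ _)⟩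
    have : min ρ (min (δ₀ / 2) l1) ≤ δ₀ / 2 := (min_le_right _ _).trans (min_le_left _ _)
    linarith
  have hLh := hlow (L / 2) (by positivity) (by linarith) (by linarith)
  have hLp : 0 < (L / 2) ^ (1 - β) := by positivity
  have hlt : θ * q0 * (L / 2) ^ (1 - β) < u (a + (L / 2) • ν a) T := by
    refine lt_of_lt_of_le ?_ hLh
    gcongr
    nlinarith
  obtain ⟨η, hη, h1⟩ := hcontn (L / 2) ⟨by positivity, by linarith⟩ _ (lt_mem_nhds hlt)
  have hR0 : 0 < R := by linarith
  refine ⟨min (η / 2) (min (T / 2) (min (L / 4) (min l2 (min (ρ / R) (ρ / 2))))), by positivity,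
    fun x hx hxa t ht => ?_⟩
  have b1 := min_le_left (η / 2) (min (T / 2) (min (L / 4) (min l2 (min (ρ / R) (ρ / 2)))))
  have b2 := min_le_right (η / 2) (min (T / 2) (min (L / 4) (min l2 (min (ρ / R) (ρ / 2)))))
  have b3 := min_le_left (T / 2) (min (L / 4) (min l2 (min (ρ / R) (ρ / 2))))
  have b4 := min_le_right (T / 2) (min (L / 4) (min l2 (min (ρ / R) (ρ / 2))))
  have b5 := min_le_left (L / 4) (min l2 (min (ρ / R) (ρ / 2)))
  have b6 := min_le_right (L / 4) (min l2 (min (ρ / R) (ρ / 2)))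
  have b7 := min_le_left l2 (min (ρ / R) (ρ / 2))
  have b8 := min_le_right l2 (min (ρ / R) (ρ / 2))
  have b9 := min_le_left (ρ / R) (ρ / 2)
  have b10 := min_le_right (ρ / R) (ρ / 2)
  have hxΩ : x ∈ Ω := by rw [hΩδ] at hx; exact hx.1
  obtain ⟨c1, c2⟩ := hPa x hx
  have hPf := (hP x hx).1
  have hft := hfootP x hx
  have hd := hpos x hxΩ
  have S := hslice t (by linarith [ht.1]) ht.2
  obtain ⟨cB, cC, cD, cE⟩ := hcore (P x) hPf (by linarith) _ _ _ S
  have hul := h1 (P x) hPf (by linarith) t (by linarith [ht.1]) (by linarith [ht.1]) ht.2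
  obtain ⟨hn1, hns⟩ := hν (P x) hPf
  rw [(hν2 x hx).1]
  have hx' : ⟪G x t, ν (P x)⟫ = ⟪G (P x + infDist x (frontier Ω) • ν (P x)) t, ν (P x)⟫ := by rw [← hft]
  rw [hx']
  generalize infDist x (frontier Ω) = d at *
  generalize P x = b at *
  have hdL : d < L / 4 := by linarith
  have hdl2 : d ≤ l2 := by linarith
  have hRd : R * d ≤ ρ := by
    have : d ≤ ρ / R := by linarith
    rw [le_div_iff₀ hR0] at this
    linarith
  have hRd0 : 0 < R * d := by positivity
  have hinv : ∀ l : ℝ, 0 < l → l ^ β * l ^ (-β) = 1 := fun l hl => by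
    rw [← Real.rpow_add hl, add_neg_cancel, Real.rpow_zero]
  by_cases hcase : q0 * (4 * d) ^ (1 - β) ≤ u (b + (4 * d) • ν b) t
  · have hbig : q0 * (R * d) ^ (1 - β) ≤ u (b + (R * d) • ν b) t := by
      by_contra hcon
      push Not at hcon
      have := cB (R * d) hRd0 hRd hcon.le (4 * d) (by positivity) (by nlinarith)
      have h4 : 0 < q0 * (4 * d) ^ (1 - β) := by positivity
      nlinarith
    have h5 := cD d hd (by linarith) hbig
    refine le_trans ?_ h5
    have h6 := k2 d hd.le hdl2
    have h7 : 0 < d ^ (-β) := by positivity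
    have h8 := mul_le_mul_of_nonneg_right h6 h7.le
    rw [mul_assoc, hinv d hd] at h8
    rw [one_div, inv_mul_eq_div, le_div_iff₀ hR0]
    linarith
  · push Not at hcase
    have hLbig : q0 * L ^ (1 - β) ≤ u (b + L • ν b) t := by
      by_contra hcon
      push Not at hcon
      have := cB L hL L1 hcon.le (L / 2) (by positivity) le_rfl
      exact absurd this (not_le.2 hul)
    have hcφ : ContinuousOn (fun l : ℝ => u (b + l • ν b) t - q0 * l ^ (1 - β)) (Icc (4 * d) L) := by
      refine ContinuousOn.sub ?_ ?_
      · exact S.vc.comp (f := fun l : ℝ => b + l • ν b) (by fun_prop) fun l hl =>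
          subset_closure (hns l ⟨by linarith [hl.1], by linarith [hl.2]⟩).1
      · exact (continuous_const.mul (Real.continuous_rpow_const (by linarith))).continuousOn
    obtain ⟨l, hl, hl0⟩ := intermediate_value_Icc (by linarith) hcφ
      (show (0:ℝ) ∈ Icc _ _ from ⟨by linarith, by linarith⟩)
    have hlpos : 0 < l := by linarith [hl.1]
    have h5 := cC l hlpos (by linarith [hl.2]) (by simp only at hl0; linarith) d hd (by linarith [hl.1])
    refine le_trans ?_ h5
    have h6 := k1 l hlpos.le (by linarith [hl.2])
    have h7 : 0 < l ^ (-β) := by positivity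
    have h8 := mul_le_mul_of_nonneg_right h6 h7.le
    rw [mul_assoc, hinv l hlpos] at h8
    linarith
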